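/- arXiv:2204.04759 — 4 statements merged into one kernel-verified Lean document; each statement's English description precedes it below -/
import Mathlib

section
/- Let w = x_{k_r}^{ε_r}⋯x_{k_1}^{ε_1} = Ω^d be a word in F_k in canonical reduced form with k_1 ≠ k_r, where Ω is not a proper power and d ≥ 1. For each n, let σ_{1,n}, …, σ_{k,n} be independent random permutations of {1,…,n}, each with conjugation-invariant distribution, and assume that for every j ∈ {1,…,k}, every p ≥ 1 and all c_1,…,c_p ∈ ℕ*, limsup_{n→∞} E(∏_{i=1}^p #_{c_i}(σ_{j,n})) < ∞. Let ρ_{1,n}, …, ρ_{k,n} be independent uniformly distributed permutations of {1,…,n}. Then for every d′ ≥ 1 and every monomial P in d′ variables, lim_{n→∞} E(P(#_1(w(σ_{1,n},…,σ_{k,n})), …, #_{d′}(w(σ_{1,n},…,σ_{k,n})))) exists and equals lim_{n→∞} E(P(#_1(w(ρ_{1,n},…,ρ_{k,n})), …, #_{d′}(w(ρ_{1,n},…,ρ_{k,n})))); consequently the random vector (#_1(w(σ_{1,n},…,σ_{k,n})), …, #_{d′}(w(σ_{1,n},…,σ_{k,n})))) converges in distribution to the same limit law as in the uniform case, a law depending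 only on d and d′. -/
/-!
A cycle of length `m` of the permutation `Ω(σ)`, with a chosen point on it, is a closed walk
reading `Ω^m` in the Schreier graph of `σ`, and points on pairwise distinct cycles correspond to
families of such walks which are injective on the base points (`card_walks_eq`,
`card_transversal`). The joint factorial moments of the cycle counts of `Ω(σ)` are therefore
expected numbers of such families of walks, divided by `∏ m ^ (e m)`.

By independence, the probability that `σ` contains a given walk is a product over the generators
(`sum_isWalk`). Each factor is the probability that a fixed injective map is a homomorphism from a
coloured graph to `σ_j`; by conjugation invariance it is the expected number of injective
homomorphisms divided by a falling factorial (`sum_isHom_mul_descFactorial`). A homomorphism is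
determined by the images of the vertices without incoming edge and of those on directed cycles, and
the latter are sent to short cycles of `σ_j`, of which there are boundedly many on average. So
every vertex with an incoming edge costs a factor of order `1 / n` (`Adm.isHom_le`), with constant
exactly `1` when the graph has no directed cycle (`Adm.tendsto_embedding`).

The graph traced by an injective family of walks has as many edges as vertices and no directed
cycle of a single colour, because at least two letters occur in `Ω`; these families contribute `1`
in the limit (`GoodWord.tendsto_injective`). The graph traced by a non-injective family has more
edges than vertices: otherwise all its degrees are two, and a coincidence between two positions
would propagate along the walks, which is excluded because `Ω` is cyclically reduced, not a proper
power, and not a cyclic rotation of its inverse (`GoodWord.injective_of_degree_two`,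
`GoodWord.card_lt_edges`). These families contribute `O(1 / n)` (`GoodWord.tendsto_noninjective`).

Hence for all admissible laws, the uniform one included (`adm_uniform`), the joint factorial
moments of the cycle counts of `Ω(σ)` tend to those of independent Poisson variables of parameters
`1 / m` (`tendsto_factorial_moments`). Inclusion-exclusion turns this into convergence in law
(`tendsto_poisson_multi`). Finally `Ω(σ) ^ d` has cycle counts which are fixed linear combinations
of those of `Ω(σ)` (`cycCount_pow`), so its moments and its law converge to universal limits
(`univLim_moment`, `univLim_event`).
-/

open Filter

noncomputable section

/-- Length of the cycle of `σ` containing the point `x`. -/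
def cycLen {n : ℕ} (σ : Equiv.Perm (Fin n)) (x : Fin n) : ℕ :=
  Function.minimalPeriod σ x

/-- `#_ℓ(σ)`: the number of cycles of length `ℓ` of `σ`
(fixed points counting as cycles of length 1). -/
def cycCount {n : ℕ} (σ : Equiv.Perm (Fin n)) (ℓ : ℕ) : ℕ :=
  (Finset.univ.filter fun x => cycLen σ x = ℓ).card / ℓ

/-- Probability of a set under a discrete distribution. -/
def prob {α : Type*} [Fintype α] (p : α → ℝ) (S : Set α) : ℝ :=
  ∑ x, S.indicator p x

/-! ### Homomorphisms from graphs into permutations -/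

section Counting
open Finset Equiv
open scoped Classical

/-- `h` maps every edge `a → b` of `E` to an edge `h a → h b` of the functional graph of `σ`. -/
def IsHom {V : Type*} {n : ℕ} (E : V → V → Prop) (σ : Perm (Fin n)) (h : V → Fin n) : Prop :=
  ∀ a b, E a b → σ (h a) = h b

/-- The number of points lying on cycles of `σ` of length at most `M`. -/
def shortPts {n : ℕ} (σ : Perm (Fin n)) (M : ℕ) : ℕ :=
  Fintype.card {x : Fin n // cycLen σ x ≤ M}

/-- Averaging over conjugates: for a conjugation-invariant weight, the probability that a given
injective map is a homomorphism is the expected proportion of injective homomorphisms. -/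
lemma sum_isHom_mul_descFactorial {n : ℕ} (q : Perm (Fin n) → ℝ)
    (hq : ∀ τ σ, q (τ⁻¹ * σ * τ) = q σ) {V : Type*} [Fintype V] (E : V → V → Prop)
    (h₀ : V ↪ Fin n) :
    (∑ σ, if IsHom E σ h₀ then q σ else 0) * (n.descFactorial (Fintype.card V) : ℝ) =
      ∑ σ, q σ * (Fintype.card {h : V ↪ Fin n // IsHom E σ h} : ℝ) := by
  have key : ∀ h : V ↪ Fin n, (∑ σ, if IsHom E σ h then q σ else 0) =
      ∑ σ, if IsHom E σ h₀ then q σ else 0 := by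
    intro h
    obtain ⟨τ, hτ⟩ := Perm.exists_extending_pair h₀ h h₀.injective h.injective
    refine Fintype.sum_equiv (MulAut.conj τ⁻¹).toEquiv _ _ fun σ => ?_
    have h1 : (MulAut.conj τ⁻¹).toEquiv σ = τ⁻¹ * σ * τ := by simp
    rw [h1, hq]
    have h2 : IsHom E σ h ↔ IsHom E (τ⁻¹ * σ * τ) h₀ := by
      refine forall₂_congr fun a b => imp_congr_right fun _ => ?_
      rw [Perm.mul_apply, Perm.mul_apply, Perm.inv_eq_iff_eq, hτ, hτ]
    simp only [h2]
  have h3 : ∀ σ, q σ * (Fintype.card {h : V ↪ Fin n // IsHom E σ h} : ℝ) =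
      ∑ h : V ↪ Fin n, if IsHom E σ h then q σ else 0 := by
    intro σ
    rw [Fintype.card_subtype, ← sum_filter, sum_const, nsmul_eq_mul, mul_comm]
  simp_rw [h3]
  rw [sum_comm, sum_congr rfl fun h _ => key h, sum_const, card_univ,
    Fintype.card_embedding_eq, nsmul_eq_mul, mul_comm, Fintype.card_fin]

/-- `Reach E s m a`: the vertex `s` has no incoming edge, and `a` is the end of a path of `m`
edges issued from `s`. -/
inductive Reach {V : Type*} (E : V → V → Prop) : V → ℕ → V → Prop
  | start {s : V} : (∀ a, ¬ E a s) → Reach E s 0 s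
  | step {s a b : V} {m : ℕ} : Reach E s m a → E a b → Reach E s (m + 1) b

lemma Reach.start_spec {V : Type*} {E : V → V → Prop} {s a : V} {m : ℕ} (h : Reach E s m a) :
    ∀ a, ¬ E a s := by
  induction h with
  | start h => exact h
  | step _ _ ih => exact ih

lemma Reach.apply_eq {V : Type*} {E : V → V → Prop} {s a : V} {m : ℕ} (hr : Reach E s m a)
    {n : ℕ} {σ : Perm (Fin n)} {h : V → Fin n} (hh : IsHom E σ h) : h a = (σ ^ m) (h s) := by
  induction hr with
  | start _ => simp
  | step _ e ih => rw [pow_succ', Perm.mul_apply, ← ih, hh _ _ e]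

lemma cycLen_le_of_pow {n : ℕ} {σ : Perm (Fin n)} {x : Fin n} {c : ℕ} (hc : 0 < c)
    (h : (σ ^ c) x = x) : cycLen σ x ≤ c := by
  refine Function.IsPeriodicPt.minimalPeriod_le hc ?_
  rw [Function.IsPeriodicPt, Function.IsFixedPt, Perm.iterate_eq_pow, h]

/-- A vertex that is not reachable from a source lies downstream of a directed cycle, hence is
mapped by a homomorphism to a short cycle of `σ`. -/
lemma cycLen_le_of_not_reach {V : Type*} [Fintype V] {E : V → V → Prop} {a : V}
    (ha : ¬ ∃ s m, Reach E s m a) {n : ℕ} {σ : Perm (Fin n)} {h : V → Fin n}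
    (hh : IsHom E σ h) : cycLen σ (h a) ≤ Fintype.card V := by
  have hpred : ∀ b, (¬ ∃ s m, Reach E s m b) → ∃ c, E c b ∧ ¬ ∃ s m, Reach E s m c := by
    intro b hb
    have : ∃ c, E c b := by
      by_contra! hc
      exact hb ⟨b, 0, .start hc⟩
    obtain ⟨c, hc⟩ := this
    refine ⟨c, hc, ?_⟩
    rintro ⟨s, m, hr⟩
    exact hb ⟨s, m + 1, hr.step hc⟩
  choose! g hg1 hg2 using hpred
  have hit : ∀ i, ¬ ∃ s m, Reach E s m (g^[i] a) := by
    intro i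
    induction i with
    | zero => exact ha
    | succ i ih => rw [Function.iterate_succ_apply']; exact hg2 _ ih
  have hσ : ∀ i j, h (g^[i] a) = (σ ^ j) (h (g^[i + j] a)) := by
    intro i j
    induction j with
    | zero => simp
    | succ j ih =>
      rw [ih, pow_succ, Perm.mul_apply, ← add_assoc, Function.iterate_succ_apply',
        hh _ _ (hg1 _ (hit (i + j)))]
  obtain ⟨i, j, hij, hne⟩ := Fintype.exists_ne_map_eq_of_card_lt
    (fun i : Fin (Fintype.card V + 1) => g^[(i : ℕ)] a) (by simp)
  wlog hlt : i < j generalizing i j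
  · exact this j i hij.symm hne.symm (lt_of_le_of_ne (not_lt.1 hlt) (fun h => hij h.symm))
  obtain ⟨c, hc⟩ : ∃ c : ℕ, (j : ℕ) = i + c := ⟨j - i, by omega⟩
  have hc0 : 0 < c := by have : (i : ℕ) < j := hlt; omega
  have hcV : c ≤ Fintype.card V := by have := j.2; omega
  refine (cycLen_le_of_pow hc0 ?_).trans hcV
  have h1 : h (g^[(i : ℕ)] a) = (σ ^ c) (h (g^[(i : ℕ)] a)) := by
    have := hσ i c
    rw [← hc] at this
    rwa [← hne] at this
  have h2 := hσ 0 i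
  simp only [Function.iterate_zero, id, zero_add] at h2
  rw [h2, ← Perm.mul_apply, ← pow_add, add_comm, pow_add, Perm.mul_apply, ← h1]

/-- The number of homomorphisms is at most `n` per source, and the size of the set of points on
short cycles per vertex that is not reachable from a source. -/
lemma card_isHom_le {V : Type*} [Fintype V] (E : V → V → Prop) {n : ℕ} (σ : Perm (Fin n)) :
    Fintype.card {h : V → Fin n // IsHom E σ h} ≤
      n ^ Fintype.card {b : V // ∀ a, ¬ E a b} *
        shortPts σ (Fintype.card V) ^ Fintype.card {a : V // ¬ ∃ s m, Reach E s m a} := by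
  have hF : Function.Injective
      (fun h : {h : V → Fin n // IsHom E σ h} =>
        ((fun b => h.1 b.1, fun a => ⟨h.1 a.1, cycLen_le_of_not_reach a.2 h.2⟩) :
        ({b : V // ∀ a, ¬ E a b} → Fin n) × ({a : V // ¬ ∃ s m, Reach E s m a} →
          {x : Fin n // cycLen σ x ≤ Fintype.card V}))) := by
    rintro ⟨h, hh⟩ ⟨h', hh'⟩ heq
    simp only [Prod.mk.injEq] at heq
    ext1
    funext a
    by_cases ha : ∃ s m, Reach E s m a
    · obtain ⟨s, m, hr⟩ := ha
      have := congrFun heq.1 ⟨s, hr.start_spec⟩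
      simp only at this ⊢
      rw [hr.apply_eq hh, hr.apply_eq hh', this]
    · have := congrFun heq.2 ⟨a, ha⟩
      simpa using this
  refine (Fintype.card_le_of_injective _ hF).trans ?_
  rw [Fintype.card_prod, Fintype.card_fun, Fintype.card_fun, Fintype.card_fin, shortPts]

lemma card_embedding_isHom_le {V : Type*} [Fintype V] (E : V → V → Prop) {n : ℕ}
    (σ : Perm (Fin n)) :
    Fintype.card {h : V ↪ Fin n // IsHom E σ h} ≤
      Fintype.card {h : V → Fin n // IsHom E σ h} :=
  Fintype.card_le_of_injective (fun h => ⟨h.1, h.2⟩) fun h h' heq => by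
    ext1; ext1 a
    exact congrArg Fin.val (congrFun (congrArg Subtype.val heq) a) |> Fin.ext

lemma Reach.unique {V : Type*} {E : V → V → Prop} (hinj : ∀ a a' b, E a b → E a' b → a = a')
    {s s' a : V} {m m' : ℕ} (h : Reach E s m a) (h' : Reach E s' m' a) : s = s' ∧ m = m' := by
  induction h generalizing m' with
  | start h0 =>
    cases h' with
    | start _ => exact ⟨rfl, rfl⟩
    | step _ e => exact absurd e (h0 _)
  | step hr e ih =>
    cases h' with
    | start h0 => exact absurd e (h0 _)
    | step hr' e' =>
      obtain rfl := hinj _ _ _ e e'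
      obtain ⟨rfl, rfl⟩ := ih hr'
      exact ⟨rfl, rfl⟩

lemma Reach.end_unique {V : Type*} {E : V → V → Prop} (hfun : ∀ a b b', E a b → E a b' → b = b')
    {s a a' : V} {m : ℕ} (h : Reach E s m a) (h' : Reach E s m a') : a = a' := by
  induction h generalizing a' with
  | start h0 => cases h' with | start _ => rfl
  | step hr e ih =>
    cases h' with
    | step hr' e' =>
      obtain rfl := ih hr'
      exact hfun _ _ _ e e'

lemma card_fun_le_of_coord {S X : Type*} [Fintype S] [Fintype X] (s : S)
    (Q : (S → X) → Prop) (K : ℕ)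
    (hK : ∀ ψ : {j // j ≠ s} → X,
      Nat.card {x : X // Q ((Equiv.funSplitAt s X).symm (x, ψ))} ≤ K) :
    Fintype.card X * Nat.card {φ : S → X // Q φ} ≤
      Fintype.card X ^ Fintype.card S * K := by
  have h1 : Nat.card {φ : S → X // Q φ} ≤ Fintype.card ({j // j ≠ s} → X) * K := by
    have e : {φ : S → X // Q φ} ≃
        Σ ψ : {j // j ≠ s} → X, {x : X // Q ((Equiv.funSplitAt s X).symm (x, ψ))} :=
      { toFun := fun φ => ⟨((Equiv.funSplitAt s X) φ.1).2, ((Equiv.funSplitAt s X) φ.1).1, by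
          rw [Prod.mk.eta, Equiv.symm_apply_apply]; exact φ.2⟩
        invFun := fun z => ⟨(Equiv.funSplitAt s X).symm (z.2.1, z.1), z.2.2⟩
        left_inv := fun φ => by ext1; simp only [Prod.mk.eta, Equiv.symm_apply_apply]
        right_inv := by
          rintro ⟨ψ, x, hx⟩
          refine Sigma.ext ?_ ?_
          · simp
          · refine (Subtype.heq_iff_coe_eq ?_).2 ?_
            · intro y; simp
            · simp }
    rw [Nat.card_congr e, Nat.card_sigma]
    calc _ ≤ ∑ _ψ : {j // j ≠ s} → X, K := sum_le_sum fun ψ _ => hK ψ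
      _ = _ := by simp
  have h2 : Fintype.card S = Fintype.card {j // j ≠ s} + 1 := by
    have := Fintype.card_subtype_compl (fun j : S => j = s)
    simp only [Fintype.card_subtype_eq] at this
    have h3 : 0 < Fintype.card S := Fintype.card_pos_iff.2 ⟨s⟩
    simp only [ne_eq]
    omega
  calc _ ≤ Fintype.card X * (Fintype.card ({j // j ≠ s} → X) * K) := Nat.mul_le_mul_left _ h1
    _ = _ := by rw [h2, Fintype.card_fun, pow_succ]; ring

/-- For an acyclic partial injection `E`, almost all the maps on sources extend to *injective*
homomorphisms, the exceptions being controlled by the number of points on short cycles. -/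
lemma le_card_embedding_isHom {V : Type*} [Fintype V] (E : V → V → Prop)
    (hfun : ∀ a b b', E a b → E a b' → b = b') (hinj : ∀ a a' b, E a b → E a' b → a = a')
    (hacyc : ∀ a, ∃ s m, Reach E s m a) :
    ∃ M : ℕ, ∀ {n : ℕ} (σ : Perm (Fin n)),
      n * n ^ Fintype.card {b : V // ∀ a, ¬ E a b} ≤
        n * Fintype.card {h : V ↪ Fin n // IsHom E σ h} +
        Fintype.card V ^ 2 *
          (n ^ Fintype.card {b : V // ∀ a, ¬ E a b} * (1 + shortPts σ M)) := by
  choose st m hr using hacyc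
  refine ⟨∑ a, m a, fun {n} σ => ?_⟩
  set S := {b : V // ∀ a, ¬ E a b} with hS
  let stS : V → S := fun a => ⟨st a, (hr a).start_spec⟩
  let F : (S → Fin n) → V → Fin n := fun φ a => (σ ^ m a) (φ (stS a))
  have hFhom : ∀ φ, IsHom E σ (F φ) := by
    intro φ a b e
    obtain ⟨h1, h2⟩ := Reach.unique hinj (hr b) ((hr a).step e)
    have h3 : stS b = stS a := Subtype.ext h1
    simp only [F, h3, h2]
    rw [pow_succ', Perm.mul_apply]
  have hFinj : Function.Injective F := by
    intro φ φ' h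
    funext s
    have := congrFun h s.1
    obtain ⟨h1, h2⟩ := Reach.unique hinj (hr s.1) (.start s.2)
    have h3 : stS s.1 = s := Subtype.ext h1
    simpa only [F, h3, h2, pow_zero, Perm.one_apply] using this
  have hbad : ∀ ab : V × V, ab.1 ≠ ab.2 →
      n * Nat.card {φ : S → Fin n // F φ ab.1 = F φ ab.2} ≤
        n ^ Fintype.card S * (1 + shortPts σ (∑ a, m a)) := by
    rintro ⟨a, b⟩ hab
    simp only at hab ⊢
    have := card_fun_le_of_coord (X := Fin n) (stS a) (fun φ => F φ a = F φ b)
      (1 + shortPts σ (∑ a, m a)) ?_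
    · simpa using this
    intro ψ
    by_cases hst : stS b = stS a
    · refine le_trans ?_ (Nat.le_add_left _ _)
      rw [shortPts, ← Nat.card_eq_fintype_card]
      refine Nat.card_mono (Set.toFinite _) fun x hx => ?_
      change F _ a = F _ b at hx
      change cycLen σ x ≤ _
      have hm : m a ≠ m b := by
        intro h
        apply hab
        have h1 := hr a
        have h2 := hr b
        have h4 : st b = st a := congrArg Subtype.val hst
        rw [h4, ← h] at h2
        exact Reach.end_unique hfun h1 h2
      simp only [F, hst] at hx
      simp only [funSplitAt, piSplitAt_symm_apply, dite_true] at hx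
      have hle : ∀ c, m c ≤ ∑ a, m a := fun c =>
        single_le_sum (f := m) (fun _ _ => Nat.zero_le _) (mem_univ c)
      have aux : ∀ i j : ℕ, i < j → (σ ^ i) x = (σ ^ j) x → cycLen σ x ≤ j := by
        intro i j hij h
        obtain ⟨c, rfl⟩ := Nat.exists_eq_add_of_lt hij
        rw [show i + c + 1 = i + (c + 1) by ring, pow_add, Perm.mul_apply] at h
        exact (cycLen_le_of_pow (Nat.succ_pos c) ((σ ^ i).injective h).symm).trans (by omega)
      rcases lt_or_gt_of_ne hm with h | h
      · exact (aux _ _ h hx).trans (hle b)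
      · exact (aux _ _ h hx.symm).trans (hle a)
    · refine le_trans ?_ (Nat.le_add_right _ _)
      rw [Nat.card_eq_fintype_card, Fintype.card_le_one_iff]
      rintro ⟨x, hx⟩ ⟨y, hy⟩
      ext1
      simp only [F] at hx hy ⊢
      simp only [funSplitAt, piSplitAt_symm_apply, dif_pos, dif_neg hst, ] at hx hy
      simpa using hx.trans hy.symm
  have hgood : n ^ Fintype.card S ≤ Fintype.card {h : V ↪ Fin n // IsHom E σ h} +
      ∑ ab ∈ (univ : Finset (V × V)).filter (fun ab => ab.1 ≠ ab.2),
        Nat.card {φ : S → Fin n // F φ ab.1 = F φ ab.2} := by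
    have h1 : n ^ Fintype.card S = (univ : Finset (S → Fin n)).card := by simp
    rw [h1, ← card_filter_add_card_filter_not (s := univ) (fun φ => Function.Injective (F φ))]
    refine Nat.add_le_add ?_ ?_
    · rw [← Fintype.card_subtype]
      refine Fintype.card_le_of_injective
        (fun φ => ⟨⟨F φ.1, φ.2⟩, hFhom φ.1⟩) fun φ φ' h => Subtype.ext (hFinj ?_)
      exact congrArg (fun z => (z.1 : V → Fin n)) h
    · calc _ ≤ (((univ : Finset (V × V)).filter (fun ab => ab.1 ≠ ab.2)).biUnion fun ab =>
            univ.filter fun φ => F φ ab.1 = F φ ab.2).card := by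
            refine card_le_card fun φ hφ => ?_
            simp only [mem_filter, mem_univ, true_and, mem_biUnion] at hφ ⊢
            rw [Function.Injective] at hφ
            push Not at hφ
            obtain ⟨a, b, h, hne⟩ := hφ
            exact ⟨(a, b), hne, h⟩
        _ ≤ _ := by
            refine card_biUnion_le.trans (sum_le_sum fun ab _ => ?_)
            rw [Nat.card_eq_fintype_card, Fintype.card_subtype]
  calc n * n ^ Fintype.card S ≤ n * Fintype.card {h : V ↪ Fin n // IsHom E σ h} +
      ∑ ab ∈ (univ : Finset (V × V)).filter (fun ab => ab.1 ≠ ab.2),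
        n * Nat.card {φ : S → Fin n // F φ ab.1 = F φ ab.2} := by
        rw [← mul_sum, ← mul_add]; exact Nat.mul_le_mul_left _ hgood
    _ ≤ _ := by
        refine Nat.add_le_add_left ?_ _
        refine (sum_le_sum fun ab hab => hbad ab (by simpa using hab)).trans ?_
        rw [sum_const, smul_eq_mul]
        refine Nat.mul_le_mul_right _ ((card_le_univ _).trans ?_)
        rw [Fintype.card_prod, sq]

end Counting

/-! ### Laws with bounded moments of short cycle counts -/

section Cycles
open Finset Equiv
open scoped Classical

lemma cycLen_pos {n : ℕ} (σ : Perm (Fin n)) (x : Fin n) : 0 < cycLen σ x :=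
  Function.minimalPeriod_pos_of_mem_periodicPts
    (σ.injective.mem_periodicPts x)

lemma card_sameCycle {n : ℕ} (σ : Perm (Fin n)) (x : Fin n) :
    (univ.filter fun y => σ.SameCycle x y).card = cycLen σ x := by
  have h := MulAction.minimalPeriod_eq_card (a := σ) (b := x)
  have h2 : cycLen σ x = Function.minimalPeriod (σ • ·) x := rfl
  rw [h2, h, ← Set.toFinset_card]
  congr 1
  ext y
  simp only [mem_filter, mem_univ, true_and, Set.mem_toFinset, MulAction.mem_orbit_iff,
    Subtype.exists, Subgroup.mem_zpowers_iff]
  constructor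
  · rintro ⟨i, rfl⟩
    exact ⟨σ ^ i, ⟨i, rfl⟩, rfl⟩
  · rintro ⟨_, ⟨i, rfl⟩, rfl⟩
    exact ⟨i, rfl⟩

lemma Equiv.Perm.SameCycle.cycLen_eq {n : ℕ} {σ : Perm (Fin n)} {x y : Fin n}
    (h : σ.SameCycle x y) : cycLen σ x = cycLen σ y := by
  rw [← card_sameCycle, ← card_sameCycle]
  congr 1
  ext z
  simp only [mem_filter, mem_univ, true_and]
  exact ⟨fun hz => h.symm.trans hz, fun hz => h.trans hz⟩

/-- The points on cycles of length `c` come in classes of size `c`. -/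
lemma card_cycLen_eq {n : ℕ} (σ : Perm (Fin n)) (c : ℕ) :
    (univ.filter fun x => cycLen σ x = c).card = c * cycCount σ c := by
  have hdvd : c ∣ (univ.filter fun x => cycLen σ x = c).card := by
    let f : Fin n → Quotient (Perm.SameCycle.setoid σ) := fun x => Quotient.mk _ x
    rw [card_eq_sum_card_image f]
    refine dvd_sum fun q hq => ?_
    obtain ⟨x, hx, rfl⟩ := mem_image.1 hq
    have hx' : cycLen σ x = c := by simpa using hx
    refine dvd_of_eq ?_
    conv_lhs => rw [← hx', ← card_sameCycle σ x]
    congr 1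
    ext y
    simp only [mem_filter, mem_univ, true_and]
    constructor
    · intro h
      exact ⟨h.cycLen_eq.symm.trans hx', Quotient.sound h.symm⟩
    · rintro ⟨_, h⟩
      exact (Quotient.exact h : σ.SameCycle y x).symm
  rw [cycCount]
  exact (Nat.mul_div_cancel' (by convert hdvd)).symm ▸ by congr

lemma shortPts_eq_sum {n : ℕ} (σ : Perm (Fin n)) (M : ℕ) :
    shortPts σ M = ∑ c : Fin M, (c + 1 : ℕ) * cycCount σ (c + 1) := by
  rw [shortPts, Fintype.card_subtype,
    Fin.sum_univ_eq_sum_range (fun c => (c + 1) * cycCount σ (c + 1)) M]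
  have : ∀ c ∈ range M, (c + 1) * cycCount σ (c + 1) =
      ((univ.filter fun x => cycLen σ x ≤ M).filter fun x => cycLen σ x - 1 = c).card := by
    intro c hc
    rw [← card_cycLen_eq, filter_filter]
    congr 1
    ext x
    have := cycLen_pos σ x
    simp only [mem_filter, mem_univ, true_and]
    rw [mem_range] at hc
    omega
  rw [sum_congr rfl this]
  refine card_eq_sum_card_fiberwise (f := fun x => cycLen σ x - 1) (t := range M) ?_
  intro x hx
  have := cycLen_pos σ x
  simp only [coe_filter, mem_univ, true_and, Set.mem_ofPred_eq, coe_range, Set.mem_Iio] at hx ⊢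
  omega

lemma shortPts_mono {n : ℕ} (σ : Perm (Fin n)) {M N : ℕ} (h : M ≤ N) :
    shortPts σ M ≤ shortPts σ N := by
  rw [shortPts, shortPts]
  exact Fintype.card_subtype_mono _ _ fun x (hx : _ ≤ _) => hx.trans h

end Cycles

section Adm
open Finset Equiv Topology
open scoped Classical

/-- The hypotheses made on the law of each letter: a conjugation-invariant probability weight
whose joint moments of small cycle counts are eventually bounded. -/
structure Adm (q : (n : ℕ) → Perm (Fin n) → ℝ) : Prop where
  nonneg : ∀ n σ, 0 ≤ q n σ
  sum_one : ∀ n, ∑ σ, q n σ = 1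
  conj : ∀ n (τ σ : Perm (Fin n)), q n (τ⁻¹ * σ * τ) = q n σ
  mom : ∀ (m : ℕ) (c : Fin m → ℕ), (∀ i, 1 ≤ c i) → ∃ C : ℝ, ∀ᶠ n in atTop,
    (∑ σ : Perm (Fin n), q n σ * ∏ i, (cycCount σ (c i) : ℝ)) ≤ C

lemma Adm.shortPts_pow {q : (n : ℕ) → Perm (Fin n) → ℝ} (hq : Adm q) (M m : ℕ) :
    ∃ C : ℝ, ∀ᶠ n in atTop, ∑ σ, q n σ * (shortPts σ M : ℝ) ^ m ≤ C := by
  choose C hC using fun c : Fin m → Fin M => hq.mom m (fun i => c i + 1) (fun i => by omega)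
  refine ⟨∑ c : Fin m → Fin M, (∏ i, ((c i : ℕ) + 1 : ℝ)) * C c, ?_⟩
  filter_upwards [eventually_all.2 hC] with n hn
  have : ∀ σ : Perm (Fin n), q n σ * (shortPts σ M : ℝ) ^ m =
      ∑ c : Fin m → Fin M, (∏ i, ((c i : ℕ) + 1 : ℝ)) *
        (q n σ * ∏ i, (cycCount σ (c i + 1) : ℝ)) := by
    intro σ
    rw [shortPts_eq_sum]
    push_cast
    have := Fintype.sum_pow (fun c : Fin M => ((c : ℕ) + 1 : ℝ) * (cycCount σ (c + 1) : ℝ)) m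
    rw [this, mul_sum]
    refine sum_congr rfl fun c _ => ?_
    rw [prod_mul_distrib]; ring
  simp_rw [this]
  rw [sum_comm]
  refine sum_le_sum fun c _ => ?_
  rw [← mul_sum]
  exact mul_le_mul_of_nonneg_left (hn c) (prod_nonneg fun i _ => by positivity)

lemma Adm.shortPts_add_one_pow {q : (n : ℕ) → Perm (Fin n) → ℝ} (hq : Adm q) (M m : ℕ) :
    ∃ C : ℝ, ∀ᶠ n in atTop, ∑ σ, q n σ * (shortPts σ M + 1 : ℝ) ^ m ≤ C := by
  obtain ⟨C, hC⟩ := hq.shortPts_pow M m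
  refine ⟨2 ^ (m - 1) * (C + 1), hC.mono fun n hn => ?_⟩
  calc ∑ σ, q n σ * (shortPts σ M + 1 : ℝ) ^ m
      ≤ ∑ σ, q n σ * (2 ^ (m - 1) * ((shortPts σ M : ℝ) ^ m + 1)) := by
        refine sum_le_sum fun σ _ => mul_le_mul_of_nonneg_left ?_ (hq.nonneg n σ)
        have := add_pow_le (a := (shortPts σ M : ℝ)) (b := 1) (by positivity) zero_le_one m
        simpa using this
    _ = 2 ^ (m - 1) * ((∑ σ, q n σ * (shortPts σ M : ℝ) ^ m) + ∑ σ, q n σ) := by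
        rw [← sum_add_distrib, mul_sum]
        exact sum_congr rfl fun σ _ => by ring
    _ ≤ _ := by rw [hq.sum_one]; gcongr

/-- Expected number of injective homomorphisms: at most of order `n ^ #sources`, uniformly over
all graphs with at most `N` vertices. -/
lemma Adm.embedding_le {q : (n : ℕ) → Perm (Fin n) → ℝ} (hq : Adm q) (N : ℕ) :
    ∃ C : ℝ, 0 ≤ C ∧ ∀ᶠ n in atTop, ∀ (V : Type) [Fintype V] (E : V → V → Prop),
      Fintype.card V ≤ N →
      ∑ σ, q n σ * (Fintype.card {h : V ↪ Fin n // IsHom E σ h} : ℝ) ≤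
        C * (n : ℝ) ^ Fintype.card {b : V // ∀ a, ¬ E a b} := by
  obtain ⟨C, hC⟩ := hq.shortPts_add_one_pow N N
  refine ⟨max C 0, le_max_right _ _, hC.mono fun n hn V _ E hV => ?_⟩
  calc _ ≤ ∑ σ, q n σ * ((n : ℝ) ^ Fintype.card {b : V // ∀ a, ¬ E a b} *
        (shortPts σ N + 1 : ℝ) ^ N) := by
        refine sum_le_sum fun σ _ => mul_le_mul_of_nonneg_left ?_ (hq.nonneg n σ)
        refine (Nat.cast_le.2 ((card_embedding_isHom_le E σ).trans (card_isHom_le E σ))).trans ?_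
        push_cast
        refine mul_le_mul_of_nonneg_left ?_ (by positivity)
        calc (shortPts σ (Fintype.card V) : ℝ) ^ _ ≤ (shortPts σ N + 1 : ℝ) ^
                Fintype.card {a : V // ¬ ∃ s m, Reach E s m a} := by
              refine pow_le_pow_left₀ (by positivity) ?_ _
              have : (shortPts σ (Fintype.card V) : ℝ) ≤ shortPts σ N :=
                Nat.cast_le.2 (shortPts_mono σ hV)
              linarith
          _ ≤ _ := pow_le_pow_right₀ (by linarith [(Nat.cast_nonneg (shortPts σ N) : (0:ℝ) ≤ _)])
              ((Fintype.card_subtype_le _).trans hV)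
    _ = (∑ σ, q n σ * (shortPts σ N + 1 : ℝ) ^ N) *
          (n : ℝ) ^ Fintype.card {b : V // ∀ a, ¬ E a b} := by
        rw [sum_mul]; exact sum_congr rfl fun σ _ => by ring
    _ ≤ _ := by
        refine mul_le_mul_of_nonneg_right (hn.trans (le_max_left _ _)) (by positivity)

/-- For an acyclic partial injection, the expected number of injective homomorphisms is
asymptotically `n ^ #sources`. -/
lemma Adm.tendsto_embedding {q : (n : ℕ) → Perm (Fin n) → ℝ} (hq : Adm q) {V : Type}
    [Fintype V] (E : V → V → Prop)
    (hfun : ∀ a b b', E a b → E a b' → b = b') (hinj : ∀ a a' b, E a b → E a' b → a = a')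
    (hacyc : ∀ a, ∃ s m, Reach E s m a) :
    Tendsto (fun n => (∑ σ, q n σ * (Fintype.card {h : V ↪ Fin n // IsHom E σ h} : ℝ)) /
      (n : ℝ) ^ Fintype.card {b : V // ∀ a, ¬ E a b}) atTop (𝓝 1) := by
  obtain ⟨M, hM⟩ := le_card_embedding_isHom E hfun hinj hacyc
  obtain ⟨C, hC⟩ := hq.shortPts_add_one_pow M 1
  set S := Fintype.card {b : V // ∀ a, ¬ E a b}
  have hlow : Tendsto (fun n : ℕ => 1 - (Fintype.card V : ℝ) ^ 2 * C / n) atTop (𝓝 1) := by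
    simpa using tendsto_const_nhds.sub (tendsto_const_div_atTop_nhds_zero_nat
      ((Fintype.card V : ℝ) ^ 2 * C))
  refine tendsto_of_tendsto_of_tendsto_of_le_of_le' hlow tendsto_const_nhds ?_ ?_
  · filter_upwards [hC, eventually_gt_atTop 0] with n hn hn0
    have hn0' : (0 : ℝ) < n := Nat.cast_pos.2 hn0
    rw [le_div_iff₀ (by positivity)]
    have h1 : (n : ℝ) * n ^ S ≤
        n * (∑ σ, q n σ * (Fintype.card {h : V ↪ Fin n // IsHom E σ h} : ℝ)) +
        (Fintype.card V : ℝ) ^ 2 * (n ^ S * C) := by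
      calc (n : ℝ) * n ^ S = ∑ σ, q n σ * ((n : ℝ) * n ^ S) := by
            rw [← sum_mul, hq.sum_one, one_mul]
        _ ≤ ∑ σ, q n σ * (n * (Fintype.card {h : V ↪ Fin n // IsHom E σ h} : ℝ) +
              (Fintype.card V : ℝ) ^ 2 * (n ^ S * (shortPts σ M + 1 : ℝ) ^ 1)) := by
            refine sum_le_sum fun σ _ => mul_le_mul_of_nonneg_left ?_ (hq.nonneg n σ)
            have := hM σ
            have h2 : ((n * n ^ S : ℕ) : ℝ) ≤ _ := Nat.cast_le.2 this
            push_cast at h2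
            rw [pow_one, add_comm (shortPts σ M : ℝ) 1]
            exact h2
        _ = n * (∑ σ, q n σ * (Fintype.card {h : V ↪ Fin n // IsHom E σ h} : ℝ)) +
              (Fintype.card V : ℝ) ^ 2 *
                (n ^ S * ∑ σ, q n σ * (shortPts σ M + 1 : ℝ) ^ 1) := by
            rw [mul_sum, mul_sum, mul_sum, ← sum_add_distrib]
            exact sum_congr rfl fun σ _ => by ring
        _ ≤ _ := by gcongr
    have h3 : (1 - (Fintype.card V : ℝ) ^ 2 * C / n) * n ^ S * n ≤
      (∑ σ, q n σ * (Fintype.card {h : V ↪ Fin n // IsHom E σ h} : ℝ)) * n := by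
      have : (1 - (Fintype.card V : ℝ) ^ 2 * C / n) * n ^ S * n =
        n * n ^ S - (Fintype.card V : ℝ) ^ 2 * (n ^ S * C) := by field_simp
      rw [this]; linarith
    exact le_of_mul_le_mul_right h3 hn0'
  · filter_upwards [eventually_gt_atTop 0] with n hn0
    have hn0' : (0 : ℝ) < n := Nat.cast_pos.2 hn0
    rw [div_le_one (by positivity)]
    have hc : Fintype.card {a : V // ¬ ∃ s m, Reach E s m a} = 0 :=
      Fintype.card_eq_zero_iff.2 ⟨fun a => a.2 (hacyc a.1)⟩
    calc _ ≤ ∑ σ, q n σ * (n : ℝ) ^ S := by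
          refine sum_le_sum fun σ _ => mul_le_mul_of_nonneg_left ?_ (hq.nonneg n σ)
          have := (card_embedding_isHom_le E σ).trans (card_isHom_le E σ)
          rw [hc, pow_zero, mul_one] at this
          exact_mod_cast this
      _ = _ := by rw [← sum_mul, hq.sum_one, one_mul]

/-- There are `O(n ^ v)` maps with an image of size `v`. -/
lemma sum_card_image_le (I : Type) [Fintype I] :
    ∃ K : ℝ, 0 ≤ K ∧ ∀ n : ℕ, 0 < n →
      ∑ f : I → Fin n, ((n : ℝ) ^ (univ.image f).card)⁻¹ ≤ K := by
  refine ⟨∑ v ∈ range (Fintype.card I + 1), (v : ℝ) ^ Fintype.card I,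
    sum_nonneg fun _ _ => by positivity, fun n hn => ?_⟩
  have hn0' : (0 : ℝ) < n := Nat.cast_pos.2 hn
  have hmap : ∀ f ∈ (univ : Finset (I → Fin n)), (univ.image f).card ∈
      range (Fintype.card I + 1) := fun f _ => by
    rw [mem_range]; exact Nat.lt_succ_of_le card_image_le
  rw [← sum_fiberwise_of_maps_to hmap]
  refine sum_le_sum fun v _ => ?_
  have hcard : (univ.filter fun f : I → Fin n => (univ.image f).card = v).card ≤
      n ^ v * v ^ Fintype.card I := by
    calc _ ≤ ((univ : Finset ((Fin v → Fin n) × (I → Fin v))).image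
          fun z => z.1 ∘ z.2).card := by
          refine card_le_card fun f hf => ?_
          simp only [mem_filter, mem_univ, true_and, mem_image, Prod.exists] at hf ⊢
          let e := (univ.image f).equivFinOfCardEq hf
          refine ⟨fun i => (e.symm i).1, fun i => e ⟨f i, mem_image_of_mem f (mem_univ i)⟩, ?_⟩
          funext i; simp
      _ ≤ _ := card_image_le.trans (by simp)
  calc _ = ∑ f ∈ univ.filter fun f : I → Fin n => (univ.image f).card = v,
        ((n : ℝ) ^ v)⁻¹ := sum_congr rfl fun f hf => by rw [(mem_filter.1 hf).2]
    _ = (univ.filter fun f : I → Fin n => (univ.image f).card = v).card * ((n : ℝ) ^ v)⁻¹ := by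
        rw [sum_const, nsmul_eq_mul]
    _ ≤ ((n ^ v * v ^ Fintype.card I : ℕ) : ℝ) * ((n : ℝ) ^ v)⁻¹ := by
        gcongr
    _ = _ := by push_cast; field_simp

lemma tendsto_descFactorial_div (v : ℕ) :
    Tendsto (fun n : ℕ => (n.descFactorial v : ℝ) / (n : ℝ) ^ v) atTop (𝓝 1) := by
  refine (Asymptotics.isEquivalent_iff_tendsto_one ?_).1 (isEquivalent_descFactorial v)
  filter_upwards [eventually_gt_atTop 0] with n hn
  have hn0' : (0 : ℝ) < n := Nat.cast_pos.2 hn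
  positivity

lemma eventually_pow_le_descFactorial (N : ℕ) :
    ∀ᶠ n : ℕ in atTop, ∀ v ≤ N, (n : ℝ) ^ v ≤ 2 * (n.descFactorial v : ℝ) := by
  have : ∀ᶠ n : ℕ in atTop, ∀ v ∈ Finset.range (N + 1),
      (n : ℝ) ^ v ≤ 2 * (n.descFactorial v : ℝ) := by
    rw [eventually_all_finset]
    intro v _
    filter_upwards [(tendsto_descFactorial_div v).eventually_const_le
      (show (1 / 2 : ℝ) < 1 by norm_num), eventually_gt_atTop 0] with n hn hn0
    have hn0' : (0 : ℝ) < n := Nat.cast_pos.2 hn0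
    rw [le_div_iff₀ (by positivity)] at hn
    linarith
  exact this.mono fun n hn v hv => hn v (by simpa using Nat.lt_succ_of_le hv)

/-- Bound on the probability that a fixed injective map is a homomorphism: each edge (each vertex
with an incoming edge) costs a factor `1 / n`. -/
lemma Adm.isHom_le {q : (n : ℕ) → Perm (Fin n) → ℝ} (hq : Adm q) (N : ℕ) :
    ∃ C : ℝ, 0 ≤ C ∧ ∀ᶠ n : ℕ in atTop, ∀ (V : Type) [Fintype V] (E : V → V → Prop)
      (h : V ↪ Fin n), Fintype.card V ≤ N →
      ∑ σ, (if IsHom E σ h then q n σ else 0) ≤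
        C * ((n : ℝ) ^ Fintype.card {b : V // ∃ a, E a b})⁻¹ := by
  obtain ⟨C, hC0, hC⟩ := hq.embedding_le N
  refine ⟨2 * C, by positivity, ?_⟩
  filter_upwards [hC, eventually_pow_le_descFactorial N, eventually_gt_atTop 0]
    with n hn hd hn0 V _ E h hV
  have hn0' : (0 : ℝ) < n := Nat.cast_pos.2 hn0
  have h1 := sum_isHom_mul_descFactorial (q n) (hq.conj n) E h
  have h2 := hn V E hV
  have h3 := hd _ hV
  have h4 : Fintype.card V = Fintype.card {b : V // ∃ a, E a b} +
      Fintype.card {b : V // ∀ a, ¬ E a b} := by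
    rw [← Fintype.card_congr (Equiv.sumCompl fun b : V => ∃ a, E a b), Fintype.card_sum]
    congr 1
    exact Fintype.card_congr (Equiv.subtypeEquivRight fun b => by push Not; rfl)
  set P := ∑ σ, (if IsHom E σ h then q n σ else 0)
  have hP : 0 ≤ P := sum_nonneg fun σ _ => by split_ifs; exacts [hq.nonneg _ _, le_rfl]
  rw [← h1] at h2
  rw [h4, pow_add] at h3
  rw [← div_eq_mul_inv, le_div_iff₀ (by positivity)]
  have hs : (0 : ℝ) < (n : ℝ) ^ Fintype.card {b : V // ∀ a, ¬ E a b} := by positivity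
  refine le_of_mul_le_mul_right ?_ hs
  calc P * (n : ℝ) ^ Fintype.card {b : V // ∃ a, E a b} *
        (n : ℝ) ^ Fintype.card {b : V // ∀ a, ¬ E a b}
      ≤ P * (2 * (n.descFactorial (Fintype.card V) : ℝ)) := by
        rw [mul_assoc, h4]; exact mul_le_mul_of_nonneg_left h3 hP
    _ ≤ _ := by linarith

end Adm

/-! ### Closed walks in Schreier graphs -/

section Walks
open Finset Equiv Topology
open scoped Classical

variable {k : ℕ} {I : Type}

/-- The inverse letter. -/
def linv (l : Fin k × Bool) : Fin k × Bool := (l.1, !l.2)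

@[simp] lemma linv_linv (l : Fin k × Bool) : linv (linv l) = l := by simp [linv]

lemma linv_ne (l : Fin k × Bool) : linv l ≠ l := by
  intro h
  have := congrArg Prod.snd h
  simp [linv] at this

/-- The permutation by which a letter acts. -/
def act {n : ℕ} (σ : Fin k → Perm (Fin n)) (l : Fin k × Bool) : Perm (Fin n) :=
  cond l.2 (σ l.1) (σ l.1)⁻¹

lemma act_linv {n : ℕ} (σ : Fin k → Perm (Fin n)) (l : Fin k × Bool) :
    act σ (linv l) = (act σ l)⁻¹ := by
  obtain ⟨j, _ | _⟩ := l <;> simp [act, linv]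

/-- `f` is a closed walk (or a family of such) in the Schreier graph of `σ`, reading the labels
`lab` backwards along the cycles of `nxt`. -/
def IsWalk {n : ℕ} (nxt : Perm I) (lab : I → Fin k × Bool) (σ : Fin k → Perm (Fin n))
    (f : I → Fin n) : Prop :=
  ∀ i, act σ (lab i) (f (nxt i)) = f i

/-- The edges of colour `j` carried by the labels, pushed forward by `f`. -/
def EdgeRel (nxt : Perm I) (lab : I → Fin k × Bool) {X : Type} (f : I → X) (j : Fin k)
    (a b : X) : Prop :=
  ∃ i, (lab i = (j, true) ∧ f (nxt i) = a ∧ f i = b) ∨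
    (lab i = (j, false) ∧ f i = a ∧ f (nxt i) = b)

lemma isWalk_iff {n : ℕ} (nxt : Perm I) (lab : I → Fin k × Bool) (σ : Fin k → Perm (Fin n))
    {X : Type} (g : I → X) (f : X → Fin n) :
    IsWalk nxt lab σ (f ∘ g) ↔ ∀ j, IsHom (EdgeRel nxt lab g j) (σ j) f := by
  constructor
  · rintro h j a b ⟨i, ⟨h1, rfl, rfl⟩ | ⟨h1, rfl, rfl⟩⟩
    · simpa [act, h1] using h i
    · have := h i
      simp only [act, h1, cond_false, Function.comp, Perm.inv_eq_iff_eq] at this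
      exact this.symm
  · intro h i
    rcases hl : lab i with ⟨j, _ | _⟩
    · simp only [act, cond_false, Function.comp, Perm.inv_eq_iff_eq]
      exact (h j _ _ ⟨i, Or.inr ⟨hl, rfl, rfl⟩⟩).symm
    · simpa [act] using h j _ _ ⟨i, Or.inl ⟨hl, rfl, rfl⟩⟩

/-- The combinatorial conditions on a family of cyclic words, together with a set `B` of base
points: the words are cyclically reduced, none of them only involves one generator, two positions
reading the same cyclic word are simultaneously moved to base points, and no position reads the
inverse of the word read from another one. -/
structure GoodWord (nxt : Perm I) (lab : I → Fin k × Bool) (B : Set I) : Prop where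
  reduced : ∀ i, lab (nxt i) ≠ linv (lab i)
  fwd : ∀ i j, ∃ m : ℕ, (lab ((nxt ^ m) i)).1 ≠ j
  bwd : ∀ i j, ∃ m : ℕ, (lab ((nxt⁻¹ ^ m) i)).1 ≠ j
  prim : ∀ i i', (∀ m : ℕ, lab ((nxt ^ m) i) = lab ((nxt ^ m) i')) →
    ∃ m : ℕ, (nxt ^ m) i ∈ B ∧ (nxt ^ m) i' ∈ B
  norev : ∀ i i', ¬ ∀ m : ℕ, lab ((nxt ^ m) i) = linv (lab ((nxt⁻¹ ^ (m + 1)) i'))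

variable {nxt : Perm I} {lab : I → Fin k × Bool} {B : Set I}

lemma GoodWord.edge_fun (hg : GoodWord nxt lab B) (j : Fin k) (a b b' : I)
    (h : EdgeRel nxt lab id j a b) (h' : EdgeRel nxt lab id j a b') : b = b' := by
  obtain ⟨i, ⟨h1, rfl, rfl⟩ | ⟨h1, rfl, rfl⟩⟩ := h <;>
  obtain ⟨i', ⟨h2, h3, rfl⟩ | ⟨h2, h3, rfl⟩⟩ := h' <;> simp only [id] at *
  · exact (nxt.injective h3).symm
  · exact absurd (by rw [← h3, h2, h1]; simp [linv]) (hg.reduced i)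
  · exact absurd (by rw [h3, h2, h1]; simp [linv]) (hg.reduced i')
  · rw [h3]

lemma GoodWord.edge_inj (hg : GoodWord nxt lab B) (j : Fin k) (a a' b : I)
    (h : EdgeRel nxt lab id j a b) (h' : EdgeRel nxt lab id j a' b) : a = a' := by
  obtain ⟨i, ⟨h1, rfl, rfl⟩ | ⟨h1, rfl, rfl⟩⟩ := h <;>
  obtain ⟨i', ⟨h2, rfl, h3⟩ | ⟨h2, rfl, h3⟩⟩ := h' <;> simp only [id] at *
  · rw [h3]
  · exact absurd (by rw [h3, h2, h1]; simp [linv]) (hg.reduced i')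
  · exact absurd (by rw [← h3, h2, h1]; simp [linv]) (hg.reduced i)
  · exact (nxt.injective h3).symm

lemma GoodWord.edge_acyclic (hg : GoodWord nxt lab B) (j : Fin k) (a : I) :
    ∃ s m, Reach (EdgeRel nxt lab (id : I → I) j) s m a := by
  set E := EdgeRel nxt lab (id : I → I) j
  have hpred : ∀ b, (¬ ∃ s m, Reach E s m b) → ∃ c, E c b ∧ ¬ ∃ s m, Reach E s m c := by
    intro b hb
    have : ∃ c, E c b := by
      by_contra! hc
      exact hb ⟨b, 0, .start hc⟩
    obtain ⟨c, hc⟩ := this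
    refine ⟨c, hc, ?_⟩
    rintro ⟨s, m, hr⟩
    exact hb ⟨s, m + 1, hr.step hc⟩
  by_contra ha
  obtain ⟨c, ⟨i, ⟨h1, h2, h3⟩ | ⟨h1, h2, h3⟩⟩, hc⟩ := hpred a ha
  · -- the letters read forwards from `i` are all equal to `(j, true)`
    simp only [id] at h2
    have key : ∀ m : ℕ, lab ((nxt ^ m) i) = (j, true) ∧
        ¬ ∃ s m', Reach E s m' ((nxt ^ (m + 1)) i) := by
      intro m
      induction m with
      | zero => exact ⟨by simpa using h1, by simpa [h2] using hc⟩
      | succ m ih =>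
        obtain ⟨c', ⟨i', ⟨e1, e2, e3⟩ | ⟨e1, e2, e3⟩⟩, hc'⟩ := hpred _ ih.2
        · simp only [id] at e2 e3
          subst e3
          refine ⟨e1, ?_⟩
          rw [pow_succ', Perm.mul_apply, e2]
          exact hc'
        · simp only [id] at e2 e3
          rw [pow_succ', Perm.mul_apply] at e3
          have := nxt.injective e3
          rw [this, ih.1] at e1
          simp at e1
    obtain ⟨m, hm⟩ := hg.fwd i j
    exact hm (by rw [(key m).1])
  · -- the letters read backwards from `i` are all equal to `(j, false)`
    simp only [id] at h2
    have key : ∀ m : ℕ, lab ((nxt⁻¹ ^ m) i) = (j, false) ∧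
        ¬ ∃ s m', Reach E s m' ((nxt⁻¹ ^ m) i) := by
      intro m
      induction m with
      | zero => exact ⟨by simpa using h1, by simpa [h2] using hc⟩
      | succ m ih =>
        obtain ⟨c', ⟨i', ⟨e1, e2, e3⟩ | ⟨e1, e2, e3⟩⟩, hc'⟩ := hpred _ ih.2
        · simp only [id] at e2 e3
          rw [e3, ih.1] at e1
          simp at e1
        · simp only [id] at e2 e3
          have : (nxt⁻¹ ^ (m + 1)) i = i' := by
            rw [pow_succ', Perm.mul_apply, Perm.inv_eq_iff_eq, e3]
          rw [this]
          refine ⟨e1, ?_⟩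
          rw [e2]
          exact hc'
    obtain ⟨m, hm⟩ := hg.bwd i j
    exact hm (by rw [(key m).1])

lemma GoodWord.sum_card_target [Fintype I] (hg : GoodWord nxt lab B) :
    ∑ j, Fintype.card {b : I // ∃ a, EdgeRel nxt lab (id : I → I) j a b} = Fintype.card I := by
  have h1 : ∀ j, Fintype.card {b : I // ∃ a, EdgeRel nxt lab (id : I → I) j a b} =
      (univ.filter fun i => (lab i).1 = j).card := by
    intro j
    rw [Fintype.card_subtype]
    symm
    refine card_bij (fun i _ => if (lab i).2 then i else nxt i) ?_ ?_ ?_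
    · intro i hi
      simp only [mem_filter, mem_univ, true_and] at hi ⊢
      rcases hl : lab i with ⟨j', _ | _⟩ <;> rw [hl] at hi <;> simp only at hi <;> subst hi
      · exact ⟨i, i, Or.inr ⟨hl, rfl, rfl⟩⟩
      · exact ⟨nxt i, i, Or.inl ⟨hl, rfl, rfl⟩⟩
    · intro i hi i' hi' h
      simp only [mem_filter, mem_univ, true_and] at hi hi'
      rcases hl : lab i with ⟨j₁, _ | _⟩ <;> rcases hl' : lab i' with ⟨j₂, _ | _⟩ <;>
        rw [hl] at hi <;> rw [hl'] at hi' <;> simp only at hi hi' <;> subst hi <;> subst hi' <;>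
        simp only [hl, hl', if_true, Bool.false_eq_true, if_false] at h
      · exact nxt.injective h
      · exact absurd (by rw [h, hl', hl]; simp [linv]) (hg.reduced i)
      · exact absurd (by rw [← h, hl', hl]; simp [linv]) (hg.reduced i')
      · exact h
    · intro b hb
      simp only [mem_filter, mem_univ, true_and] at hb
      obtain ⟨a, i, ⟨e1, e2, e3⟩ | ⟨e1, e2, e3⟩⟩ := hb
      · exact ⟨i, by simp [e1], by simpa [e1] using e3⟩
      · exact ⟨i, by simp [e1], by simpa [e1] using e3⟩
  simp_rw [h1]
  rw [← card_eq_sum_card_fiberwise (s := univ) (t := univ) (f := fun i => (lab i).1)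
    (fun _ _ => by simp), card_univ]

/-- The half-edges of the graph traced by `f`: a vertex together with a letter leaving it. -/
def halfEdges [Fintype I] {n : ℕ} (nxt : Perm I) (lab : I → Fin k × Bool) (f : I → Fin n) :
    Finset (Fin n × (Fin k × Bool)) :=
  univ.image (fun i => (f i, lab i)) ∪ univ.image (fun i => (f (nxt i), linv (lab i)))

lemma mem_halfEdges [Fintype I] {n : ℕ} {f : I → Fin n} {x : Fin n} {l : Fin k × Bool} :
    (x, l) ∈ halfEdges nxt lab f ↔
      ∃ i, (f i = x ∧ lab i = l) ∨ (f (nxt i) = x ∧ linv (lab i) = l) := by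
  simp only [halfEdges, mem_union, mem_image, mem_univ, true_and, Prod.mk.injEq, exists_or]

/-- Each edge of the traced graph consists of two half-edges. -/
lemma card_halfEdges [Fintype I] {n : ℕ} {σ : Fin k → Perm (Fin n)} {f : I → Fin n}
    (hf : IsWalk nxt lab σ f) :
    (halfEdges nxt lab f).card = 2 * ∑ j, Fintype.card {b : {x // x ∈ univ.image f} //
      ∃ a, EdgeRel nxt lab (fun i => (⟨f i, mem_image_of_mem f (mem_univ i)⟩ :
        {x // x ∈ univ.image f})) j a b} := by
  have hsymm : ∀ x j, (x, (j, false)) ∈ halfEdges nxt lab f ↔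
      (σ j x, (j, true)) ∈ halfEdges nxt lab f := by
    intro x j
    rw [mem_halfEdges, mem_halfEdges]
    refine exists_congr fun i => ?_
    have h := hf i
    rcases hl : lab i with ⟨j', _ | _⟩
    · simp only [hl, act, cond_false, Perm.inv_eq_iff_eq] at h
      simp only [Prod.mk.injEq, and_true, linv, Bool.not_false, Bool.true_eq_false,
        Bool.false_eq_true, and_false, or_false, false_or]
      constructor
      · rintro ⟨rfl, rfl⟩; exact ⟨h, rfl⟩
      · rintro ⟨h2, rfl⟩; exact ⟨(σ j').injective (h.symm.trans h2), rfl⟩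
    · simp only [hl, act, cond_true] at h
      simp only [Prod.mk.injEq, and_true, linv, Bool.not_true, Bool.true_eq_false,
        Bool.false_eq_true, and_false, or_false, false_or]
      constructor
      · rintro ⟨rfl, rfl⟩; exact ⟨h.symm, rfl⟩
      · rintro ⟨h2, rfl⟩; exact ⟨(σ j').injective (h.trans h2), rfl⟩
  have htrue : ∀ j, (univ.filter fun x => (x, (j, true)) ∈ halfEdges nxt lab f).card =
      Fintype.card {b : {x // x ∈ univ.image f} //
      ∃ a, EdgeRel nxt lab (fun i => (⟨f i, mem_image_of_mem f (mem_univ i)⟩ :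
        {x // x ∈ univ.image f})) j a b} := by
    intro j
    rw [Fintype.card_subtype]
    symm
    refine card_bij (fun b _ => b.1) ?_ (fun _ _ _ _ h => Subtype.ext h) ?_
    · intro b hb
      simp only [mem_filter, mem_univ, true_and, mem_halfEdges] at hb ⊢
      obtain ⟨a, i, ⟨e1, e2, e3⟩ | ⟨e1, e2, e3⟩⟩ := hb
      · exact ⟨i, Or.inl ⟨congrArg Subtype.val e3, e1⟩⟩
      · exact ⟨i, Or.inr ⟨congrArg Subtype.val e3, by simp [e1, linv]⟩⟩
    · intro x hx
      simp only [mem_filter, mem_univ, true_and, mem_halfEdges] at hx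
      obtain ⟨i, ⟨e1, e2⟩ | ⟨e1, e2⟩⟩ := hx
      · refine ⟨⟨x, by rw [← e1]; exact mem_image_of_mem f (mem_univ i)⟩, ?_, rfl⟩
        simp only [mem_filter, mem_univ, true_and]
        exact ⟨_, i, Or.inl ⟨e2, rfl, Subtype.ext e1⟩⟩
      · refine ⟨⟨x, by rw [← e1]; exact mem_image_of_mem f (mem_univ _)⟩, ?_, rfl⟩
        simp only [mem_filter, mem_univ, true_and]
        have e3 : lab i = (j, false) := by rw [← linv_linv (lab i), e2]; simp [linv]
        exact ⟨_, i, Or.inr ⟨e3, rfl, Subtype.ext e1⟩⟩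
  have hfalse : ∀ j, (univ.filter fun x => (x, (j, false)) ∈ halfEdges nxt lab f).card =
      (univ.filter fun x => (x, (j, true)) ∈ halfEdges nxt lab f).card := by
    intro j
    refine card_bij (fun x _ => σ j x) ?_ (fun _ _ _ _ h => (σ j).injective h) ?_
    · intro x hx
      simpa [hsymm] using hx
    · intro y hy
      refine ⟨(σ j)⁻¹ y, ?_, by simp⟩
      simpa [hsymm] using hy
  rw [card_eq_sum_card_fiberwise (s := halfEdges nxt lab f) (t := univ) (f := Prod.snd)
    (fun _ _ => by simp), Fintype.sum_prod_type, mul_sum]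
  refine sum_congr rfl fun j _ => ?_
  have hfib : ∀ ε, (filter (fun a => a.2 = (j, ε)) (halfEdges nxt lab f)).card =
      (univ.filter fun x => (x, (j, ε)) ∈ halfEdges nxt lab f).card := by
    intro ε
    refine card_bij (fun a _ => a.1) ?_ ?_ ?_
    · rintro ⟨x, l⟩ ha
      simp only [mem_filter, mem_univ, true_and] at ha ⊢
      rw [← ha.2]; exact ha.1
    · rintro ⟨x, l⟩ ha ⟨x', l'⟩ ha' h
      simp only [mem_filter] at ha ha' h
      rw [h, ha.2, ha'.2]
    · intro x hx
      exact ⟨(x, (j, ε)), by simpa using hx, rfl⟩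
  rw [Fintype.sum_bool, hfib, hfib, hfalse, htrue, two_mul]

/-- Rigidity: if every vertex of the traced graph has degree two, then a walk which is injective
on base points is injective. -/
lemma GoodWord.injective_of_degree_two [Fintype I] (hg : GoodWord nxt lab B) {n : ℕ}
    {σ : Fin k → Perm (Fin n)} {f : I → Fin n} (hf : IsWalk nxt lab σ f) (hB : Set.InjOn f B)
    (hdeg : ∀ x ∈ univ.image f,
      (univ.filter fun l => (x, l) ∈ halfEdges nxt lab f).card = 2) :
    Function.Injective f := by
  have hpair : ∀ i, (univ.filter fun l => (f i, l) ∈ halfEdges nxt lab f) =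
      {lab i, linv (lab (nxt⁻¹ i))} := by
    intro i
    symm
    refine eq_of_subset_of_card_le ?_ ?_
    · intro l hl
      simp only [mem_filter, mem_univ, true_and, mem_halfEdges]
      simp only [mem_insert, mem_singleton] at hl
      rcases hl with rfl | rfl
      · exact ⟨i, Or.inl ⟨rfl, rfl⟩⟩
      · exact ⟨nxt⁻¹ i, Or.inr ⟨by simp, rfl⟩⟩
    · rw [hdeg _ (mem_image_of_mem f (mem_univ i)), card_pair]
      have := hg.reduced (nxt⁻¹ i)
      simpa using this
  have hred : ∀ i, lab i ≠ linv (lab (nxt⁻¹ i)) := fun i => by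
    simpa using hg.reduced (nxt⁻¹ i)
  have hdet : ∀ i i', f i = f i' → lab i = lab i' ∨
      lab i = linv (lab (nxt⁻¹ i')) := by
    intro i i' h
    have h1 := hpair i
    rw [h, hpair i'] at h1
    have : lab i ∈ ({lab i', linv (lab (nxt⁻¹ i'))} : Finset _) := by rw [h1]; simp
    simpa using this
  have hstep : ∀ i, f (nxt i) = (act σ (lab i))⁻¹ (f i) := fun i => by
    rw [Perm.eq_inv_iff_eq, hf i]
  intro i i' hii
  rcases hdet i i' hii with h | h
  · -- both positions are traversed in the same direction
    have key : ∀ m : ℕ, f ((nxt ^ m) i) = f ((nxt ^ m) i') ∧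
        lab ((nxt ^ m) i) = lab ((nxt ^ m) i') := by
      intro m
      induction m with
      | zero => exact ⟨hii, h⟩
      | succ m ih =>
        rw [pow_succ', Perm.mul_apply, Perm.mul_apply]
        have h1 : f (nxt ((nxt ^ m) i)) = f (nxt ((nxt ^ m) i')) := by
          rw [hstep, hstep, ih.1, ih.2]
        refine ⟨h1, (hdet _ _ h1).resolve_right fun h2 => ?_⟩
        have e : nxt⁻¹ (nxt ((nxt ^ m) i')) = (nxt ^ m) i' := by simp
        rw [e, ← ih.2] at h2
        exact hg.reduced _ h2
    obtain ⟨m, hm1, hm2⟩ := hg.prim i i' fun m => (key m).2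
    exact (nxt ^ m).injective (hB hm1 hm2 (key m).1)
  · -- the two positions are traversed in opposite directions
    exfalso
    have key : ∀ m : ℕ, f ((nxt ^ m) i) = f ((nxt⁻¹ ^ m) i') ∧
        lab ((nxt ^ m) i) = linv (lab ((nxt⁻¹ ^ (m + 1)) i')) := by
      intro m
      induction m with
      | zero => exact ⟨hii, by simpa using h⟩
      | succ m ih =>
        rw [pow_succ' nxt, Perm.mul_apply]
        have h1 : f (nxt ((nxt ^ m) i)) = f ((nxt⁻¹ ^ (m + 1)) i') := by
          have e : nxt ((nxt⁻¹ ^ (m + 1)) i') = (nxt⁻¹ ^ m) i' := by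
            rw [pow_succ', Perm.mul_apply]; simp
          rw [hstep, ih.1, ih.2, act_linv, inv_inv, ← hf ((nxt⁻¹ ^ (m + 1)) i'), e]
        refine ⟨h1, ?_⟩
        rcases hdet _ _ h1 with h2 | h2
        · rw [← linv_linv (lab ((nxt⁻¹ ^ (m + 1)) i')), ← ih.2] at h2
          exact absurd h2 (hg.reduced _)
        · rw [h2, pow_succ' nxt⁻¹ (m + 1), Perm.mul_apply]
    exact hg.norev i i' fun m => (key m).2

/-- Negative Euler characteristic: the graph traced by a non-injective walk which is injective on
base points has more edges than vertices. -/
lemma GoodWord.card_lt_edges [Fintype I] (hg : GoodWord nxt lab B) {n : ℕ}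
    {σ : Fin k → Perm (Fin n)} {f : I → Fin n} (hf : IsWalk nxt lab σ f) (hB : Set.InjOn f B)
    (hinj : ¬ Function.Injective f) :
    (univ.image f).card < ∑ j, Fintype.card {b : {x // x ∈ univ.image f} //
      ∃ a, EdgeRel nxt lab (fun i => (⟨f i, mem_image_of_mem f (mem_univ i)⟩ :
        {x // x ∈ univ.image f})) j a b} := by
  by_contra! hle
  refine hinj (hg.injective_of_degree_two hf hB ?_)
  have h2 : ∀ x ∈ univ.image f,
      2 ≤ (univ.filter fun l => (x, l) ∈ halfEdges nxt lab f).card := by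
    intro x hx
    obtain ⟨i, _, rfl⟩ := mem_image.1 hx
    have : ({lab i, linv (lab (nxt⁻¹ i))} : Finset _) ⊆
        univ.filter fun l => (f i, l) ∈ halfEdges nxt lab f := by
      intro l hl
      simp only [mem_filter, mem_univ, true_and, mem_halfEdges]
      simp only [mem_insert, mem_singleton] at hl
      rcases hl with rfl | rfl
      · exact ⟨i, Or.inl ⟨rfl, rfl⟩⟩
      · exact ⟨nxt⁻¹ i, Or.inr ⟨by simp, rfl⟩⟩
    refine le_trans (le_of_eq ?_) (card_le_card this)
    rw [card_pair]
    simpa using hg.reduced (nxt⁻¹ i)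
  have hsum : (halfEdges nxt lab f).card =
      ∑ x ∈ univ.image f, (univ.filter fun l => (x, l) ∈ halfEdges nxt lab f).card := by
    rw [card_eq_sum_card_fiberwise (s := halfEdges nxt lab f) (t := univ.image f) (f := Prod.fst)]
    · refine sum_congr rfl fun x _ => ?_
      refine card_bij (fun a _ => a.2) ?_ ?_ ?_
      · rintro ⟨x, l⟩ ha
        simp only [mem_filter, mem_univ, true_and] at ha ⊢
        rw [← ha.2]; exact ha.1
      · rintro ⟨x, l⟩ ha ⟨x', l'⟩ ha' h
        simp only [mem_filter] at ha ha' h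
        rw [h, ha.2, ha'.2]
      · intro l hl
        exact ⟨(x, l), by simpa using hl, rfl⟩
    · rintro ⟨x, l⟩ h
      obtain ⟨i, ⟨rfl, _⟩ | ⟨rfl, _⟩⟩ := mem_halfEdges.1 h <;> simp
  have heq : ∑ x ∈ univ.image f, 2 =
      ∑ x ∈ univ.image f, (univ.filter fun l => (x, l) ∈ halfEdges nxt lab f).card := by
    refine le_antisymm (sum_le_sum h2) ?_
    rw [← hsum, card_halfEdges hf, sum_const, smul_eq_mul, mul_comm]
    exact Nat.mul_le_mul_right _ hle
  exact fun x hx => ((sum_eq_sum_iff_of_le h2).1 heq x hx).symm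

end Walks

/-! ### Expected number of closed walks -/

section WalkLimit
open Finset Equiv Topology
open scoped Classical

variable {k : ℕ} {I : Type} {nxt : Perm I} {lab : I → Fin k × Bool} {B : Set I}

/-- The probability that the map `f` is a homomorphism. -/
def homProb {n : ℕ} {X : Type} (q : Perm (Fin n) → ℝ) (E : X → X → Prop) (f : X → Fin n) : ℝ :=
  ∑ σ, if IsHom E σ f then q σ else 0

/-- Independence: the probability that `f ∘ g` is a walk factors over the generators. -/
lemma sum_isWalk {n : ℕ} (p : Fin k → Perm (Fin n) → ℝ) {X : Type} (g : I → X) (f : X → Fin n) :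
    ∑ σ : Fin k → Perm (Fin n), (if IsWalk nxt lab σ (f ∘ g) then ∏ j, p j (σ j) else 0) =
      ∏ j, homProb (p j) (EdgeRel nxt lab g j) f := by
  unfold homProb
  rw [prod_univ_sum, Fintype.piFinset_univ]
  refine sum_congr rfl fun σ _ => ?_
  rw [isWalk_iff]
  split_ifs with h
  · exact prod_congr rfl fun j _ => (if_pos (h j)).symm
  · push Not at h
    obtain ⟨j, hj⟩ := h
    exact (prod_eq_zero (mem_univ j) (if_neg hj)).symm

lemma sum_mul_card_isWalk [Fintype I] {n : ℕ} (p : Fin k → Perm (Fin n) → ℝ) :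
    ∑ σ : Fin k → Perm (Fin n), (∏ j, p j (σ j)) *
        (Nat.card {f : I → Fin n // IsWalk nxt lab σ f ∧ Set.InjOn f B} : ℝ) =
      ∑ h : I ↪ Fin n, ∏ j, homProb (p j) (EdgeRel nxt lab id j) h +
      ∑ f ∈ univ.filter (fun f : I → Fin n => ¬ Function.Injective f ∧ Set.InjOn f B),
        ∑ σ : Fin k → Perm (Fin n), (if IsWalk nxt lab σ f then ∏ j, p j (σ j) else 0) := by
  have h1 : ∀ σ : Fin k → Perm (Fin n), (∏ j, p j (σ j)) *
      (Nat.card {f : I → Fin n // IsWalk nxt lab σ f ∧ Set.InjOn f B} : ℝ) =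
      ∑ f ∈ univ.filter (fun f : I → Fin n => Set.InjOn f B),
        if IsWalk nxt lab σ f then ∏ j, p j (σ j) else 0 := by
    intro σ
    rw [Nat.card_eq_fintype_card, Fintype.card_subtype, ← sum_filter, sum_const, nsmul_eq_mul,
      mul_comm, filter_filter]
    simp_rw [and_comm]
  simp_rw [h1]
  rw [sum_comm, ← sum_filter_add_sum_filter_not _ (fun f : I → Fin n => Function.Injective f)]
  congr 1
  · rw [filter_filter]
    refine sum_bij' (fun f hf => ⟨f, (mem_filter.1 hf).2.2⟩) (fun h _ => h) ?_ ?_ ?_ ?_ ?_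
    · intros; simp
    · intro h _
      simp [h.injective, h.injective.injOn]
    · intros; rfl
    · intros; rfl
    · intro f hf
      exact sum_isWalk p id f
  · rw [filter_filter]
    simp_rw [and_comm]

lemma Adm.homProb_eq {q : (n : ℕ) → Perm (Fin n) → ℝ} (hq : Adm q) {n : ℕ} {V : Type} [Fintype V]
    (hn : Fintype.card V ≤ n) (E : V → V → Prop) (h : V ↪ Fin n) :
    homProb (q n) E h = (∑ σ, q n σ * (Fintype.card {h : V ↪ Fin n // IsHom E σ h} : ℝ)) /
      (n.descFactorial (Fintype.card V) : ℝ) := by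
  rw [eq_div_iff, homProb, sum_isHom_mul_descFactorial _ (hq.conj n)]
  exact_mod_cast (Nat.pos_of_ne_zero fun h0 => by
    rw [Nat.descFactorial_eq_zero_iff_lt] at h0; omega).ne'

/-- The injective walks contribute `1` in the limit. -/
lemma GoodWord.tendsto_injective [Fintype I] (hg : GoodWord nxt lab B)
    {p : (n : ℕ) → Fin k → Perm (Fin n) → ℝ} (hp : ∀ j, Adm fun n => p n j) :
    Tendsto (fun n => ∑ h : I ↪ Fin n, ∏ j, homProb (p n j) (EdgeRel nxt lab id j) h)
      atTop (𝓝 1) := by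
  set N := Fintype.card I
  let G : ℕ → Fin k → ℝ := fun n j => ∑ σ, p n j σ *
    (Fintype.card {h : I ↪ Fin n // IsHom (EdgeRel nxt lab (id : I → I) j) σ h} : ℝ)
  let S : Fin k → ℕ := fun j => Fintype.card {b : I // ∀ a, ¬ EdgeRel nxt lab (id : I → I) j a b}
  have hG : ∀ j, Tendsto (fun n => G n j / (n : ℝ) ^ S j) atTop (𝓝 1) := fun j =>
    (hp j).tendsto_embedding _ (hg.edge_fun j) (hg.edge_inj j) (hg.edge_acyclic j)
  have hS : N + ∑ j, S j = k * N := by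
    have h1 : ∀ j, Fintype.card {b : I // ∃ a, EdgeRel nxt lab (id : I → I) j a b} + S j = N := by
      intro j
      have := Fintype.card_subtype_compl fun b : I => ∃ a, EdgeRel nxt lab (id : I → I) j a b
      have h2 := Fintype.card_subtype_le fun b : I => ∃ a, EdgeRel nxt lab (id : I → I) j a b
      simp only [not_exists] at this
      simp only [S, N]
      omega
    have h3 := hg.sum_card_target
    calc N + ∑ j, S j = ∑ j : Fin k,
          (Fintype.card {b : I // ∃ a, EdgeRel nxt lab (id : I → I) j a b} + S j) := by
          rw [sum_add_distrib, h3]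
      _ = k * N := by simp [h1]
  have hlim : Tendsto (fun n : ℕ => ((n.descFactorial N : ℝ) / (n : ℝ) ^ N) *
      (∏ j, G n j / (n : ℝ) ^ S j) / ((n.descFactorial N : ℝ) / (n : ℝ) ^ N) ^ k)
      atTop (𝓝 (1 * (∏ j : Fin k, (1 : ℝ)) / 1 ^ k)) :=
    ((tendsto_descFactorial_div N).mul (tendsto_finsetProd _ fun j _ => hG j)).div
      ((tendsto_descFactorial_div N).pow k) (by simp)
  simp only [prod_const_one, mul_one, one_pow, div_one] at hlim
  refine hlim.congr' ?_
  filter_upwards [eventually_ge_atTop N, eventually_gt_atTop 0] with n hn hn0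
  have hn0' : (n : ℝ) ≠ 0 := by positivity
  have h1 : ∀ h : I ↪ Fin n, ∏ j, homProb (p n j) (EdgeRel nxt lab id j) h =
      ∏ j, G n j / (n.descFactorial N : ℝ) := fun h =>
    prod_congr rfl fun j _ => (hp j).homProb_eq hn _ h
  have hd : (n.descFactorial N : ℝ) ≠ 0 := by
    exact_mod_cast (Nat.pos_of_ne_zero fun h0 => by
      rw [Nat.descFactorial_eq_zero_iff_lt] at h0; omega).ne'
  rw [sum_congr rfl fun h _ => h1 h, sum_const, card_univ, Fintype.card_embedding_eq,
    Fintype.card_fin, nsmul_eq_mul, prod_div_distrib, prod_div_distrib, prod_const, card_univ,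
    Fintype.card_fin, prod_pow_eq_pow_sum, div_pow, ← pow_mul, mul_comm N k, ← hS, pow_add]
  field_simp
  exact mul_comm _ _

/-- The non-injective walks that are injective on base points are negligible. -/
lemma GoodWord.tendsto_noninjective [Fintype I] (hg : GoodWord nxt lab B)
    {p : (n : ℕ) → Fin k → Perm (Fin n) → ℝ} (hp : ∀ j, Adm fun n => p n j) :
    Tendsto (fun n =>
      ∑ f ∈ univ.filter (fun f : I → Fin n => ¬ Function.Injective f ∧ Set.InjOn f B),
        ∑ σ : Fin k → Perm (Fin n), (if IsWalk nxt lab σ f then ∏ j, p n j (σ j) else 0))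
      atTop (𝓝 0) := by
  choose C hC0 hC using fun j => (hp j).isHom_le (Fintype.card I)
  obtain ⟨K, hK0, hK⟩ := sum_card_image_le I
  have hlim : Tendsto (fun n : ℕ => (∏ j, C j) * K / n) atTop (𝓝 0) :=
    tendsto_const_div_atTop_nhds_zero_nat _
  refine squeeze_zero' (Eventually.of_forall fun n => ?_) ?_ hlim
  · refine sum_nonneg fun f _ => sum_nonneg fun σ _ => ?_
    split_ifs
    exacts [prod_nonneg fun j _ => (hp j).nonneg n _, le_rfl]
  filter_upwards [eventually_all.2 hC, eventually_gt_atTop 0] with n hn hn0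
  have hn0' : (0 : ℝ) < n := Nat.cast_pos.2 hn0
  have hn1 : (1 : ℝ) ≤ n := by exact_mod_cast hn0
  have key : ∀ f ∈ univ.filter (fun f : I → Fin n => ¬ Function.Injective f ∧ Set.InjOn f B),
      ∑ σ : Fin k → Perm (Fin n), (if IsWalk nxt lab σ f then ∏ j, p n j (σ j) else 0) ≤
        (∏ j, C j) / n * ((n : ℝ) ^ (univ.image f).card)⁻¹ := by
    intro f hf
    obtain ⟨hinj, hB⟩ := (mem_filter.1 hf).2
    by_cases hw : ∃ σ, IsWalk nxt lab σ f
    · obtain ⟨σ, hσ⟩ := hw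
      let g : I → {x // x ∈ univ.image f} := fun i => ⟨f i, mem_image_of_mem f (mem_univ i)⟩
      let e : {x // x ∈ univ.image f} ↪ Fin n := Function.Embedding.subtype _
      have hfg : f = e ∘ g := rfl
      have hlt := hg.card_lt_edges hσ hB hinj
      have h1 := sum_isWalk (nxt := nxt) (lab := lab) (p n) g e
      rw [← hfg] at h1
      rw [h1]
      calc ∏ j, homProb (p n j) (EdgeRel nxt lab g j) e
          ≤ ∏ j, (C j * ((n : ℝ) ^ Fintype.card {b : {x // x ∈ univ.image f} //
              ∃ a, EdgeRel nxt lab g j a b})⁻¹) := by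
            refine prod_le_prod (fun j _ => sum_nonneg fun σ _ => ?_) fun j _ => ?_
            · split_ifs
              exacts [(hp j).nonneg n _, le_rfl]
            · refine hn j _ _ e ?_
              rw [Fintype.card_coe]
              exact card_image_le
        _ = (∏ j, C j) * ((n : ℝ) ^ ∑ j, Fintype.card {b : {x // x ∈ univ.image f} //
              ∃ a, EdgeRel nxt lab g j a b})⁻¹ := by
            rw [prod_mul_distrib, prod_inv_distrib, prod_pow_eq_pow_sum]
        _ ≤ (∏ j, C j) * ((n : ℝ) ^ ((univ.image f).card + 1))⁻¹ := by
            refine mul_le_mul_of_nonneg_left ?_ (prod_nonneg fun j _ => hC0 j)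
            exact inv_anti₀ (by positivity) (pow_le_pow_right₀ hn1 hlt)
        _ = _ := by
            rw [pow_succ, mul_inv]; ring
    · rw [sum_eq_zero fun σ _ => if_neg fun h => hw ⟨σ, h⟩]
      have := prod_nonneg fun j (_ : j ∈ univ) => hC0 j
      positivity
  calc _ ≤ ∑ f ∈ univ.filter (fun f : I → Fin n => ¬ Function.Injective f ∧ Set.InjOn f B),
        (∏ j, C j) / n * ((n : ℝ) ^ (univ.image f).card)⁻¹ := sum_le_sum key
    _ ≤ ∑ f : I → Fin n, (∏ j, C j) / n * ((n : ℝ) ^ (univ.image f).card)⁻¹ := by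
        refine sum_le_sum_of_subset_of_nonneg (subset_univ _) fun f _ _ => ?_
        have := prod_nonneg fun j (_ : j ∈ univ) => hC0 j
        positivity
    _ ≤ (∏ j, C j) / n * K := by
        rw [← mul_sum]
        have := prod_nonneg fun j (_ : j ∈ univ) => hC0 j
        exact mul_le_mul_of_nonneg_left (hK n hn0) (by positivity)
    _ = _ := by ring

/-- The expected number of walks that are injective on base points tends to `1`. -/
lemma GoodWord.tendsto_walks [Fintype I] (hg : GoodWord nxt lab B)
    {p : (n : ℕ) → Fin k → Perm (Fin n) → ℝ} (hp : ∀ j, Adm fun n => p n j) :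
    Tendsto (fun n => ∑ σ : Fin k → Perm (Fin n), (∏ j, p n j (σ j)) *
        (Nat.card {f : I → Fin n // IsWalk nxt lab σ f ∧ Set.InjOn f B} : ℝ))
      atTop (𝓝 1) := by
  simp_rw [sum_mul_card_isWalk]
  simpa using (hg.tendsto_injective hp).add (hg.tendsto_noninjective hp)

end WalkLimit

/-! ### Primitive cyclic words -/

section CyclicWord
open Finset Equiv
open scoped Classical

variable {k : ℕ}

/-- A primitive cyclically reduced cyclic word, involving at least two generators. -/
structure CycWord {r : ℕ} (W : ZMod r → Fin k × Bool) : Prop where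
  reduced : ∀ x, W (x + 1) ≠ linv (W x)
  two : ∀ j, ∃ x, (W x).1 ≠ j
  prim : ∀ s, Function.Periodic W s → s = 0

/-- Every position of a cyclic word is reached from any other one by moving forwards. -/
lemma exists_add_natCast {r : ℕ} [NeZero r] (x y : ZMod r) : ∃ m : ℕ, x + m = y :=
  ⟨(y - x).val, by rw [ZMod.natCast_zmod_val]; ring⟩

lemma CycWord.norev {r : ℕ} [NeZero r] {W : ZMod r → Fin k × Bool} (hW : CycWord W) (c : ZMod r) :
    ¬ ∀ x, W x = linv (W (c - x)) := by
  intro h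
  rcases Nat.even_or_odd' c.val with ⟨y, hy | hy⟩
  · have hc : c = 2 * y := by
      rw [← ZMod.natCast_zmod_val c, hy]; push_cast; ring
    have := h y
    rw [hc, show (2 : ZMod r) * y - y = y by ring] at this
    exact linv_ne _ this.symm
  · have hc : c = 2 * y + 1 := by
      rw [← ZMod.natCast_zmod_val c, hy]; push_cast; ring
    have := h (y + 1)
    rw [hc, show (2 : ZMod r) * y + 1 - (y + 1) = y by ring] at this
    exact hW.reduced _ this

variable {T : Type} (r : ℕ) (ℓ : T → ℕ)

/-- The positions of a family of cyclic words of lengths `r * ℓ t`. -/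
abbrev Pos : Type := Σ t : T, ZMod (r * ℓ t)

/-- The next position. -/
def nextPos : Perm (Pos r ℓ) := Equiv.sigmaCongrRight fun _ => Equiv.addRight 1

variable {r ℓ}

/-- Reduction of a position modulo the length `r` of the base word. -/
def resPos (x : Pos r ℓ) : ZMod r := ZMod.castHom (Dvd.intro (ℓ x.1) rfl) (ZMod r) x.2

lemma nextPos_pow (x : Pos r ℓ) (m : ℕ) : (nextPos r ℓ ^ m) x = ⟨x.1, x.2 + m⟩ := by
  induction m with
  | zero => simp
  | succ m ih =>
    rw [pow_succ', Perm.mul_apply, ih]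
    simp [nextPos, add_assoc]

lemma nextPos_inv_pow (x : Pos r ℓ) (m : ℕ) : ((nextPos r ℓ)⁻¹ ^ m) x = ⟨x.1, x.2 - m⟩ := by
  rw [inv_pow, Perm.inv_eq_iff_eq, nextPos_pow]
  simp

lemma resPos_pow (x : Pos r ℓ) (m : ℕ) : resPos ((nextPos r ℓ ^ m) x) = resPos x + m := by
  rw [nextPos_pow]; simp [resPos]

lemma resPos_next (x : Pos r ℓ) : resPos (nextPos r ℓ x) = resPos x + 1 := by
  simpa using resPos_pow x 1

lemma resPos_inv_pow (x : Pos r ℓ) (m : ℕ) : resPos (((nextPos r ℓ)⁻¹ ^ m) x) = resPos x - m := by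
  rw [nextPos_inv_pow]; simp [resPos]

/-- The powers of a primitive cyclic word, with base points at the multiples of its length. -/
lemma CycWord.goodWord [NeZero r] {W : ZMod r → Fin k × Bool} (hW : CycWord W) :
    GoodWord (nextPos r ℓ) (fun x => W (resPos x)) {x | resPos x = 0} where
  reduced x := by
    simp only [resPos_next]
    exact hW.reduced _
  fwd x j := by
    obtain ⟨y, hy⟩ := hW.two j
    obtain ⟨m, rfl⟩ := exists_add_natCast (resPos x) y
    exact ⟨m, by rwa [resPos_pow]⟩
  bwd x j := by
    obtain ⟨y, hy⟩ := hW.two j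
    obtain ⟨m, hm⟩ := exists_add_natCast y (resPos x)
    refine ⟨m, ?_⟩
    rwa [resPos_inv_pow, ← hm, add_sub_cancel_right]
  prim x x' h := by
    simp only [resPos_pow] at h
    have hs : resPos x' - resPos x = 0 := by
      refine hW.prim _ fun y => ?_
      obtain ⟨m, rfl⟩ := exists_add_natCast (resPos x) y
      rw [h m]
      congr 1
      ring
    obtain ⟨m, hm⟩ := exists_add_natCast (resPos x) 0
    refine ⟨m, ?_, ?_⟩
    · simpa [resPos_pow] using hm
    · rw [sub_eq_zero] at hs
      simpa [resPos_pow, hs] using hm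
  norev x x' h := by
    simp only [resPos_pow, resPos_inv_pow] at h
    refine hW.norev (resPos x + resPos x' - 1) fun y => ?_
    obtain ⟨m, rfl⟩ := exists_add_natCast (resPos x) y
    rw [h m]
    congr 2
    push_cast
    ring

/-- The product of the first `m` letters of a cyclic word, evaluated in a monoid. -/
def wordProd {G : Type*} [Monoid G] (W : ZMod r → Fin k × Bool) (φ : Fin k × Bool → G) (m : ℕ) :
    G :=
  ((List.range m).map fun i : ℕ => φ (W i)).prod

section wordProd
variable {G : Type*} [Monoid G] {W : ZMod r → Fin k × Bool} {φ : Fin k × Bool → G}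

@[simp] lemma wordProd_zero : wordProd W φ 0 = 1 := by simp [wordProd]

lemma wordProd_succ (m : ℕ) : wordProd W φ (m + 1) = wordProd W φ m * φ (W m) := by
  simp [wordProd, List.range_succ]

lemma wordProd_add {g : ℕ} (hg : Function.Periodic W (g : ZMod r)) (m : ℕ) :
    wordProd W φ (g + m) = wordProd W φ g * wordProd W φ m := by
  induction m with
  | zero => simp
  | succ m ih =>
    rw [← add_assoc, wordProd_succ, ih, wordProd_succ, mul_assoc]
    congr 3
    rw [← hg m]
    push_cast
    rw [add_comm]

lemma wordProd_mul {g : ℕ} (hg : Function.Periodic W (g : ZMod r)) (q : ℕ) :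
    wordProd W φ (g * q) = wordProd W φ g ^ q := by
  induction q with
  | zero => simp
  | succ q ih => rw [Nat.mul_succ, add_comm, wordProd_add hg, ih, pow_succ']

lemma periodic_self : Function.Periodic W (r : ZMod r) := fun x => by simp

end wordProd

/-- The cyclic word attached to a list of letters. -/
def cycOfList (u : List (Fin k × Bool)) [NeZero u.length] (x : ZMod u.length) : Fin k × Bool :=
  u[x.val]'(ZMod.val_lt x)

lemma wordProd_cycOfList {G : Type*} [Monoid G] (u : List (Fin k × Bool)) [NeZero u.length]
    (φ : Fin k × Bool → G) : wordProd (cycOfList u) φ u.length = (u.map φ).prod := by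
  unfold wordProd
  congr 1
  refine List.ext_getElem (by simp) fun i h1 h2 => ?_
  simp only [List.length_map, List.length_range] at h1
  simp [cycOfList, Nat.mod_eq_of_lt h1]

/-- If a reduced word is not a proper power and its first and last letters involve different
generators, its cyclic word is primitive. -/
lemma cycWord_of_not_power {u : List (Fin k × Bool)} (hred : FreeGroup.IsReduced u)
    (hΩ : ¬ ∃ (Ω' : FreeGroup (Fin k)) (e : ℕ), 2 ≤ e ∧ FreeGroup.mk u = Ω' ^ e)
    (hends : ∀ a b : Fin k × Bool, u.head? = some a → u.getLast? = some b → a.1 ≠ b.1)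
    [NeZero u.length] : CycWord (cycOfList u) := by
  have hr := NeZero.pos u.length
  have hfl : (u[0]'hr).1 ≠ (u[u.length - 1]'(by omega)).1 := by
    refine hends _ _ ?_ ?_
    · rw [List.head?_eq_getElem?, List.getElem?_eq_getElem hr]
    · rw [List.getLast?_eq_getElem?, List.getElem?_eq_getElem]
  have hr2 : 2 ≤ u.length := by
    by_contra hlt
    have : u.length - 1 = 0 := by omega
    simp [this] at hfl
  have : Fact (1 < u.length) := ⟨hr2⟩
  refine ⟨fun x => ?_, fun j => ?_, fun s hs => ?_⟩
  · unfold cycOfList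
    rcases Nat.lt_or_ge (x.val + 1) u.length with hx | hx
    · have hv : (x + 1).val = x.val + 1 := by
        rw [ZMod.val_add_of_lt] <;> rw [ZMod.val_one]
        exact hx
      have := List.isChain_iff_getElem.1 hred x.val hx
      simp only [hv]
      intro h
      rw [h] at this
      simp [linv] at this
    · have hlt := ZMod.val_lt x
      have hv : (x + 1).val = 0 := by
        have : x + 1 = 0 := by
          rw [← ZMod.natCast_zmod_val x]
          have : ((x.val + 1 : ℕ) : ZMod u.length) = 0 := by
            rw [show x.val + 1 = u.length by omega]; simp
          exact_mod_cast this
        rw [this, ZMod.val_zero]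
      have hx' : x.val = u.length - 1 := by omega
      simp only [hv, hx']
      intro h
      rw [h] at hfl
      simp [linv] at hfl
  · by_contra! hc
    have e0 := hc 0
    have e1 := hc ((u.length - 1 : ℕ) : ZMod u.length)
    simp only [cycOfList, ZMod.val_zero, ZMod.val_natCast_of_lt (show u.length - 1 < u.length by omega)]
      at e0 e1
    exact hfl (e0.trans e1.symm)
  · by_contra hs0
    set g := Nat.gcd s.val u.length with hg
    have hsv : s.val ≠ 0 := fun h => hs0 ((ZMod.val_eq_zero s).1 h)
    have hgr : g ∣ u.length := Nat.gcd_dvd_right _ _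
    have hglt : g < u.length :=
      (Nat.le_of_dvd (Nat.pos_of_ne_zero hsv) (Nat.gcd_dvd_left _ _)).trans_lt (ZMod.val_lt s)
    obtain ⟨q, hq⟩ := hgr
    have hper : Function.Periodic (cycOfList u) (g : ZMod u.length) := by
      have h2 := congrArg (Int.cast : ℤ → ZMod u.length) (Nat.gcd_eq_gcd_ab s.val u.length)
      push_cast at h2
      rw [ZMod.natCast_zmod_val, ZMod.natCast_self, zero_mul, add_zero] at h2
      rw [hg, h2, mul_comm]
      exact hs.int_mul _
    refine hΩ ⟨wordProd (cycOfList u) (fun l => FreeGroup.mk [l]) g, q, ?_, ?_⟩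
    · by_contra! hq2
      interval_cases q <;> omega
    · rw [← wordProd_mul hper, ← hq, wordProd_cycOfList]
      have : ∀ L : List (Fin k × Bool),
          (L.map fun l => FreeGroup.mk [l]).prod = FreeGroup.mk L := by
        intro L
        induction L with
        | nil => rfl
        | cons a L ih => rw [List.map_cons, List.prod_cons, ih, FreeGroup.mul_mk]; rfl
      rw [this]

lemma lift_eq_wordProd (Ω : FreeGroup (Fin k)) [NeZero Ω.toWord.length] {n : ℕ}
    (σ : Fin k → Perm (Fin n)) :
    FreeGroup.lift σ Ω = wordProd (cycOfList Ω.toWord) (act σ) Ω.toWord.length := by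
  rw [wordProd_cycOfList]
  conv_lhs => rw [← FreeGroup.mk_toWord (x := Ω), FreeGroup.lift_mk]
  rfl

end CyclicWord

/-! ### Walks and cycles of the word permutation -/

section WalkTuples
open Finset Equiv
open scoped Classical

variable {k r : ℕ} [NeZero r] {T : Type} {ℓ : T → ℕ}

/-- Families of points of `τ` lying on different cycles of prescribed lengths. -/
def IsTransversal {n : ℕ} (τ : Perm (Fin n)) (ℓ : T → ℕ) (s : T → Fin n) : Prop :=
  (∀ t, cycLen τ (s t) = ℓ t) ∧ ∀ t t', τ.SameCycle (s t) (s t') → t = t'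

lemma IsWalk.wordProd_apply {n : ℕ} {W : ZMod r → Fin k × Bool} {σ : Fin k → Perm (Fin n)}
    {f : Pos r ℓ → Fin n} (hf : IsWalk (nextPos r ℓ) (fun x => W (resPos x)) σ f) (t : T) (m : ℕ) :
    wordProd W (act σ) m (f ⟨t, m⟩) = f ⟨t, 0⟩ := by
  induction m with
  | zero => simp
  | succ m ih =>
    rw [wordProd_succ, Perm.mul_apply, ← ih]
    congr 1
    have := hf ⟨t, m⟩
    simpa [resPos, nextPos] using this

lemma pow_apply_eq_iff {n : ℕ} (τ : Perm (Fin n)) {a b : ℕ} {x : Fin n} (ha : a < cycLen τ x)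
    (hb : b < cycLen τ x) (h : (τ ^ a)⁻¹ x = (τ ^ b)⁻¹ x) : a = b := by
  have h1 : (τ ^ b) x = (τ ^ a) x := by
    rw [Perm.inv_eq_iff_eq] at h
    have h2 := congrArg (τ ^ b) h
    rw [← Perm.mul_apply, (Commute.pow_pow (Commute.refl τ) b a).eq, Perm.mul_apply] at h2
    simpa using h2
  rw [← Perm.iterate_eq_pow, ← Perm.iterate_eq_pow] at h1
  exact (Function.iterate_injOn_Iio_minimalPeriod ha hb h1.symm)

/-- Recording the base points gives a bijection from the walks which are injective on base points
to the transversal families of the value of the word. -/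
lemma card_walks_eq {n : ℕ} (W : ZMod r → Fin k × Bool) (hℓ : ∀ t, 1 ≤ ℓ t)
    (σ : Fin k → Perm (Fin n)) :
    Nat.card {f : Pos r ℓ → Fin n // IsWalk (nextPos r ℓ) (fun x => W (resPos x)) σ f ∧
        Set.InjOn f {x | resPos x = 0}} =
      Nat.card {s : T → Fin n // IsTransversal (wordProd W (act σ) r) ℓ s} := by
  set τ := wordProd W (act σ) r with hτ
  have hr : 0 < r := NeZero.pos r
  have hpow : ∀ q, wordProd W (act σ) (r * q) = τ ^ q := fun q => wordProd_mul periodic_self q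
  have : ∀ t, NeZero (r * ℓ t) := fun t => ⟨(Nat.mul_pos hr (hℓ t)).ne'⟩
  have hres : ∀ (t : T) (q : ℕ), resPos (⟨t, ((r * q : ℕ) : ZMod (r * ℓ t))⟩ : Pos r ℓ) = 0 := by
    intro t q
    simp [resPos]
  refine Nat.card_eq_of_bijective
    (fun f => ⟨fun t => f.1 ⟨t, 0⟩, ?_, ?_⟩) ⟨?_, ?_⟩
  · intro t
    obtain ⟨f, hf, hB⟩ := f
    have hper : (τ ^ ℓ t) (f ⟨t, 0⟩) = f ⟨t, 0⟩ := by
      have := hf.wordProd_apply t (r * ℓ t)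
      rwa [hpow, ZMod.natCast_self] at this
    have hp : Function.IsPeriodicPt τ (ℓ t) (f ⟨t, 0⟩) := by
      rw [Function.IsPeriodicPt, Function.IsFixedPt, Perm.iterate_eq_pow, hper]
    refine le_antisymm (hp.minimalPeriod_le (hℓ t)) ?_
    have hm0 := cycLen_pos τ (f ⟨t, 0⟩)
    set m := cycLen τ (f ⟨t, 0⟩) with hm
    have h1 : (τ ^ m) (f ⟨t, 0⟩) = f ⟨t, 0⟩ := by
      rw [← Perm.iterate_eq_pow, hm]
      exact Function.iterate_minimalPeriod
    have h2 := hf.wordProd_apply t (r * m)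
    rw [hpow] at h2
    have h3 : (⟨t, ((r * m : ℕ) : ZMod (r * ℓ t))⟩ : Pos r ℓ) = ⟨t, 0⟩ :=
      hB (hres t m) (by simp [resPos]) ((τ ^ m).injective (h2.trans h1.symm))
    simp only [Sigma.mk.injEq, heq_eq_eq, true_and] at h3
    exact Nat.le_of_mul_le_mul_left
      (Nat.le_of_dvd (Nat.mul_pos hr hm0) ((ZMod.natCast_eq_zero_iff _ _).1 h3)) hr
  · intro t t' h
    obtain ⟨f, hf, hB⟩ := f
    obtain ⟨q, -, hq⟩ := h.symm.exists_pow_eq'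
    have h2 := hf.wordProd_apply t (r * q)
    rw [hpow] at h2
    have h3 := hB (hres t q) (show resPos (⟨t', 0⟩ : Pos r ℓ) = 0 by simp [resPos])
      ((τ ^ q).injective (h2.trans hq.symm))
    simp only [Sigma.mk.injEq] at h3
    exact h3.1
  · rintro ⟨f, hf, hB⟩ ⟨f', hf', hB'⟩ h
    refine Subtype.ext (funext fun ⟨t, z⟩ => ?_)
    have h1 := hf.wordProd_apply t z.val
    have h2 := hf'.wordProd_apply t z.val
    rw [ZMod.natCast_zmod_val] at h1 h2
    refine (wordProd W (act σ) z.val).injective ?_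
    rw [h1, h2]
    exact congrFun (congrArg Subtype.val h) t
  · rintro ⟨s, hs, hs'⟩
    have hper : ∀ t, (τ ^ ℓ t) (s t) = s t := fun t => by
      rw [← Perm.iterate_eq_pow, ← hs t]
      exact Function.iterate_minimalPeriod
    refine ⟨⟨fun x => (wordProd W (act σ) x.2.val)⁻¹ (s x.1), ?_, ?_⟩, ?_⟩
    · rintro ⟨t, z⟩
      have hlt := ZMod.val_lt z
      have hz : resPos (⟨t, z⟩ : Pos r ℓ) = (z.val : ZMod r) := by
        rw [resPos]
        conv_lhs => rw [← ZMod.natCast_zmod_val z]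
        simp
      have hsucc : (wordProd W (act σ) (z.val + 1))⁻¹ =
          (act σ (W (z.val : ZMod r)))⁻¹ * (wordProd W (act σ) z.val)⁻¹ := by
        rw [wordProd_succ, mul_inv_rev]
      have key : (wordProd W (act σ) (z + 1).val)⁻¹ (s t) =
          (wordProd W (act σ) (z.val + 1))⁻¹ (s t) := by
        have hv : (z + 1).val = (z.val + 1) % (r * ℓ t) := by
          rw [← ZMod.val_natCast]
          push_cast
          rw [ZMod.natCast_zmod_val]
        rcases Nat.lt_or_ge (z.val + 1) (r * ℓ t) with h | h
        · rw [hv, Nat.mod_eq_of_lt h]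
        · have h' : z.val + 1 = r * ℓ t := by omega
          rw [hv, h', Nat.mod_self, hpow, wordProd_zero, inv_one, Perm.one_apply, eq_comm,
            Perm.inv_eq_iff_eq, hper]
      change act σ (W (resPos ⟨t, z⟩)) ((wordProd W (act σ) (z + 1).val)⁻¹ (s t)) = _
      rw [key, hsucc, hz, Perm.mul_apply]
      simp
    · have hq : ∀ x : Pos r ℓ, resPos x = 0 → ∃ q < ℓ x.1, x.2.val = r * q := by
        rintro ⟨t, z⟩ hx
        have h0 : ((z.val : ℕ) : ZMod r) = 0 := by
          rw [← hx, resPos]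
          conv_rhs => rw [← ZMod.natCast_zmod_val z]
          simp
        obtain ⟨q, hq⟩ := (ZMod.natCast_eq_zero_iff _ _).1 h0
        exact ⟨q, Nat.lt_of_mul_lt_mul_left (hq ▸ ZMod.val_lt z), hq⟩
      rintro x hx x' hx' h
      obtain ⟨q, hql, hqe⟩ := hq x hx
      obtain ⟨q', hql', hqe'⟩ := hq x' hx'
      obtain ⟨t, z⟩ := x
      obtain ⟨t', z'⟩ := x'
      simp only at hql hqe hql' hqe' h
      rw [hqe, hqe', hpow, hpow] at h
      have ht : t = t' := by
        refine hs' t t' ?_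
        have h1 : τ.SameCycle (s t) ((τ ^ q)⁻¹ (s t)) := ⟨-q, by simp⟩
        have h2 : τ.SameCycle (s t') ((τ ^ q')⁻¹ (s t')) := ⟨-q', by simp⟩
        rw [h] at h1
        exact h1.trans h2.symm
      subst ht
      have : q = q' := pow_apply_eq_iff τ (by rwa [hs t]) (by rwa [hs t]) h
      subst this
      rw [ZMod.val_injective _ (hqe.trans hqe'.symm)]
    · simp

end WalkTuples

section CountTuples
open Finset Equiv
open scoped Classical

lemma isTransversal_cons {n : ℕ} (τ : Perm (Fin n)) (c e : ℕ) (x : Fin n) (s : Fin e → Fin n) :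
    IsTransversal τ (fun _ => c) (Fin.cons x s : Fin (e + 1) → Fin n) ↔
      IsTransversal τ (fun _ => c) s ∧ cycLen τ x = c ∧ ∀ t, ¬ τ.SameCycle (s t) x := by
  unfold IsTransversal
  simp only [Fin.forall_fin_succ, Fin.cons_zero, Fin.cons_succ, Fin.succ_inj, Fin.succ_ne_zero,
    (Fin.succ_ne_zero _).symm]
  constructor
  · rintro ⟨⟨h1, h2⟩, ⟨-, h3⟩, h4⟩
    exact ⟨⟨h2, fun t => (h4 t).2⟩, h1, fun t => (h4 t).1⟩
  · rintro ⟨⟨h1, h2⟩, h3, h4⟩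
    exact ⟨⟨h3, h1⟩, ⟨fun _ => trivial, fun t h => h4 t h.symm⟩, fun t => ⟨h4 t, h2 t⟩⟩

lemma card_transversal_const {n : ℕ} (τ : Perm (Fin n)) (c e : ℕ) :
    (univ.filter fun s : Fin e → Fin n => IsTransversal τ (fun _ => c) s).card =
      c ^ e * (cycCount τ c).descFactorial e := by
  induction e with
  | zero => simp [IsTransversal]
  | succ e ih =>
    rw [card_eq_sum_card_fiberwise (f := Fin.tail)
      (t := univ.filter fun s : Fin e → Fin n => IsTransversal τ (fun _ => c) s)]
    · have key : ∀ s ∈ univ.filter fun s : Fin e → Fin n => IsTransversal τ (fun _ => c) s,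
          ((univ.filter fun s : Fin (e + 1) → Fin n => IsTransversal τ (fun _ => c) s).filter
            fun s' => Fin.tail s' = s).card = c * (cycCount τ c - e) := by
        intro s hs
        have hs1 := (mem_filter.1 hs).2
        have h1 : ((univ.filter fun s : Fin (e + 1) → Fin n =>
            IsTransversal τ (fun _ => c) s).filter fun s' => Fin.tail s' = s).card =
            ((univ.filter fun x => cycLen τ x = c) \
              univ.biUnion fun t => univ.filter fun x => τ.SameCycle (s t) x).card := by
          refine card_bij' (fun s' _ => s' 0) (fun x _ => Fin.cons x s) ?_ ?_ ?_ ?_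
          · intro s' h
            simp only [mem_filter, mem_univ, true_and] at h
            obtain ⟨h, rfl⟩ := h
            rw [← Fin.cons_self_tail s', isTransversal_cons] at h
            simpa using h.2
          · intro x hx
            simp only [Finset.mem_sdiff, mem_filter, mem_univ, true_and, mem_biUnion, not_exists] at hx
            simp only [mem_filter, mem_univ, true_and, Fin.tail_cons, and_true]
            rw [isTransversal_cons]
            exact ⟨hs1, hx⟩
          · intro s' h
            simp only [mem_filter] at h
            rw [← h.2, Fin.cons_self_tail]
          · intros; simp
        have h2 : (univ.biUnion fun t => univ.filter fun x => τ.SameCycle (s t) x).card = e * c := by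
          rw [card_biUnion]
          · simp [card_sameCycle, hs1.1]
          · intro t _ t' _ htt
            rw [Function.onFun, disjoint_left]
            intro x hx hx'
            simp only [mem_filter, mem_univ, true_and] at hx hx'
            exact htt (hs1.2 _ _ (hx.trans hx'.symm))
        rw [h1, card_sdiff_of_subset, card_cycLen_eq, h2, Nat.mul_sub, mul_comm e]
        intro x hx
        simp only [mem_biUnion, mem_filter, mem_univ, true_and] at hx ⊢
        obtain ⟨t, ht⟩ := hx
        rw [← ht.cycLen_eq, hs1.1]
      rw [sum_congr rfl key, sum_const, ih, smul_eq_mul, Nat.descFactorial_succ, pow_succ]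
      ring
    · intro s hs
      simp only [coe_filter, mem_univ, true_and, Set.mem_ofPred_eq] at hs ⊢
      rw [← Fin.cons_self_tail s, isTransversal_cons] at hs
      exact hs.1

lemma card_transversal {n : ℕ} (τ : Perm (Fin n)) (S : Finset ℕ) (e : ℕ → ℕ) :
    Nat.card {s : (Σ i : S, Fin (e i)) → Fin n //
        IsTransversal τ (fun t => (t.1 : ℕ)) s} =
      ∏ i ∈ S, (i ^ e i * (cycCount τ i).descFactorial (e i)) := by
  have h1 : {s : (Σ i : S, Fin (e i)) → Fin n // IsTransversal τ (fun t => (t.1 : ℕ)) s} ≃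
      ((i : S) → {s : Fin (e i) → Fin n // IsTransversal τ (fun _ => (i : ℕ)) s}) :=
    { toFun := fun s i => ⟨fun t => s.1 ⟨i, t⟩, fun t => s.2.1 ⟨i, t⟩, fun t t' h => by
        simpa using s.2.2 ⟨i, t⟩ ⟨i, t'⟩ h⟩
      invFun := fun s => ⟨fun t => (s t.1).1 t.2, fun t => (s t.1).2.1 t.2, by
        rintro ⟨i, t⟩ ⟨i', t'⟩ h
        have h1 := h.cycLen_eq
        simp only [(s i).2.1, (s i').2.1] at h1
        have h2 : i = i' := Subtype.ext h1
        subst h2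
        rw [(s i).2.2 t t' h]⟩
      left_inv := fun s => rfl
      right_inv := fun s => rfl }
  rw [Nat.card_congr h1, Nat.card_pi, ← prod_coe_sort S fun i => i ^ e i * (cycCount τ i).descFactorial (e i)]
  refine prod_congr rfl fun i _ => ?_
  rw [Nat.card_eq_fintype_card, Fintype.card_subtype, card_transversal_const]

end CountTuples

/-! ### Factorial moments and Poisson limits -/

section FactorialMoments
open Finset Equiv Topology
open scoped Classical

/-- The joint factorial moments of the cycle counts of a primitive word converge to those of
independent Poisson variables of parameters `1 / m`. -/
lemma tendsto_factorial_moments {k : ℕ} {Ω : FreeGroup (Fin k)} [NeZero Ω.toWord.length]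
    (hW : CycWord (cycOfList Ω.toWord)) {p : (n : ℕ) → Fin k → Perm (Fin n) → ℝ}
    (hp : ∀ j, Adm fun n => p n j) (S : Finset ℕ) (hS : ∀ m ∈ S, 1 ≤ m) (e : ℕ → ℕ) :
    Tendsto (fun n => ∑ σ : Fin k → Perm (Fin n), (∏ j, p n j (σ j)) *
        ∏ m ∈ S, ((cycCount (FreeGroup.lift σ Ω) m).descFactorial (e m) : ℝ)) atTop
      (𝓝 (∏ m ∈ S, ((m : ℝ)⁻¹) ^ e m)) := by
  have hℓ : ∀ t : (Σ i : S, Fin (e i)), 1 ≤ (t.1 : ℕ) := fun t => hS _ t.1.2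
  have : ∀ t : (Σ i : S, Fin (e i)), NeZero (Ω.toWord.length * (t.1 : ℕ)) :=
    fun t => ⟨(Nat.mul_pos (NeZero.pos _) (hℓ t)).ne'⟩
  have h1 := (hW.goodWord (ℓ := fun t : (Σ i : S, Fin (e i)) => (t.1 : ℕ))).tendsto_walks hp
  have h2 := h1.const_mul (∏ m ∈ S, ((m : ℝ)⁻¹) ^ e m)
  rw [mul_one] at h2
  refine h2.congr fun n => ?_
  rw [mul_sum]
  refine sum_congr rfl fun σ _ => ?_
  rw [card_walks_eq _ hℓ, ← lift_eq_wordProd, card_transversal, mul_left_comm]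
  congr 1
  push_cast
  rw [← prod_mul_distrib]
  refine prod_congr rfl fun m hm => ?_
  have : (m : ℝ) ≠ 0 := by
    have := hS m hm
    positivity
  rw [← mul_assoc, ← mul_pow, inv_mul_cancel₀ this, one_pow, one_mul]

end FactorialMoments

section Moments
open Finset Topology

/-- Bonferroni inequalities for the indicator of `x = v`. -/
lemma bonferroni (x v R : ℕ) :
    |(if x = v then (1 : ℝ) else 0) -
      ∑ r ∈ range (R + 1), (-1 : ℝ) ^ r * ((v + r).choose v * x.choose (v + r) : ℝ)| ≤
      (v + R).choose v * x.choose (v + R) := by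
  rcases Nat.lt_or_ge x v with h | h
  · rw [if_neg (by omega), sum_eq_zero]
    · simp only [sub_zero, abs_zero]; positivity
    · intro r _
      rw [Nat.choose_eq_zero_of_lt (show x < v + r by omega)]
      simp
  have h1 : ∀ r, ((v + r).choose v * x.choose (v + r) : ℝ) = x.choose v * (x - v).choose r := by
    intro r
    have := Nat.choose_mul (n := x) (Nat.le_add_right v r)
    rw [Nat.add_sub_cancel_left, mul_comm] at this
    exact_mod_cast this
  have h2 : ∑ r ∈ range (R + 1), (-1 : ℝ) ^ r * ((v + r).choose v * x.choose (v + r) : ℝ) =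
      x.choose v * ∑ r ∈ range (R + 1), (-1 : ℝ) ^ r * ((x - v).choose r : ℝ) := by
    rw [mul_sum]
    refine sum_congr rfl fun r _ => ?_
    rw [h1]; ring
  rw [h2, h1]
  rcases Nat.eq_or_lt_of_le h with rfl | h
  · rw [if_pos rfl, sum_range_succ', sum_eq_zero]
    · simp
    · intros; simp
  · rw [if_neg (by omega)]
    have h3 := Int.alternating_sum_range_choose_eq_choose (n := x - v - 1) (m := R)
    have h4 : ∑ r ∈ range (R + 1), (-1 : ℝ) ^ r * ((x - v).choose r : ℝ) =
        (-1) ^ R * ((x - v - 1).choose R : ℝ) := by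
      rw [show x - v - 1 + 1 = x - v by omega] at h3
      exact_mod_cast h3
    rw [h4, zero_sub, abs_neg, abs_mul, abs_mul, abs_pow, abs_neg, abs_one, one_pow, one_mul,
      Nat.abs_cast, Nat.abs_cast]
    exact mul_le_mul_of_nonneg_left
      (by exact_mod_cast Nat.choose_le_choose R (Nat.sub_le _ _)) (by positivity)

/-- One-dimensional method of moments towards a Poisson law, for weights of total mass `c`. -/
lemma tendsto_poisson {α : ℕ → Type} [∀ n, Fintype (α n)] (q : ∀ n, α n → ℝ)
    (hq : ∀ n a, 0 ≤ q n a) (X : ∀ n, α n → ℕ) (c μ : ℝ)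
    (h : ∀ r, Tendsto (fun n => ∑ a, q n a * ((X n a).descFactorial r : ℝ)) atTop
      (𝓝 (c * μ ^ r))) (v : ℕ) :
    Tendsto (fun n => ∑ a, q n a * (if X n a = v then 1 else 0)) atTop
      (𝓝 (c * (Real.exp (-μ) * μ ^ v / (v.factorial : ℝ)))) := by
  -- binomial moments
  have hch : ∀ r, Tendsto (fun n => ∑ a, q n a * ((v + r).choose v * (X n a).choose (v + r) : ℝ))
      atTop (𝓝 (c * μ ^ v / (v.factorial : ℝ) * (μ ^ r / (r.factorial : ℝ)))) := by
    intro r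
    have h1 := (h (v + r)).const_mul ((v.factorial : ℝ)⁻¹ * (r.factorial : ℝ)⁻¹)
    have h2 : (v.factorial : ℝ)⁻¹ * (r.factorial : ℝ)⁻¹ * (c * μ ^ (v + r)) =
        c * μ ^ v / (v.factorial : ℝ) * (μ ^ r / (r.factorial : ℝ)) := by
      rw [pow_add]; ring
    rw [h2] at h1
    refine h1.congr fun n => ?_
    rw [mul_sum]
    refine sum_congr rfl fun a _ => ?_
    rw [Nat.descFactorial_eq_factorial_mul_choose]
    have h3 : ((v + r).choose v * v.factorial * r.factorial : ℝ) = (v + r).factorial := by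
      have := Nat.choose_mul_factorial_mul_factorial (Nat.le_add_right v r)
      rw [Nat.add_sub_cancel_left] at this
      exact_mod_cast this
    push_cast
    rw [← h3]
    have := Nat.factorial_pos v
    have := Nat.factorial_pos r
    field_simp
  -- partial sums
  have hA : ∀ R, Tendsto (fun n => ∑ r ∈ range (R + 1), (-1 : ℝ) ^ r *
      ∑ a, q n a * ((v + r).choose v * (X n a).choose (v + r) : ℝ)) atTop
      (𝓝 (∑ r ∈ range (R + 1), (-1 : ℝ) ^ r *
        (c * μ ^ v / (v.factorial : ℝ) * (μ ^ r / (r.factorial : ℝ))))) := fun R =>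
    tendsto_finsetSum _ fun r _ => (hch r).const_mul _
  have hAlim : Tendsto (fun R => ∑ r ∈ range (R + 1), (-1 : ℝ) ^ r *
        (c * μ ^ v / (v.factorial : ℝ) * (μ ^ r / (r.factorial : ℝ)))) atTop
      (𝓝 (c * (Real.exp (-μ) * μ ^ v / (v.factorial : ℝ)))) := by
    have h1 : HasSum (fun r : ℕ => (-μ) ^ r / (r.factorial : ℝ)) (Real.exp (-μ)) := by
      rw [Real.exp_eq_exp_ℝ]
      exact NormedSpace.expSeries_div_hasSum_exp (-μ)
    have h2 := ((h1.mul_left (c * μ ^ v / (v.factorial : ℝ))).tendsto_sum_nat).comp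
      (tendsto_add_atTop_nat 1)
    convert h2 using 2
    · refine sum_congr rfl fun r _ => ?_
      rw [neg_pow μ r]; ring
    · ring
  have hDlim : Tendsto (fun R : ℕ => c * μ ^ v / (v.factorial : ℝ) * (μ ^ R / (R.factorial : ℝ)))
      atTop (𝓝 0) := by
    simpa using (FloorSemiring.tendsto_pow_div_factorial_atTop μ).const_mul
      (c * μ ^ v / (v.factorial : ℝ))
  rw [Metric.tendsto_nhds]
  intro ε hε
  obtain ⟨R, hR1, hR2⟩ := ((Metric.tendsto_nhds.1 hAlim (ε / 3) (by positivity)).and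
    (hDlim.eventually_lt_const (show (0 : ℝ) < ε / 3 by positivity))).exists
  filter_upwards [Metric.tendsto_nhds.1 (hA R) (ε / 3) (by positivity),
    (hch R).eventually_lt_const hR2] with n hn1 hn2
  have h1 : dist (∑ a, q n a * (if X n a = v then (1 : ℝ) else 0))
      (∑ r ∈ range (R + 1), (-1 : ℝ) ^ r *
        ∑ a, q n a * ((v + r).choose v * (X n a).choose (v + r) : ℝ)) < ε / 3 := by
    refine lt_of_le_of_lt ?_ hn2
    simp_rw [mul_sum]
    rw [Real.dist_eq, sum_comm, ← sum_sub_distrib]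
    refine (abs_sum_le_sum_abs _ _).trans (sum_le_sum fun a _ => ?_)
    have h2 : ∑ r ∈ range (R + 1), (-1 : ℝ) ^ r *
        (q n a * ((v + r).choose v * (X n a).choose (v + r) : ℝ)) =
        q n a * ∑ r ∈ range (R + 1), (-1 : ℝ) ^ r *
          ((v + r).choose v * (X n a).choose (v + r) : ℝ) := by
      rw [mul_sum]
      exact sum_congr rfl fun r _ => by ring
    rw [h2, ← mul_sub, abs_mul, abs_of_nonneg (hq n a)]
    exact mul_le_mul_of_nonneg_left (bonferroni _ _ _) (hq n a)
  have := dist_triangle4 (∑ a, q n a * (if X n a = v then (1 : ℝ) else 0))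
    (∑ r ∈ range (R + 1), (-1 : ℝ) ^ r *
        ∑ a, q n a * ((v + r).choose v * (X n a).choose (v + r) : ℝ))
    (∑ r ∈ range (R + 1), (-1 : ℝ) ^ r *
        (c * μ ^ v / (v.factorial : ℝ) * (μ ^ r / (r.factorial : ℝ))))
    (c * (Real.exp (-μ) * μ ^ v / (v.factorial : ℝ)))
  linarith

/-- Multidimensional method of moments towards independent Poisson laws: the factorial moments of
the coordinates in `R` can be replaced by indicators. -/
lemma tendsto_poisson_multi {α : ℕ → Type} [∀ n, Fintype (α n)] (q : ∀ n, α n → ℝ)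
    (hq : ∀ n a, 0 ≤ q n a) (X : ∀ n, α n → ℕ → ℕ) (S : Finset ℕ) (μ : ℕ → ℝ)
    (h : ∀ e : ℕ → ℕ, Tendsto (fun n => ∑ a, q n a *
      ∏ m ∈ S, ((X n a m).descFactorial (e m) : ℝ)) atTop (𝓝 (∏ m ∈ S, μ m ^ e m)))
    (v : ℕ → ℕ) (R : Finset ℕ) (e : ℕ → ℕ) :
    Tendsto (fun n => ∑ a, q n a * ∏ m ∈ S, (if m ∈ R then (if X n a m = v m then (1 : ℝ) else 0)
        else ((X n a m).descFactorial (e m) : ℝ))) atTop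
      (𝓝 (∏ m ∈ S, (if m ∈ R then Real.exp (-μ m) * μ m ^ v m / ((v m).factorial : ℝ)
        else μ m ^ e m))) := by
  induction R using Finset.induction_on generalizing e with
  | empty => simpa using h e
  | insert b R hb ih =>
    by_cases hbS : b ∈ S
    · have pe : ∀ f : ℕ → ℝ, ∏ m ∈ S, f m = f b * ∏ m ∈ S.erase b, f m := fun f =>
        (mul_prod_erase S f hbS).symm
      let w : ∀ n, α n → ℝ := fun n a => q n a * ∏ m ∈ S.erase b,
        (if m ∈ R then (if X n a m = v m then (1 : ℝ) else 0)
          else ((X n a m).descFactorial (e m) : ℝ))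
      have hw : ∀ n a, 0 ≤ w n a := fun n a => mul_nonneg (hq n a) (prod_nonneg fun m _ => by
        split_ifs <;> positivity)
      have key := tendsto_poisson w hw (fun n a => X n a b)
        (∏ m ∈ S.erase b, (if m ∈ R then Real.exp (-μ m) * μ m ^ v m / ((v m).factorial : ℝ)
          else μ m ^ e m)) (μ b) (fun r => by
            convert ih (Function.update e b r) using 2 with n
            · refine sum_congr rfl fun a _ => ?_
              have hpr : ∏ m ∈ S.erase b, (if m ∈ R then (if X n a m = v m then (1 : ℝ) else 0)
                  else ((X n a m).descFactorial (Function.update e b r m) : ℝ)) =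
                  ∏ m ∈ S.erase b, (if m ∈ R then (if X n a m = v m then (1 : ℝ) else 0)
                    else ((X n a m).descFactorial (e m) : ℝ)) :=
                prod_congr rfl fun m hm => by rw [Function.update_of_ne (ne_of_mem_erase hm)]
              rw [pe, if_neg hb, Function.update_self, hpr]
              simp only [w]
              ring
            · rw [pe, if_neg hb, Function.update_self, mul_comm]
              congr 1
              refine prod_congr rfl fun m hm => ?_
              rw [Function.update_of_ne (ne_of_mem_erase hm)]) (v b)
      convert key using 2 with n
      · refine sum_congr rfl fun a _ => ?_
        rw [pe, if_pos (mem_insert_self _ _), mul_assoc, mul_comm (ite _ _ _)]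
        congr 2
        refine prod_congr rfl fun m hm => ?_
        simp [mem_insert, ne_of_mem_erase hm]
      · rw [pe, if_pos (mem_insert_self _ _), mul_comm]
        congr 1
        refine prod_congr rfl fun m hm => ?_
        simp [mem_insert, ne_of_mem_erase hm]
    · convert ih e using 2 with n
      · refine sum_congr rfl fun a _ => ?_
        congr 1
        refine prod_congr rfl fun m hm => ?_
        have : m ≠ b := fun h => hbS (h ▸ hm)
        simp [mem_insert, this]
      · refine prod_congr rfl fun m hm => ?_
        have : m ≠ b := fun h => hbS (h ▸ hm)
        simp [mem_insert, this]

end Moments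

/-! ### Uniform permutations, powers, and universal limits -/

section Uniform
open Finset Equiv
open scoped Classical

/-- A uniform permutation agrees on `A` with a given one with probability `1 / (n)_{|A|}`. -/
lemma card_agree {n : ℕ} (A : Finset (Fin n)) (σ₀ : Perm (Fin n)) :
    (univ.filter fun σ : Perm (Fin n) => ∀ a ∈ A, σ a = σ₀ a).card * n.descFactorial A.card =
      n.factorial := by
  let N : (A ↪ Fin n) → ℕ := fun h => (univ.filter fun σ : Perm (Fin n) => ∀ a : A, σ a = h a).card
  let h₀ : A ↪ Fin n := (Function.Embedding.subtype _).trans σ₀.toEmbedding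
  have hN : ∀ h, N h = (univ.filter fun σ : Perm (Fin n) => ∀ a ∈ A, σ a = σ₀ a).card := by
    intro h
    obtain ⟨τ, hτ⟩ := Perm.exists_extending_pair h₀ h h₀.injective h.injective
    refine card_bij' (fun σ _ => τ⁻¹ * σ) (fun σ _ => τ * σ) ?_ ?_ ?_ ?_
    · intro σ hσ
      simp only [mem_filter, mem_univ, true_and] at hσ ⊢
      intro a ha
      rw [Perm.mul_apply, Perm.inv_eq_iff_eq, hσ ⟨a, ha⟩, ← hτ]
      rfl
    · intro σ hσ
      simp only [mem_filter, mem_univ, true_and] at hσ ⊢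
      rintro ⟨a, ha⟩
      rw [← hτ, Perm.mul_apply, hσ a ha]
      rfl
    · intros; simp
    · intros; simp
  have hsum : ∑ h, N h = n.factorial := by
    simp only [N, card_filter]
    rw [sum_comm]
    have : ∀ σ : Perm (Fin n), ∑ h : A ↪ Fin n, (if ∀ a : A, σ a = h a then 1 else 0) = 1 := by
      intro σ
      rw [Fintype.sum_eq_single ((Function.Embedding.subtype _).trans σ.toEmbedding)]
      · exact if_pos fun a => rfl
      · intro h hne
        exact if_neg fun h' => hne (Function.Embedding.ext fun a => (h' a).symm)
    rw [sum_congr rfl fun σ _ => this σ]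
    simp [Fintype.card_perm]
  rw [← hsum, sum_congr rfl fun h _ => hN h, sum_const, card_univ, Fintype.card_embedding_eq,
    Fintype.card_fin, Fintype.card_coe, smul_eq_mul, mul_comm]

lemma prod_cycCount_le {n m : ℕ} (c : Fin m → ℕ) (hc : ∀ i, 1 ≤ c i) (σ : Perm (Fin n))
    [∀ i, NeZero (1 * c i)] :
    ∏ i, cycCount σ (c i) ≤
      (univ.filter fun f : Pos 1 c → Fin n => ∀ x, σ (f x) = f (nextPos 1 c x)).card := by
  have h1 : ∏ i, cycCount σ (c i) ≤
      (Fintype.piFinset fun i => univ.filter fun x => cycLen σ x = c i).card := by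
    rw [Fintype.card_piFinset]
    refine prod_le_prod' fun i _ => ?_
    rw [card_cycLen_eq]
    exact Nat.le_mul_of_pos_left _ (hc i)
  refine h1.trans (card_le_card_of_injOn (fun s x => (σ ^ x.2.val) (s x.1)) ?_ ?_)
  · intro s hs
    simp only [Finset.mem_coe, Fintype.mem_piFinset, mem_filter, mem_univ, true_and] at hs ⊢
    rintro ⟨i, z⟩
    change σ ((σ ^ z.val) (s i)) = (σ ^ (z + 1).val) (s i)
    have hv : (z + 1).val = (z.val + 1) % cycLen σ (s i) := by
      rw [hs i]
      have hz : (z + 1).val = (z.val + 1) % (1 * c i) := by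
        rw [← ZMod.val_natCast]
        push_cast
        rw [ZMod.natCast_zmod_val]
      exact hz.trans (congrArg _ (one_mul _))
    rw [hv, ← Perm.mul_apply, ← pow_succ', ← Perm.iterate_eq_pow, ← Perm.iterate_eq_pow]
    exact Function.iterate_mod_minimalPeriod_eq.symm
  · intro s _ s' _ h
    funext i
    simpa using congrFun h ⟨i, 0⟩

/-- Uniform permutations are admissible. -/
lemma adm_uniform : Adm fun n _ => ((n.factorial : ℝ))⁻¹ where
  nonneg n σ := by positivity
  sum_one n := by
    rw [sum_const, card_univ, Fintype.card_perm, Fintype.card_fin, nsmul_eq_mul]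
    exact mul_inv_cancel₀ (by positivity)
  conj _ _ _ := rfl
  mom m c hc := by
    have : ∀ i, NeZero (1 * c i) := fun i => ⟨by have := hc i; omega⟩
    obtain ⟨K, hK0, hK⟩ := sum_card_image_le (Pos 1 c)
    refine ⟨2 * K, ?_⟩
    filter_upwards [eventually_gt_atTop 0,
      eventually_pow_le_descFactorial (Fintype.card (Pos 1 c))] with n hn0 hn
    have hn0' : (0 : ℝ) < n := Nat.cast_pos.2 hn0
    have hf0 : (0 : ℝ) < n.factorial := by positivity
    calc ∑ σ : Perm (Fin n), (n.factorial : ℝ)⁻¹ * ∏ i, (cycCount σ (c i) : ℝ)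
        ≤ ∑ σ : Perm (Fin n), (n.factorial : ℝ)⁻¹ *
            ((univ.filter fun f : Pos 1 c → Fin n =>
              ∀ x, σ (f x) = f (nextPos 1 c x)).card : ℝ) := by
          refine sum_le_sum fun σ _ => mul_le_mul_of_nonneg_left ?_ (by positivity)
          exact_mod_cast prod_cycCount_le c hc σ
      _ = ∑ f : Pos 1 c → Fin n, (n.factorial : ℝ)⁻¹ *
            ((univ.filter fun σ : Perm (Fin n) =>
              ∀ x, σ (f x) = f (nextPos 1 c x)).card : ℝ) := by
          simp only [card_filter, Nat.cast_sum, mul_sum]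
          rw [sum_comm]
      _ ≤ ∑ f : Pos 1 c → Fin n, 2 * ((n : ℝ) ^ (univ.image f).card)⁻¹ := by
          refine sum_le_sum fun f _ => ?_
          by_cases hw : ∃ σ₀ : Perm (Fin n), ∀ x, σ₀ (f x) = f (nextPos 1 c x)
          · obtain ⟨σ₀, hσ₀⟩ := hw
            have h1 : (univ.filter fun σ : Perm (Fin n) =>
                ∀ x, σ (f x) = f (nextPos 1 c x)).card ≤
                (univ.filter fun σ : Perm (Fin n) => ∀ a ∈ univ.image f, σ a = σ₀ a).card := by
              refine card_le_card fun σ hσ => ?_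
              simp only [mem_filter, mem_univ, true_and, mem_image, forall_exists_index,
                forall_apply_eq_imp_iff] at hσ ⊢
              intro x
              rw [hσ, hσ₀]
            have h2 := card_agree (univ.image f) σ₀
            have h3 := hn (univ.image f).card card_image_le
            have h4 : (0 : ℝ) < (n : ℝ) ^ (univ.image f).card := by positivity
            rw [inv_mul_eq_div, div_le_iff₀ hf0, ← h2]
            push_cast
            rw [mul_comm (2 : ℝ), mul_assoc, ← mul_assoc (2 : ℝ), inv_mul_eq_div, le_div_iff₀ h4]
            calc _ ≤ ((univ.filter fun σ : Perm (Fin n) =>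
                    ∀ a ∈ univ.image f, σ a = σ₀ a).card : ℝ) *
                  (2 * (n.descFactorial (univ.image f).card : ℝ)) :=
                  mul_le_mul (by exact_mod_cast h1) h3 h4.le (by positivity)
              _ = _ := by ring
          · have : (univ.filter fun σ : Perm (Fin n) =>
                ∀ x, σ (f x) = f (nextPos 1 c x)) = ∅ :=
              filter_eq_empty_iff.2 fun σ _ h => hw ⟨σ, h⟩
            rw [this]
            simp only [card_empty, Nat.cast_zero, mul_zero]
            positivity
      _ ≤ 2 * K := by
          rw [← mul_sum]
          refine mul_le_mul_of_nonneg_left (le_of_eq_of_le ?_ (hK n hn0)) (by norm_num)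
          congr!

end Uniform

section PowerCycles
open Finset Equiv

/-- The lengths of the cycles of `τ` which split into cycles of length `ℓ` of `τ ^ d`. -/
def powLens (d ℓ : ℕ) : Finset ℕ := (Icc 1 (ℓ * d)).filter fun m => m / m.gcd d = ℓ

/-- The number of cycles of length `ℓ` of the `d`-th power of a permutation with `x m` cycles of
length `m`, for all `m`. -/
def powCount (d : ℕ) (x : ℕ → ℕ) (ℓ : ℕ) : ℕ := ∑ m ∈ powLens d ℓ, m.gcd d * x m

lemma cycCount_pow {n d : ℕ} (hd : 1 ≤ d) (τ : Perm (Fin n)) {ℓ : ℕ} (hℓ : 1 ≤ ℓ) :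
    cycCount (τ ^ d) ℓ = powCount d (cycCount τ) ℓ := by
  have hlen : ∀ x, cycLen (τ ^ d) x = cycLen τ x / (cycLen τ x).gcd d := by
    intro x
    unfold cycLen
    rw [← Function.minimalPeriod_iterate_eq_div_gcd (by omega), Perm.iterate_eq_pow]
  refine Nat.eq_of_mul_eq_mul_left hℓ ?_
  rw [← card_cycLen_eq, powCount, mul_sum]
  rw [card_eq_sum_card_fiberwise (f := cycLen τ) (t := powLens d ℓ)]
  · refine sum_congr rfl fun m hm => ?_
    obtain ⟨-, hm⟩ := mem_filter.1 hm
    rw [← mul_assoc]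
    have h1 : ℓ * m.gcd d = m := by
      rw [← hm]; exact Nat.div_mul_cancel (Nat.gcd_dvd_left _ _)
    rw [h1, ← card_cycLen_eq]
    congr 1
    ext x
    simp only [mem_filter, mem_univ, true_and, hlen]
    exact ⟨fun h => h.2, fun h => ⟨by rw [h, hm], h⟩⟩
  · intro x hx
    simp only [coe_filter, mem_univ, true_and, Set.mem_ofPred_eq, hlen] at hx
    simp only [powLens, coe_filter, mem_Icc, Set.mem_ofPred_eq]
    refine ⟨⟨cycLen_pos τ x, ?_⟩, hx⟩
    calc cycLen τ x = cycLen τ x / (cycLen τ x).gcd d * (cycLen τ x).gcd d :=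
          (Nat.div_mul_cancel (Nat.gcd_dvd_left _ _)).symm
      _ ≤ ℓ * d := by
          rw [hx]
          exact Nat.mul_le_mul_left _ (Nat.gcd_le_right _ hd)

end PowerCycles

section Universality
open Finset Equiv Topology
open scoped Classical

variable {k : ℕ}

/-- The expectation of `F` evaluated at the cycle counts of the random permutation induced by `Ω`
has a limit, which is the same for all admissible laws of the generators. -/
def UnivLim (Ω : FreeGroup (Fin k)) (F : (ℕ → ℕ) → ℝ) : Prop :=
  ∃ L : ℝ, ∀ p : (n : ℕ) → Fin k → Perm (Fin n) → ℝ, (∀ j, Adm fun n => p n j) →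
    Tendsto (fun n => ∑ σ : Fin k → Perm (Fin n), (∏ j, p n j (σ j)) *
      F (cycCount (FreeGroup.lift σ Ω))) atTop (𝓝 L)

variable {Ω : FreeGroup (Fin k)}

lemma UnivLim.zero : UnivLim Ω 0 := ⟨0, fun p _ => by simp⟩

lemma UnivLim.add {F G : (ℕ → ℕ) → ℝ} (hF : UnivLim Ω F) (hG : UnivLim Ω G) :
    UnivLim Ω (F + G) := by
  obtain ⟨L, hL⟩ := hF
  obtain ⟨M, hM⟩ := hG
  refine ⟨L + M, fun p hp => ((hL p hp).add (hM p hp)).congr fun n => ?_⟩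
  rw [← sum_add_distrib]
  exact sum_congr rfl fun σ _ => (mul_add _ _ _).symm

lemma UnivLim.smul (c : ℝ) {F : (ℕ → ℕ) → ℝ} (hF : UnivLim Ω F) : UnivLim Ω (c • F) := by
  obtain ⟨L, hL⟩ := hF
  refine ⟨c * L, fun p hp => ((hL p hp).const_mul c).congr fun n => ?_⟩
  rw [mul_sum]
  exact sum_congr rfl fun σ _ => by simp only [Pi.smul_apply, smul_eq_mul]; ring

lemma UnivLim.sum {ι : Type*} (s : Finset ι) {F : ι → (ℕ → ℕ) → ℝ}
    (h : ∀ i ∈ s, UnivLim Ω (F i)) : UnivLim Ω (∑ i ∈ s, F i) := by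
  induction s using Finset.induction_on with
  | empty => simpa using UnivLim.zero
  | insert a s ha ih =>
    rw [sum_insert ha]
    exact (h a (mem_insert_self _ _)).add (ih fun i hi => h i (mem_insert_of_mem hi))

/-- The functions of the counts `x m`, `m ∈ S`, spanned by products of falling factorials. -/
def fallingSpan (S : Finset ℕ) : Submodule ℝ ((ℕ → ℕ) → ℝ) :=
  Submodule.span ℝ (Set.range fun (e : ℕ → ℕ) (x : ℕ → ℕ) =>
    ∏ m ∈ S, ((x m).descFactorial (e m) : ℝ))

lemma one_mem_fallingSpan (S : Finset ℕ) : (fun _ => 1 : (ℕ → ℕ) → ℝ) ∈ fallingSpan S :=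
  Submodule.subset_span ⟨0, by funext x; simp⟩

lemma mul_mem_fallingSpan {S : Finset ℕ} {a : ℕ} (ha : a ∈ S) {F : (ℕ → ℕ) → ℝ}
    (hF : F ∈ fallingSpan S) : (fun x => (x a : ℝ) * F x) ∈ fallingSpan S := by
  induction hF using Submodule.span_induction with
  | mem F hF =>
    obtain ⟨e, rfl⟩ := hF
    have h1 : (fun x : ℕ → ℕ => (x a : ℝ) * ∏ m ∈ S, ((x m).descFactorial (e m) : ℝ)) =
        (fun x => ∏ m ∈ S, ((x m).descFactorial (Function.update e a (e a + 1) m) : ℝ)) +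
        (e a : ℝ) • fun x => ∏ m ∈ S, ((x m).descFactorial (e m) : ℝ) := by
      funext x
      have h2 : ((x a).descFactorial (e a + 1) : ℝ) =
          ((x a : ℝ) - e a) * (x a).descFactorial (e a) := by
        rw [Nat.descFactorial_succ]
        rcases Nat.lt_or_ge (x a) (e a) with h | h
        · rw [Nat.descFactorial_eq_zero_iff_lt.2 h]; simp
        · push_cast [h]; ring
      have h3 : ∏ m ∈ S.erase a, ((x m).descFactorial (Function.update e a (e a + 1) m) : ℝ) =
          ∏ m ∈ S.erase a, ((x m).descFactorial (e m) : ℝ) :=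
        prod_congr rfl fun m hm => by rw [Function.update_of_ne (ne_of_mem_erase hm)]
      have pe : ∀ f : ℕ → ℝ, ∏ m ∈ S, f m = f a * ∏ m ∈ S.erase a, f m := fun f =>
        (mul_prod_erase S f ha).symm
      simp only [Pi.add_apply, Pi.smul_apply, smul_eq_mul]
      rw [pe, pe fun m => ((x m).descFactorial (Function.update e a (e a + 1) m) : ℝ), h3,
        Function.update_self, h2]
      ring
    rw [h1]
    exact Submodule.add_mem _ (Submodule.subset_span ⟨_, rfl⟩)
      (Submodule.smul_mem _ _ (Submodule.subset_span ⟨_, rfl⟩))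
  | zero => simp only [Pi.zero_apply, mul_zero]; exact Submodule.zero_mem _
  | add F G _ _ hF hG =>
    simp only [Pi.add_apply, mul_add]
    exact Submodule.add_mem _ hF hG
  | smul c F _ hF =>
    simp only [Pi.smul_apply, smul_eq_mul, mul_left_comm]
    exact Submodule.smul_mem _ c hF

lemma powCount_mul_mem_fallingSpan {S : Finset ℕ} {d ℓ : ℕ} (hS : powLens d ℓ ⊆ S)
    {F : (ℕ → ℕ) → ℝ} (hF : F ∈ fallingSpan S) :
    (fun x => (powCount d x ℓ : ℝ) * F x) ∈ fallingSpan S := by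
  have : (fun x => (powCount d x ℓ : ℝ) * F x) =
      ∑ m ∈ powLens d ℓ, (m.gcd d : ℝ) • fun x : ℕ → ℕ => (x m : ℝ) * F x := by
    funext x
    simp only [powCount, Finset.sum_apply, Pi.smul_apply, smul_eq_mul]
    push_cast
    rw [sum_mul]
    exact sum_congr rfl fun m _ => by ring
  rw [this]
  exact Submodule.sum_mem _ fun m hm => Submodule.smul_mem _ _ (mul_mem_fallingSpan (hS hm) hF)

lemma prod_powCount_mem_fallingSpan {S : Finset ℕ} {d : ℕ} {ι : Type*} (s : Finset ι) (ℓ e : ι → ℕ)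
    (hS : ∀ i ∈ s, powLens d (ℓ i) ⊆ S) :
    (fun x => ∏ i ∈ s, (powCount d x (ℓ i) : ℝ) ^ e i) ∈ fallingSpan S := by
  induction s using Finset.induction_on with
  | empty => simpa using one_mem_fallingSpan S
  | insert a s ha ih =>
    have h1 := ih fun i hi => hS i (mem_insert_of_mem hi)
    simp only [prod_insert ha]
    generalize e a = r
    induction r with
    | zero => simpa using h1
    | succ r ihr =>
      have := powCount_mul_mem_fallingSpan (hS a (mem_insert_self _ _)) ihr
      simpa only [pow_succ', mul_assoc] using this

variable [NeZero Ω.toWord.length]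

lemma univLim_of_mem_fallingSpan (hW : CycWord (cycOfList Ω.toWord)) {S : Finset ℕ}
    (hS : ∀ m ∈ S, 1 ≤ m) {F : (ℕ → ℕ) → ℝ} (hF : F ∈ fallingSpan S) : UnivLim Ω F := by
  induction hF using Submodule.span_induction with
  | mem F hF =>
    obtain ⟨e, rfl⟩ := hF
    exact ⟨_, fun p hp => tendsto_factorial_moments hW hp S hS e⟩
  | zero => exact UnivLim.zero
  | add F G _ _ hF hG => exact hF.add hG
  | smul c F _ hF => exact hF.smul c

/-- Joint convergence in law of the cycle counts of a primitive word. -/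
lemma univLim_indicator (hW : CycWord (cycOfList Ω.toWord)) {S : Finset ℕ}
    (hS : ∀ m ∈ S, 1 ≤ m) (u : ℕ → ℕ) :
    UnivLim Ω fun x => ∏ m ∈ S, if x m = u m then 1 else 0 := by
  refine ⟨∏ m ∈ S, (if m ∈ S then Real.exp (-((m : ℝ)⁻¹)) * ((m : ℝ)⁻¹) ^ u m /
    ((u m).factorial : ℝ) else ((m : ℝ)⁻¹) ^ (0 : ℕ → ℕ) m), fun p hp => ?_⟩
  have := tendsto_poisson_multi (fun n (σ : Fin k → Perm (Fin n)) => ∏ j, p n j (σ j))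
    (fun n σ => prod_nonneg fun j _ => (hp j).nonneg n _)
    (fun n σ => cycCount (FreeGroup.lift σ Ω)) S (fun m => ((m : ℝ)⁻¹))
    (tendsto_factorial_moments hW hp S hS) u S 0
  refine Tendsto.congr (fun n => sum_congr rfl fun σ _ => ?_) this
  congr 1
  exact prod_congr rfl fun m hm => if_pos hm

/-- The lengths of the cycles that contribute cycles of length between `1` and `d'` to the `d`-th
power of a permutation. -/
def allLens (d d' : ℕ) : Finset ℕ := (Icc 1 d').biUnion (powLens d)

lemma powLens_subset_allLens {d d' ℓ : ℕ} (h1 : 1 ≤ ℓ) (h2 : ℓ ≤ d') :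
    powLens d ℓ ⊆ allLens d d' :=
  subset_biUnion_of_mem (powLens d) (mem_Icc.2 ⟨h1, h2⟩)

lemma one_le_of_mem_allLens {d d' : ℕ} : ∀ m ∈ allLens d d', 1 ≤ m := by
  intro m hm
  obtain ⟨ℓ, _, h⟩ := mem_biUnion.1 hm
  exact (mem_Icc.1 (mem_filter.1 h).1).1

lemma univLim_moment (hW : CycWord (cycOfList Ω.toWord)) (d : ℕ) {d' : ℕ} (e : Fin d' → ℕ) :
    UnivLim Ω fun x => ∏ i : Fin d', (powCount d x (i + 1) : ℝ) ^ e i :=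
  univLim_of_mem_fallingSpan hW (one_le_of_mem_allLens (d := d) (d' := d'))
    (prod_powCount_mem_fallingSpan univ (fun i : Fin d' => (i : ℕ) + 1) e fun i _ =>
      powLens_subset_allLens (by omega) (by have := i.2; omega))

/-- The event prescribing the small cycle counts of the `d`-th power is a finite disjoint union of
events prescribing the counts of the permutation itself. -/
lemma univLim_event (hW : CycWord (cycOfList Ω.toWord)) (d : ℕ) {d' : ℕ}
    (v : Fin d' → ℕ) :
    UnivLim Ω fun x => if ∀ i : Fin d', powCount d x (i + 1) = v i then 1 else 0 := by
  set S := allLens d d'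
  let b := univ.sup v + 1
  let ext : (S → ℕ) → ℕ → ℕ := fun u m => if h : m ∈ S then u ⟨m, h⟩ else 0
  have hext : ∀ (x : ℕ → ℕ) (i : Fin d'), powCount d (ext fun m => x m) (i + 1) =
      powCount d x (i + 1) := by
    intro x i
    refine sum_congr rfl fun m hm => ?_
    have : m ∈ S := powLens_subset_allLens (by omega) (by have := i.2; omega) hm
    simp only [ext, dif_pos this]
  have key : (fun x : ℕ → ℕ => if ∀ i : Fin d', powCount d x (i + 1) = v i then (1 : ℝ) else 0) =
      ∑ u ∈ (Fintype.piFinset fun _ : S => range b).filter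
        (fun u => ∀ i : Fin d', powCount d (ext u) (i + 1) = v i),
        fun x : ℕ → ℕ => ∏ m ∈ S, if x m = ext u m then (1 : ℝ) else 0 := by
    funext x
    rw [Finset.sum_apply]
    have hprod : ∀ u : S → ℕ, (∏ m ∈ S, if x m = ext u m then (1 : ℝ) else 0) =
        if (fun m : S => x m) = u then 1 else 0 := by
      intro u
      by_cases h : (fun m : S => x m) = u
      · rw [if_pos h]
        refine prod_eq_one fun m hm => if_pos ?_
        simp only [ext, dif_pos hm, ← h]
      · rw [if_neg h]
        obtain ⟨m, hm⟩ := Function.ne_iff.1 h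
        refine prod_eq_zero m.2 (if_neg ?_)
        simpa only [ext, dif_pos m.2] using hm
    simp only [hprod]
    rw [sum_ite_eq]
    refine if_congr ?_ rfl rfl
    simp only [mem_filter, hext, Fintype.mem_piFinset, mem_range]
    refine ⟨fun h => ⟨?_, h⟩, fun h => h.2⟩
    rintro ⟨m, hm⟩
    obtain ⟨ℓ, hℓ, hmℓ⟩ := mem_biUnion.1 hm
    rw [mem_Icc] at hℓ
    have h1 := h ⟨ℓ - 1, by omega⟩
    simp only [Nat.sub_add_cancel hℓ.1] at h1
    have h2 : x m ≤ powCount d x ℓ := by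
      refine le_trans ?_ (single_le_sum (f := fun m => m.gcd d * x m)
        (fun _ _ => Nat.zero_le _) hmℓ)
      refine Nat.le_mul_of_pos_left _ (Nat.gcd_pos_of_pos_left _ ?_)
      exact one_le_of_mem_allLens m hm
    have h3 := le_sup (f := v) (mem_univ ⟨ℓ - 1, by omega⟩)
    simp only [b]
    omega
  rw [key]
  exact UnivLim.sum _ fun u _ => univLim_indicator hW one_le_of_mem_allLens _

end Universality

section Ends
open List

/-- If the first and last letters of a power involve different generators, so do those of its
base. -/
lemma ends_of_pow {k : ℕ} {Ω : FreeGroup (Fin k)} {d : ℕ} (hd : 1 ≤ d)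
    (hends : ∀ a b : Fin k × Bool, (Ω ^ d).toWord.head? = some a →
      (Ω ^ d).toWord.getLast? = some b → a.1 ≠ b.1) :
    ∀ a b : Fin k × Bool, Ω.toWord.head? = some a → Ω.toWord.getLast? = some b → a.1 ≠ b.1 := by
  have hd0 : d ≠ 0 := by omega
  have hw := FreeGroup.toWord_pow Ω d
  rw [FreeGroup.reduceCyclically.reduce_flatten_replicate FreeGroup.isReduced_toWord,
    if_neg hd0] at hw
  have hu := FreeGroup.reduceCyclically.conj_conjugator_reduceCyclically Ω.toWord
  set c := FreeGroup.reduceCyclically.conjugator Ω.toWord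
  set v := FreeGroup.reduceCyclically Ω.toWord
  rcases hc : c with _ | ⟨x, c'⟩
  · rw [hc] at hw hu
    simp only [FreeGroup.invRev_empty, nil_append, append_nil] at hw hu
    intro a b ha hb
    rw [← hu] at ha hb
    refine hends a b ?_ ?_
    · obtain ⟨e, rfl⟩ := Nat.exists_eq_add_of_le' hd
      rw [hw, replicate_succ, flatten_cons, head?_append, ha]
      rfl
    · obtain ⟨e, rfl⟩ := Nat.exists_eq_add_of_le' hd
      rw [hw, replicate_succ', flatten_append, getLast?_append]
      simp [hb]
  · -- the power starts with `x` and ends with its inverse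
    exfalso
    rw [hc] at hw
    refine hends x (x.1, !x.2) ?_ ?_ rfl
    · rw [hw]; simp
    · have : x :: c' ++ (replicate d v).flatten ++ FreeGroup.invRev (x :: c') =
          (x :: c' ++ (replicate d v).flatten ++ FreeGroup.invRev c') ++ [(x.1, !x.2)] := by
        simp [FreeGroup.invRev]
      rw [hw, this, getLast?_concat]

end Ends

/-! ### Universality of the small cycles of words -/

/-- Universality of small cycles of `w(σ_{1,n},…,σ_{k,n})`: for `w = Ω^d` cyclically
reduced with at least two different letters, `Ω` not a proper power, and independent
conjugation-invariant `σ_{j,n}` with all limsups of joint small-cycle moments finite,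
every joint moment of `(#_1 w(σ), …, #_{d'} w(σ))` converges to the corresponding limit
for independent uniform permutations, and the vector converges in distribution to the
same (universal) limit as in the uniform case. -/
theorem word_small_cycles_universality
    {k : ℕ} (w Ω : FreeGroup (Fin k)) (d : ℕ) (hd : 1 ≤ d)
    (hw : w ≠ 1) (hwΩ : w = Ω ^ d)
    (hΩ : ¬ ∃ (Ω' : FreeGroup (Fin k)) (e : ℕ), 2 ≤ e ∧ Ω = Ω' ^ e)
    (hends : ∀ a b : Fin k × Bool, w.toWord.head? = some a →
      w.toWord.getLast? = some b → a.1 ≠ b.1)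
    (p : (n : ℕ) → Fin k → Equiv.Perm (Fin n) → ℝ)
    (hpos : ∀ n j σ, 0 ≤ p n j σ)
    (hsum : ∀ n j, ∑ σ, p n j σ = 1)
    (hconj : ∀ n (j : Fin k) (τ σ : Equiv.Perm (Fin n)), p n j (τ⁻¹ * σ * τ) = p n j σ)
    (hmom : ∀ j : Fin k, ∀ (m : ℕ) (c : Fin m → ℕ), (∀ i, 1 ≤ c i) →
      ∃ C : ℝ, ∀ᶠ n in atTop,
        (∑ σ : Equiv.Perm (Fin n), p n j σ * ∏ i, (cycCount σ (c i) : ℝ)) ≤ C) :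
    ∀ d' : ℕ, 1 ≤ d' →
      -- convergence of every joint moment (monomial `P = ∏ x_i ^ e_i`) to the limit of
      -- the corresponding moment in the uniform case
      (∀ e : Fin d' → ℕ, ∃ L : ℝ,
        Tendsto (fun n => ∑ σ : Fin k → Equiv.Perm (Fin n),
            ((n.factorial : ℝ) ^ k)⁻¹ *
              ∏ i : Fin d', (cycCount ((FreeGroup.lift σ) w) (i + 1) : ℝ) ^ (e i))
          atTop (nhds L) ∧
        Tendsto (fun n => ∑ σ : Fin k → Equiv.Perm (Fin n),
            (∏ j, p n j (σ j)) *
              ∏ i : Fin d', (cycCount ((FreeGroup.lift σ) w) (i + 1) : ℝ) ^ (e i))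
          atTop (nhds L)) ∧
      -- convergence in distribution of the (discrete) vector of small cycle counts to
      -- the same limit law as in the uniform case
      (∀ v : Fin d' → ℕ, ∃ L : ℝ,
        Tendsto (fun n => prob
            (fun σ : Fin k → Equiv.Perm (Fin n) => ((n.factorial : ℝ) ^ k)⁻¹)
            {σ | ∀ i : Fin d', cycCount ((FreeGroup.lift σ) w) (i + 1) = v i})
          atTop (nhds L) ∧
        Tendsto (fun n => prob
            (fun σ : Fin k → Equiv.Perm (Fin n) => ∏ j, p n j (σ j))
            {σ | ∀ i : Fin d', cycCount ((FreeGroup.lift σ) w) (i + 1) = v i})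
          atTop (nhds L)) := by
  subst hwΩ
  have hΩ1 : Ω ≠ 1 := by
    rintro rfl
    exact hw (one_pow d)
  have : NeZero Ω.toWord.length :=
    ⟨fun h => hΩ1 (FreeGroup.toWord_eq_nil_iff.1 (List.length_eq_zero_iff.1 h))⟩
  have hW : CycWord (cycOfList Ω.toWord) :=
    cycWord_of_not_power FreeGroup.isReduced_toWord (by rwa [FreeGroup.mk_toWord])
      (ends_of_pow hd hends)
  have hp : ∀ j, Adm fun n => p n j := fun j =>
    ⟨fun n => hpos n j, fun n => hsum n j, fun n => hconj n j, hmom j⟩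
  have hu : ∀ j : Fin k, Adm fun n => (fun (n : ℕ) (_ : Fin k) (_ : Equiv.Perm (Fin n)) =>
    ((n.factorial : ℝ))⁻¹) n j := fun _ => adm_uniform
  have hprod : ∀ n : ℕ, ∏ _j : Fin k, ((n.factorial : ℝ))⁻¹ = ((n.factorial : ℝ) ^ k)⁻¹ := by
    intro n
    rw [Finset.prod_const, Finset.card_univ, Fintype.card_fin, inv_pow]
  have hcount : ∀ (n : ℕ) (σ : Fin k → Equiv.Perm (Fin n)) (i : ℕ),
      cycCount (FreeGroup.lift σ (Ω ^ d)) (i + 1) =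
        powCount d (cycCount (FreeGroup.lift σ Ω)) (i + 1) := by
    intro n σ i
    rw [map_pow, cycCount_pow hd _ (by omega)]
  intro d' _
  simp only [hcount]
  constructor
  · intro e
    obtain ⟨L, hL⟩ := univLim_moment hW d e
    refine ⟨L, ?_, hL p hp⟩
    have := hL _ hu
    simpa only [hprod] using this
  · intro v
    obtain ⟨L, hL⟩ := univLim_event hW d v
    have hprob : ∀ (n : ℕ) (q : (Fin k → Equiv.Perm (Fin n)) → ℝ),
        prob q {σ | ∀ i : Fin d', powCount d (cycCount (FreeGroup.lift σ Ω)) (i + 1) = v i} =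
          ∑ σ, q σ * if ∀ i : Fin d', powCount d (cycCount (FreeGroup.lift σ Ω)) (i + 1) = v i
            then 1 else 0 := by
      intro n q
      refine Finset.sum_congr rfl fun σ _ => ?_
      simp only [Set.indicator_apply, Set.mem_ofPred_eq, mul_ite, mul_one, mul_zero]
    simp only [hprob]
    refine ⟨L, ?_, ?_⟩
    · have := hL _ hu
      simp only [hprod] at this
      convert this
    · convert hL p hp
end
end

section
/- Let ℓ ≥ 1, γ = (γ_1,…,γ_ℓ) ∈ (ℕ*)^ℓ, and let n ≥ ℓ + Σ_{i=1}^ℓ γ_i. Let a_{i,j} ∈ {1,…,n}, for 1 ≤ i ≤ ℓ and 0 ≤ j ≤ γ_i, be pairwise distinct points, and let E(a) := {σ ∈ S_n : σ(a_{i,j}) = a_{i,j+1} for all 1 ≤ i ≤ ℓ and 0 ≤ j < γ_i}. Then for any conjugation-invariant random permutation σ_n of {1,…,n}: 1 − Σ_{i=1}^ℓ P(c_1(σ_n) ≤ γ_i) − ((ℓ−1)/(n−1))·Σ_{i=1}^ℓ γ_i ≤ P(σ_n ∈ E(a)) · (n−ℓ)!/(n−ℓ−Σ_{i=1}^ℓ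 γ_i)! ≤ 1. -/
/-!
Fix the starting points `sᵢ = a_{i,0}`. Conjugation invariance gives `P(E(a)) = P(E(b))` for every
other system `b` of distinct points with the same starting points, and there are
`(n-ℓ)! / (n-ℓ-∑γᵢ)!` such systems `b`. The events `E(b)` are disjoint, since `σ` and the starting
points determine `b`. Hence the normalized probability is exactly the probability that the path
segments `sᵢ, σ sᵢ, …, σ^γᵢ sᵢ` are simple and pairwise disjoint (`prob_mul_card_embedding`), which
gives the upper bound `1`.

For the lower bound, if the segments are not simple and disjoint, then cancelling powers of `σ`
shows that either some `sᵢ` lies on a cycle of length at most `γᵢ`, or `σ^k sᵢ = s_{i'}` for some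
`i ≠ i'` and `1 ≤ k ≤ γᵢ` (`not_isFree`). The former has the probability in the statement, again by
conjugation invariance; the latter has probability at most `γᵢ/(n-1)` (`prob_hits_le`), because all
`n-1` targets different from `sᵢ` are equally likely and at most `γᵢ` of them are hit. A union bound
over `i` and over the ordered pairs `(i, i')` concludes.
-/

open Filter

noncomputable section

/-! ### Conjugation invariance -/

lemma prob_eq_sum_ite {α : Type*} [Fintype α] (p : α → ℝ) (S : Set α) [DecidablePred (· ∈ S)] :
    prob p S = ∑ x, p x * (if x ∈ S then 1 else 0) := by
  unfold prob
  refine Finset.sum_congr rfl fun x _ => ?_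
  by_cases h : x ∈ S <;> simp [h]

lemma prob_conj {n : ℕ} (p : Equiv.Perm (Fin n) → ℝ)
    (hconj : ∀ τ σ : Equiv.Perm (Fin n), p (τ⁻¹ * σ * τ) = p σ)
    (τ : Equiv.Perm (Fin n)) (S T : Set (Equiv.Perm (Fin n)))
    (h : ∀ σ, τ * σ * τ⁻¹ ∈ T ↔ σ ∈ S) : prob p S = prob p T := by
  classical
  rw [prob_eq_sum_ite, prob_eq_sum_ite,
    ← Equiv.sum_comp (MulAut.conj τ).toEquiv (fun σ => p σ * if σ ∈ T then 1 else 0)]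
  refine Finset.sum_congr rfl fun σ _ => ?_
  have h1 : p (τ * σ * τ⁻¹) = p σ := by simpa using hconj τ⁻¹ σ
  simp [h1, h]

lemma exists_perm_comp {α β : Type*} [Finite β] (F G : α → β)
    (hF : F.Injective) (hG : G.Injective) : ∃ τ : Equiv.Perm β, ∀ x, τ (F x) = G x := by
  classical
  let e : {y // y ∈ Set.range F} ≃ {y // y ∈ Set.range G} :=
    (Equiv.ofInjective F hF).symm.trans (Equiv.ofInjective G hG)
  refine ⟨e.extendSubtype, fun x => ?_⟩
  rw [Equiv.extendSubtype_apply_of_mem e _ ⟨x, rfl⟩]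
  have : (⟨F x, ⟨x, rfl⟩⟩ : {y // y ∈ Set.range F}) = Equiv.ofInjective F hF x := rfl
  rw [this]
  simp [e]

lemma conj_pow_apply_iff {n : ℕ} (τ σ : Equiv.Perm (Fin n)) (k : ℕ) (x y : Fin n) :
    ((τ * σ * τ⁻¹) ^ k) (τ x) = τ y ↔ (σ ^ k) x = y := by
  rw [conj_pow]; simp

lemma prob_cycLen {n : ℕ} (p : Equiv.Perm (Fin n) → ℝ)
    (hconj : ∀ τ σ : Equiv.Perm (Fin n), p (τ⁻¹ * σ * τ) = p σ) (x y : Fin n) (k : ℕ) :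
    prob p {σ | cycLen σ x ≤ k} = prob p {σ | cycLen σ y ≤ k} := by
  refine prob_conj p hconj (Equiv.swap x y) _ _ fun σ => ?_
  have h : cycLen (Equiv.swap x y * σ * (Equiv.swap x y)⁻¹) y = cycLen σ x := by
    unfold cycLen
    refine Function.minimalPeriod_eq_minimalPeriod_iff.2 fun m => ?_
    have h2 := conj_pow_apply_iff (Equiv.swap x y) σ m x x
    rw [Equiv.swap_apply_left] at h2
    simpa only [Function.IsPeriodicPt, Function.IsFixedPt, Equiv.Perm.iterate_eq_pow] using h2
  simp only [Set.mem_ofPred_eq, h]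

/-! ### Probability of hitting a given point -/

/-- The `n - 1` targets `t ≠ s` are equally likely to be hit by `σ s, …, σ^k s`, and at most `k`
of them are hit. -/
lemma prob_hits_le {n : ℕ} (hn : 2 ≤ n) (p : Equiv.Perm (Fin n) → ℝ)
    (hpos : ∀ σ, 0 ≤ p σ) (hsum : ∑ σ, p σ = 1)
    (hconj : ∀ τ σ : Equiv.Perm (Fin n), p (τ⁻¹ * σ * τ) = p σ)
    (s t : Fin n) (hst : s ≠ t) (k : ℕ) :
    prob p {σ | ∃ j < k, (σ ^ (j + 1)) s = t} ≤ k / ((n : ℝ) - 1) := by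
  classical
  have hn1 : (0 : ℝ) < (n : ℝ) - 1 := by
    have : (2 : ℝ) ≤ n := by exact_mod_cast hn
    linarith
  rw [le_div_iff₀ hn1]
  have heq : ∀ u ∈ Finset.univ.erase s, prob p {σ | ∃ j < k, (σ ^ (j + 1)) s = u}
      = prob p {σ | ∃ j < k, (σ ^ (j + 1)) s = t} := by
    intro u hu
    have hu : u ≠ s := Finset.ne_of_mem_erase hu
    refine prob_conj p hconj (Equiv.swap u t) _ _ fun σ => ?_
    have h1 : ∀ j, ((Equiv.swap u t * σ * (Equiv.swap u t)⁻¹) ^ (j + 1)) s = t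
        ↔ (σ ^ (j + 1)) s = u := by
      intro j
      have := conj_pow_apply_iff (Equiv.swap u t) σ (j + 1) s u
      rwa [Equiv.swap_apply_of_ne_of_ne hu.symm hst, Equiv.swap_apply_left] at this
    simp only [Set.mem_ofPred_eq, h1]
  have hcount := Finset.sum_congr rfl heq
  rw [Finset.sum_const, Finset.card_erase_of_mem (Finset.mem_univ _), Finset.card_univ,
    Fintype.card_fin, nsmul_eq_mul, Nat.cast_sub (by lia), Nat.cast_one] at hcount
  rw [mul_comm, ← hcount]
  simp_rw [prob_eq_sum_ite]
  rw [Finset.sum_comm]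
  calc _ ≤ ∑ σ, p σ * (k : ℝ) := by
        refine Finset.sum_le_sum fun σ _ => ?_
        rw [← Finset.mul_sum]
        refine mul_le_mul_of_nonneg_left ?_ (hpos σ)
        rw [Finset.sum_boole]
        norm_cast
        calc _ ≤ ((Finset.range k).image fun j => (σ ^ (j + 1)) s).card := by
              refine Finset.card_le_card fun u hu => ?_
              simpa using (Finset.mem_filter.1 hu).2
          _ ≤ k := Finset.card_image_le.trans (by simp)
    _ = k := by rw [← Finset.sum_mul, hsum, one_mul]

/-! ### Simple and pairwise disjoint path segments -/

/-- The segments `sᵢ, σ sᵢ, …, σ^γᵢ sᵢ` are simple and pairwise disjoint. The starting points,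
which are distinct, are separated from the other points, the latter being indexed by
`Σ i, Fin (γ i)`, where `(i, j)` stands for `σ^(j+1) sᵢ`. -/
def IsFree {n ℓ : ℕ} (γ : Fin ℓ → ℕ) (s : Fin ℓ → Fin n) (σ : Equiv.Perm (Fin n)) : Prop :=
  (fun x : (Σ i, Fin (γ i)) => (σ ^ (x.2.val + 1)) (s x.1)).Injective ∧
    ∀ x : (Σ i, Fin (γ i)), (σ ^ (x.2.val + 1)) (s x.1) ∉ Set.range s

/-- Cancelling powers of `σ` reduces any collision to one with a starting point. -/
lemma not_isFree {n ℓ : ℕ} (γ : Fin ℓ → ℕ) (s : Fin ℓ → Fin n) (hs : s.Injective)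
    (σ : Equiv.Perm (Fin n)) (h : ¬ IsFree γ s σ) :
    (∃ i, cycLen σ (s i) ≤ γ i) ∨ ∃ i i', i ≠ i' ∧ ∃ j < γ i, (σ ^ (j + 1)) (s i) = s i' := by
  have key : ∀ i i', ∀ j < γ i, (σ ^ (j + 1)) (s i) = s i' → (∃ i, cycLen σ (s i) ≤ γ i) ∨
      ∃ i i', i ≠ i' ∧ ∃ j < γ i, (σ ^ (j + 1)) (s i) = s i' := by
    intro i i' j hj he
    by_cases hi : i = i'
    · subst hi
      refine Or.inl ⟨i, ?_⟩
      have hp : Function.IsPeriodicPt σ (j + 1) (s i) := by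
        simpa only [Function.IsPeriodicPt, Function.IsFixedPt, Equiv.Perm.iterate_eq_pow] using he
      exact (hp.minimalPeriod_le (by lia)).trans hj
    · exact Or.inr ⟨i, i', hi, j, hj, he⟩
  have key2 : ∀ i i' j j', j < j' → j' < γ i' →
      (σ ^ (j + 1)) (s i) = (σ ^ (j' + 1)) (s i') → (σ ^ (j' - j - 1 + 1)) (s i') = s i := by
    intro i i' j j' hjj _ he
    apply (σ ^ (j + 1)).injective
    rw [he, ← Equiv.Perm.mul_apply, ← pow_add]
    congr 2
    lia
  unfold IsFree at h
  rw [not_and_or] at h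
  rcases h with h | h
  · simp only [Function.Injective, not_forall] at h
    obtain ⟨⟨i, j⟩, ⟨i', j'⟩, he, hne⟩ := h
    simp only at he
    rcases lt_trichotomy j.val j'.val with hjj | hjj | hjj
    · exact key i' i (j' - j - 1) (by lia) (key2 i i' j j' hjj j'.2 he)
    · rw [hjj] at he
      obtain rfl := hs ((σ ^ (j'.val + 1)).injective he)
      exact absurd (by rw [Fin.ext hjj]) hne
    · exact key i i' (j - j' - 1) (by lia) (key2 i' i j' j hjj j.2 he.symm)
  · push Not at h
    obtain ⟨⟨i, j⟩, i', he⟩ := h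
    exact key i i' j j.2 he.symm

/-- All systems of further points with the same starting points are equally likely, and the
corresponding disjoint events make up `IsFree`. -/
lemma prob_mul_card_embedding {n ℓ : ℕ} (γ : Fin ℓ → ℕ) (s : Fin ℓ → Fin n) (hs : s.Injective)
    (p : Equiv.Perm (Fin n) → ℝ)
    (hconj : ∀ τ σ : Equiv.Perm (Fin n), p (τ⁻¹ * σ * τ) = p σ)
    (f₀ : (Σ i, Fin (γ i)) ↪ {y // y ∉ Set.range s}) :
    prob p {σ | ∀ x : (Σ i, Fin (γ i)), (σ ^ (x.2.val + 1)) (s x.1) = f₀ x}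
      * ((n - ℓ).descFactorial (∑ i, γ i) : ℝ) = prob p {σ | IsFree γ s σ} := by
  classical
  have heq : ∀ f ∈ (Finset.univ : Finset ((Σ i, Fin (γ i)) ↪ {y // y ∉ Set.range s})),
      prob p {σ | ∀ x : (Σ i, Fin (γ i)), (σ ^ (x.2.val + 1)) (s x.1) = f x}
        = prob p {σ | ∀ x : (Σ i, Fin (γ i)), (σ ^ (x.2.val + 1)) (s x.1) = f₀ x} := by
    intro f _
    -- a permutation fixing the starting points and carrying `f` to `f₀`
    have hinj : ∀ g : (Σ i, Fin (γ i)) ↪ {y // y ∉ Set.range s},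
        (Sum.elim s (fun x => (g x : Fin n))).Injective := fun g =>
      hs.sumElim (Subtype.val_injective.comp g.injective) fun i x h => (g x).2 ⟨i, h⟩
    obtain ⟨τ, hτ⟩ := exists_perm_comp _ _ (hinj f) (hinj f₀)
    refine prob_conj p hconj τ _ _ fun σ => ?_
    refine forall_congr' fun x => ?_
    have := conj_pow_apply_iff τ σ (x.2.val + 1) (s x.1) (f x)
    have h1 : τ (s x.1) = s x.1 := hτ (Sum.inl x.1)
    have h2 : τ (f x) = f₀ x := hτ (Sum.inr x)
    rwa [h1, h2] at this
  have hcount := Finset.sum_congr rfl heq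
  have hcard : Fintype.card {y // y ∉ Set.range s} = n - ℓ := by
    rw [Fintype.card_subtype_compl, Fintype.card_fin]
    congr 1
    exact (Fintype.card_congr (Equiv.ofInjective s hs).symm).trans (Fintype.card_fin ℓ)
  rw [Finset.sum_const, Finset.card_univ, Fintype.card_embedding_eq, hcard, nsmul_eq_mul] at hcount
  simp only [Fintype.card_sigma, Fintype.card_fin] at hcount
  rw [mul_comm, ← hcount]
  simp_rw [prob_eq_sum_ite]
  rw [Finset.sum_comm]
  refine Finset.sum_congr rfl fun σ _ => ?_
  rw [← Finset.mul_sum]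
  congr 1
  simp only [Set.mem_ofPred_eq]
  by_cases hG : IsFree γ s σ
  · rw [if_pos hG]
    -- `σ` and the starting points determine the system of points
    let f₁ : (Σ i, Fin (γ i)) ↪ {y // y ∉ Set.range s} :=
      ⟨fun x => ⟨(σ ^ (x.2.val + 1)) (s x.1), hG.2 x⟩, fun x y h =>
        hG.1 (congrArg Subtype.val h)⟩
    rw [Finset.sum_eq_single f₁]
    · rw [if_pos]
      intro x
      rfl
    · intro f _ hf
      rw [if_neg]
      intro hx
      exact hf (by ext x; exact congrArg Fin.val (hx x).symm)
    · simp
  · rw [if_neg hG]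
    refine Finset.sum_eq_zero fun f _ => if_neg fun hx => hG ⟨fun x y h => ?_, fun x => ?_⟩
    · simp only [hx] at h
      exact f.injective (Subtype.ext h)
    · rw [hx]
      exact (f x).2

lemma follows_iff {n : ℕ} (σ : Equiv.Perm (Fin n)) (k : ℕ) (b : ℕ → Fin n) :
    (∀ j < k, σ (b j) = b (j + 1)) ↔ ∀ j < k, (σ ^ (j + 1)) (b 0) = b (j + 1) := by
  constructor
  · intro h j
    induction j with
    | zero => intro hj; simpa using h 0 hj
    | succ j ih =>
      intro hj
      rw [pow_succ', Equiv.Perm.mul_apply, ih (by lia), h _ hj]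
  · intro h j hj
    cases j with
    | zero => simpa using h 0 hj
    | succ j => rw [← h j (by lia), ← h _ hj, ← Equiv.Perm.mul_apply, ← pow_succ']

/-- Union bound over the short cycles and over the ordered pairs of colliding segments. -/
lemma le_prob_isFree {n ℓ : ℕ} (γ : Fin ℓ → ℕ) (s : Fin ℓ → Fin n) (hs : s.Injective)
    (p : Equiv.Perm (Fin n) → ℝ) (hpos : ∀ σ, 0 ≤ p σ) (hsum : ∑ σ, p σ = 1) :
    1 ≤ prob p {σ | IsFree γ s σ} + ∑ i, prob p {σ | cycLen σ (s i) ≤ γ i}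
      + ∑ i, ∑ i' ∈ Finset.univ.erase i,
        prob p {σ | ∃ j < γ i, (σ ^ (j + 1)) (s i) = s i'} := by
  classical
  simp_rw [prob_eq_sum_ite]
  simp_rw [Finset.sum_comm (t := (Finset.univ : Finset (Equiv.Perm (Fin n))))]
  rw [← Finset.sum_add_distrib, ← Finset.sum_add_distrib]
  refine hsum.ge.trans (Finset.sum_le_sum fun σ _ => ?_)
  simp_rw [← Finset.mul_sum]
  rw [← mul_add, ← mul_add]
  refine le_mul_of_one_le_right (hpos σ) ?_
  have n1 : ∀ (P : Prop) [Decidable P], (0 : ℝ) ≤ if P then 1 else 0 := fun P _ => by split_ifs <;> norm_num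
  have e1 : (0 : ℝ) ≤ if σ ∈ {σ | IsFree γ s σ} then 1 else 0 := n1 _
  have e2 : (0 : ℝ) ≤ ∑ i, if σ ∈ {σ | cycLen σ (s i) ≤ γ i} then 1 else 0 :=
    Finset.sum_nonneg fun i _ => n1 _
  have e3 : ∀ i, (0 : ℝ) ≤ ∑ i' ∈ Finset.univ.erase i,
      if σ ∈ {σ | ∃ j < γ i, (σ ^ (j + 1)) (s i) = s i'} then 1 else 0 := fun i =>
    Finset.sum_nonneg fun i _ => n1 _
  have e4 := Finset.sum_nonneg fun i (_ : i ∈ Finset.univ) => e3 i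
  by_cases hG : IsFree γ s σ
  · have : (1 : ℝ) = if σ ∈ {σ | IsFree γ s σ} then 1 else 0 := (if_pos hG).symm
    linarith
  rcases not_isFree γ s hs σ hG with ⟨i, hi⟩ | ⟨i, i', hii, hj⟩
  · have h1 := Finset.single_le_sum
      (f := fun i => if σ ∈ {σ | cycLen σ (s i) ≤ γ i} then (1 : ℝ) else 0)
      (fun i _ => n1 _) (Finset.mem_univ i)
    have h2 : (if σ ∈ {σ | cycLen σ (s i) ≤ γ i} then (1 : ℝ) else 0) = 1 := if_pos hi
    simp only [h2] at h1
    linarith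
  · have h1 := Finset.single_le_sum
      (f := fun i' => if σ ∈ {σ | ∃ j < γ i, (σ ^ (j + 1)) (s i) = s i'} then (1 : ℝ) else 0)
      (fun i _ => n1 _) (Finset.mem_erase.2 ⟨hii.symm, Finset.mem_univ i'⟩)
    have h2 : (if σ ∈ {σ | ∃ j < γ i, (σ ^ (j + 1)) (s i) = s i'} then (1 : ℝ) else 0) = 1 :=
      if_pos hj
    have h3 := Finset.single_le_sum (fun i _ => e3 i) (Finset.mem_univ i)
    simp only [h2] at h1
    linarith

/-! ### The bounds -/

/-- Lemma 2.9 of [KaMa20] (case `ℓ' = 0`): for a conjugation-invariant random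
permutation `σ_n` and a graph of class `T_γ` (a disjoint union of `ℓ` directed simple
paths, the `i`-th with `γ_i` edges through prescribed pairwise distinct points
`a_{i,0},…,a_{i,γ_i}`),
`1 - ∑ᵢ P(c_1(σ_n) ≤ γᵢ) - ((ℓ-1)/(n-1))·∑ᵢ γᵢ
  ≤ P(σ_n ∈ E(a))·(n-ℓ)!/(n-ℓ-∑γᵢ)! ≤ 1`. -/
theorem straight_graph_probability_bounds
    {n ℓ : ℕ} (hℓ : 1 ≤ ℓ) (γ : Fin ℓ → ℕ) (hγ : ∀ i, 1 ≤ γ i)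
    (hn : ℓ + ∑ i, γ i ≤ n) (hn0 : 0 < n)
    (a : Fin ℓ → ℕ → Fin n)
    (hdist : ∀ i j i' j', j ≤ γ i → j' ≤ γ i' → (i, j) ≠ (i', j') → a i j ≠ a i' j')
    (p : Equiv.Perm (Fin n) → ℝ)
    (hpos : ∀ σ, 0 ≤ p σ) (hsum : ∑ σ, p σ = 1)
    (hconj : ∀ τ σ : Equiv.Perm (Fin n), p (τ⁻¹ * σ * τ) = p σ) :
    1 - (∑ i, prob p {σ | cycLen σ ⟨0, hn0⟩ ≤ γ i})
        - (((ℓ : ℝ) - 1) / ((n : ℝ) - 1)) * ∑ i, (γ i : ℝ)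
      ≤ prob p {σ | ∀ i, ∀ j < γ i, σ (a i j) = a i (j + 1)}
          * ((n - ℓ).factorial : ℝ) / ((n - ℓ - ∑ i, γ i).factorial : ℝ) ∧
    prob p {σ | ∀ i, ∀ j < γ i, σ (a i j) = a i (j + 1)}
        * ((n - ℓ).factorial : ℝ) / ((n - ℓ - ∑ i, γ i).factorial : ℝ) ≤ 1 := by
  have hn2 : 2 ≤ n := by
    have h := Finset.single_le_sum (f := γ) (fun i _ => Nat.zero_le _)
      (Finset.mem_univ ⟨0, hℓ⟩)
    have := hγ ⟨0, hℓ⟩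
    lia
  have hs : (fun i => a i 0).Injective := by
    intro i i' h
    by_contra hne
    exact hdist i 0 i' 0 (by simp) (by simp) (by simp [hne]) h
  let f₀ : (Σ i, Fin (γ i)) ↪ {y // y ∉ Set.range (fun i => a i 0)} :=
    ⟨fun x => ⟨a x.1 (x.2.val + 1), by
        rintro ⟨i, hi⟩
        exact hdist i 0 x.1 (x.2.val + 1) (by simp) x.2.2 (by simp) hi⟩, by
      rintro ⟨i, j⟩ ⟨i', j'⟩ h
      by_contra hne
      refine hdist i (j.val + 1) i' (j'.val + 1) j.2 j'.2 ?_ (congrArg Subtype.val h)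
      intro h2
      simp only [Prod.mk.injEq, Nat.add_right_cancel_iff] at h2
      obtain ⟨rfl, h3⟩ := h2
      exact hne (by rw [Fin.ext h3])⟩
  have hE : {σ : Equiv.Perm (Fin n) | ∀ i, ∀ j < γ i, σ (a i j) = a i (j + 1)}
      = {σ | ∀ x : (Σ i, Fin (γ i)), (σ ^ (x.2.val + 1)) (a x.1 0) = (f₀ x : Fin n)} := by
    ext σ
    simp only [Set.mem_ofPred_eq, follows_iff]
    exact ⟨fun h x => h x.1 x.2 x.2.2, fun h i j hj => h ⟨i, ⟨j, hj⟩⟩⟩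
  have hfac : ((n - ℓ).factorial : ℝ) / ((n - ℓ - ∑ i, γ i).factorial : ℝ)
      = ((n - ℓ).descFactorial (∑ i, γ i) : ℝ) := by
    rw [div_eq_iff (by positivity), mul_comm]
    exact_mod_cast (Nat.factorial_mul_descFactorial (by lia : ∑ i, γ i ≤ n - ℓ)).symm
  have hmain := prob_mul_card_embedding γ (fun i => a i 0) hs p hconj f₀
  rw [mul_div_assoc, hfac, hE, hmain]
  constructor
  · have hU := le_prob_isFree γ (fun i => a i 0) hs p hpos hsum
    have hcyc : ∀ i, prob p {σ | cycLen σ (a i 0) ≤ γ i}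
        = prob p {σ | cycLen σ ⟨0, hn0⟩ ≤ γ i} := fun i => prob_cycLen p hconj _ _ _
    simp only [hcyc] at hU
    have hB : ∑ i, ∑ i' ∈ Finset.univ.erase i,
        prob p {σ | ∃ j < γ i, (σ ^ (j + 1)) (a i 0) = a i' 0}
        ≤ (((ℓ : ℝ) - 1) / ((n : ℝ) - 1)) * ∑ i, (γ i : ℝ) := by
      rw [Finset.mul_sum]
      refine Finset.sum_le_sum fun i _ => ?_
      refine (Finset.sum_le_card_nsmul _ _ ((γ i : ℝ) / ((n : ℝ) - 1)) fun i' hi' => ?_).trans_eq ?_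
      · exact prob_hits_le hn2 p hpos hsum hconj _ _
          (fun h => Finset.ne_of_mem_erase hi' (hs h).symm) _
      · rw [Finset.card_erase_of_mem (Finset.mem_univ _), Finset.card_univ, Fintype.card_fin,
          nsmul_eq_mul, Nat.cast_sub hℓ, Nat.cast_one]
        ring
    linarith
  · rw [← hsum]
    exact Finset.sum_le_sum fun σ _ => Set.indicator_apply_le' (fun _ => le_rfl) fun _ => hpos σ
end
end

section
/- Let ℓ ≥ 1, ℓ′ ≥ 1, γ = (γ_1,…,γ_ℓ) ∈ (ℕ*)^ℓ, γ′ = (γ′_1,…,γ′_{ℓ′}) ∈ (ℕ*)^{ℓ′}, and n ≥ ℓ + Σ_i γ_i + Σ_i γ′_i. Let a_{i,j} ∈ {1,…,n} (1 ≤ i ≤ ℓ, 0 ≤ j ≤ γ_i) and b_{i,j} ∈ {1,…,n} (1 ≤ i ≤ ℓ′, 0 ≤ j < γ′_i) be points that are all pairwise distinct, and let E(a,b) := {σ ∈ S_n : σ(a_{i,j}) = a_{i,j+1} for all 1 ≤ i ≤ ℓ, 0 ≤ j < γ_i, and σ(b_{i,j}) = b_{i,(j+1 mod γ′_i)} for all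 1 ≤ i ≤ ℓ′, 0 ≤ j < γ′_i}. Let A^{γ′} := {σ ∈ S_n : c_j(σ) = γ′_j for all 1 ≤ j ≤ ℓ′, and the points 1,…,ℓ′ lie in pairwise distinct cycles of σ}. Then for any conjugation-invariant random permutation σ_n of {1,…,n}: P(σ_n ∈ E(a,b)) · (n−ℓ−ℓ′)!/(n−ℓ−Σ_i γ_i−Σ_i γ′_i)! ≤ P(σ_n ∈ A^{γ′}). -/
/-!
Write `S` for the starting points `a i 0`, `b i 0` and `V` for all the points of the graph, so
that `|S| = ℓ + ℓ'` and `|V| = ℓ + ∑ γ i + ∑ γ' i`. Fix `τ` with `τ (b i 0) = i`, and let `H` and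
`K` be the groups of permutations fixing `S`, respectively `V`, pointwise; their orders are the two
factorials in the statement (`card_fixing`).

The bound is a double count of the pairs `(h, σ)` with `h ∈ H` and `(τh)⁻¹ σ (τh) ∈ E(a,b)`, each
weighted by `p σ` (`prob_mul_card_le`). By conjugation invariance every `h` contributes
`P(E(a,b))`. Conversely, fix `σ`. A permutation in `E(a,b)` determines the points of `V` by
iteration from those of `S`, so any two admissible `h` agree on `V` and there are at most `|K|` of
them. If there is one at all, then `τh` carries the cycles of `b` to cycles of `σ` through
`1, …, ℓ'`, so that `σ ∈ A^{γ'}`. Hence `P(E(a,b)) |H| ≤ P(A^{γ'}) |K|`.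
-/

open Filter

noncomputable section

open Classical in
/-- There are `(n - |S|)!` permutations fixing the points of `S`. -/
lemma card_fixing {n : ℕ} (S : Finset (Fin n)) :
    (Finset.univ.filter fun h : Equiv.Perm (Fin n) => ∀ x ∈ S, h x = x).card
      = (n - S.card).factorial := by
  have e := Fintype.card_congr (Equiv.Perm.subtypeEquivSubtypePerm fun x : Fin n => x ∉ S)
  rw [Fintype.card_perm] at e
  have h1 : Fintype.card {x : Fin n // x ∉ S} = n - S.card := by
    simp [Fintype.card_subtype_compl]
  rw [h1] at e
  rw [e, Fintype.card_subtype]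
  simp only [not_not]

/-- Weighted double count of the pairs `(h, σ)` with `h ∈ H` and `(τh)⁻¹ σ (τh) ∈ E`. -/
lemma prob_mul_card_le {n : ℕ} (p : Equiv.Perm (Fin n) → ℝ) (hpos : ∀ σ, 0 ≤ p σ)
    (hconj : ∀ τ σ : Equiv.Perm (Fin n), p (τ⁻¹ * σ * τ) = p σ)
    (E A : Set (Equiv.Perm (Fin n))) (τ : Equiv.Perm (Fin n)) (H K : Finset (Equiv.Perm (Fin n)))
    (hA : ∀ σ, ∀ h ∈ H, (τ * h)⁻¹ * σ * (τ * h) ∈ E → σ ∈ A)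
    (hK : ∀ σ, ∀ h ∈ H, ∀ h' ∈ H, (τ * h)⁻¹ * σ * (τ * h) ∈ E →
      (τ * h')⁻¹ * σ * (τ * h') ∈ E → h⁻¹ * h' ∈ K) :
    prob p E * (H.card : ℝ) ≤ prob p A * (K.card : ℝ) := by
  classical
  have h1 : prob p E * (H.card : ℝ)
      = ∑ h ∈ H, ∑ σ, E.indicator p ((τ * h)⁻¹ * σ * (τ * h)) := by
    rw [mul_comm, ← nsmul_eq_mul, ← Finset.sum_const]
    refine Finset.sum_congr rfl fun h _ => ?_
    have := Equiv.sum_comp (MulAut.conj (τ * h)⁻¹).toEquiv (E.indicator p)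
    rw [prob, ← this]
    refine Finset.sum_congr rfl fun σ _ => ?_
    rw [MulEquiv.toEquiv_eq_coe, MulEquiv.coe_toEquiv, MulAut.conj_apply, inv_inv]
  rw [h1, Finset.sum_comm, prob, Finset.sum_mul]
  refine Finset.sum_le_sum fun σ _ => ?_
  have h2 : ∑ h ∈ H, E.indicator p ((τ * h)⁻¹ * σ * (τ * h))
      = ((H.filter fun h => (τ * h)⁻¹ * σ * (τ * h) ∈ E).card : ℝ) * p σ := by
    rw [← nsmul_eq_mul, ← Finset.sum_const, Finset.sum_filter]
    refine Finset.sum_congr rfl fun h _ => ?_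
    rw [Set.indicator_apply, hconj]
  rw [h2]
  rcases (H.filter fun h => (τ * h)⁻¹ * σ * (τ * h) ∈ E).eq_empty_or_nonempty with h0 | ⟨h, hh⟩
  · rw [h0, Finset.card_empty, Nat.cast_zero, zero_mul]
    exact mul_nonneg (Set.indicator_nonneg (fun x _ => hpos x) _) (Nat.cast_nonneg _)
  · have hh' := Finset.mem_filter.1 hh
    rw [Set.indicator_of_mem (hA σ h hh'.1 hh'.2), mul_comm]
    refine mul_le_mul_of_nonneg_left ?_ (hpos σ)
    rw [Nat.cast_le]
    refine Finset.card_le_card_of_injOn (fun h' => h⁻¹ * h') (fun h' hm => ?_)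
      (fun x _ y _ hxy => mul_left_cancel hxy)
    have hm' := Finset.mem_filter.1 (Finset.mem_coe.1 hm)
    exact hK σ h hh'.1 h' hm'.1 hh'.2 hm'.2

/-- Along a path of the graph, a permutation acts by shifting the index. -/
lemma pow_apply_path {n m : ℕ} {ρ : Equiv.Perm (Fin n)} {c : ℕ → Fin n}
    (h : ∀ j < m, ρ (c j) = c (j + 1)) : ∀ j ≤ m, (ρ ^ j) (c 0) = c j := by
  intro j
  induction j with
  | zero => simp
  | succ k ih =>
    intro hk
    rw [pow_succ', Equiv.Perm.mul_apply, ih (by omega), h k (by omega)]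

lemma pow_apply_cycle {n m : ℕ} (hm : 1 ≤ m) {ρ : Equiv.Perm (Fin n)} {c : ℕ → Fin n}
    (h : ∀ j < m, ρ (c j) = c ((j + 1) % m)) (j : ℕ) : (ρ ^ j) (c 0) = c (j % m) := by
  induction j with
  | zero => simp
  | succ k ih =>
    rw [pow_succ', Equiv.Perm.mul_apply, ih, h _ (Nat.mod_lt _ hm), Nat.mod_add_mod]

lemma minimalPeriod_cycle {n m : ℕ} (hm : 1 ≤ m) {ρ : Equiv.Perm (Fin n)} {c : ℕ → Fin n}
    (h : ∀ j < m, ρ (c j) = c ((j + 1) % m)) (hc : ∀ j < m, j ≠ 0 → c j ≠ c 0) :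
    Function.minimalPeriod ρ (c 0) = m := by
  have hit : ∀ j, ρ^[j] (c 0) = c (j % m) := fun j => by
    rw [Equiv.Perm.iterate_eq_pow, pow_apply_cycle hm h]
  have hper : Function.IsPeriodicPt ρ m (c 0) := by
    rw [Function.IsPeriodicPt, Function.IsFixedPt, hit, Nat.mod_self]
  refine le_antisymm (hper.minimalPeriod_le hm) ?_
  by_contra! hlt
  have h1 := Function.iterate_minimalPeriod (f := ρ) (x := c 0)
  rw [hit, Nat.mod_eq_of_lt hlt] at h1
  exact hc _ hlt (hper.minimalPeriod_pos hm).ne' h1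

lemma exists_perm_apply_eq {n k : ℕ} (f g : Fin k → Fin n) (hf : Function.Injective f)
    (hg : Function.Injective g) : ∃ τ : Equiv.Perm (Fin n), ∀ i, τ (f i) = g i := by
  have := Equiv.Perm.isMultiplyPretransitive (Fin n) k
  obtain ⟨τ, hτ⟩ := MulAction.exists_smul_eq (Equiv.Perm (Fin n))
    (⟨f, hf⟩ : Fin k ↪ Fin n) ⟨g, hg⟩
  exact ⟨τ, fun i => DFunLike.congr_fun hτ i⟩

/-- Lemma 2.9 extension (case `ℓ' > 0`), upper bound: for a conjugation-invariant random
permutation `σ_n` and a graph of class `C_{γ,γ'}` (ℓ directed simple paths through the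
points `a_{i,·}` and ℓ' directed cycles through the points `b_{i,·}`),
`P(σ_n ∈ E(a,b))·(n-ℓ-ℓ')!/(n-ℓ-∑γᵢ-∑γ'ᵢ)! ≤ P(σ_n ∈ A^{γ'})`. -/
theorem cycle_graph_probability_upper_bound
    {n ℓ ℓ' : ℕ} (hℓ : 1 ≤ ℓ) (hℓ' : 1 ≤ ℓ')
    (γ : Fin ℓ → ℕ) (hγ : ∀ i, 1 ≤ γ i)
    (γ' : Fin ℓ' → ℕ) (hγ' : ∀ i, 1 ≤ γ' i)
    (hn : ℓ + (∑ i, γ i) + (∑ i, γ' i) ≤ n) (hℓ'n : ℓ' ≤ n)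
    (a : Fin ℓ → ℕ → Fin n) (b : Fin ℓ' → ℕ → Fin n)
    (hda : ∀ i j i' j', j ≤ γ i → j' ≤ γ i' → (i, j) ≠ (i', j') → a i j ≠ a i' j')
    (hdb : ∀ i j i' j', j < γ' i → j' < γ' i' → (i, j) ≠ (i', j') → b i j ≠ b i' j')
    (hdab : ∀ i j i' j', j ≤ γ i → j' < γ' i' → a i j ≠ b i' j')
    (p : Equiv.Perm (Fin n) → ℝ)
    (hpos : ∀ σ, 0 ≤ p σ) (hsum : ∑ σ, p σ = 1)
    (hconj : ∀ τ σ : Equiv.Perm (Fin n), p (τ⁻¹ * σ * τ) = p σ) :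
    prob p {σ | (∀ i, ∀ j < γ i, σ (a i j) = a i (j + 1)) ∧
        (∀ i : Fin ℓ', ∀ j < γ' i, σ (b i j) = b i ((j + 1) % γ' i))}
      * ((n - ℓ - ℓ').factorial : ℝ)
      / ((n - ℓ - (∑ i, γ i) - (∑ i, γ' i)).factorial : ℝ)
    ≤ prob p {σ | (∀ j : Fin ℓ', cycLen σ (Fin.castLE hℓ'n j) = γ' j) ∧
        ∀ j j' : Fin ℓ', j ≠ j' →
          ¬ σ.SameCycle (Fin.castLE hℓ'n j) (Fin.castLE hℓ'n j')} := by
  classical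
  have hb0 : Function.Injective fun i => b i 0 := fun i i' hii => by
    by_contra hne
    exact hdb i 0 i' 0 (hγ' i) (hγ' i') (by simpa using hne) hii
  obtain ⟨τ, hτ⟩ := exists_perm_apply_eq (fun i => b i 0) (Fin.castLE hℓ'n) hb0
    (Fin.castLE_injective hℓ'n)
  let sF : Fin ℓ ⊕ Fin ℓ' → Fin n := Sum.elim (fun i => a i 0) (fun i => b i 0)
  let vF : (Σ i : Fin ℓ, Fin (γ i + 1)) ⊕ (Σ i : Fin ℓ', Fin (γ' i)) → Fin n :=
    Sum.elim (fun x => a x.1 x.2) (fun x => b x.1 x.2)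
  have hsF : Function.Injective sF := by
    refine Function.Injective.sumElim (fun i i' hii => ?_) hb0
      (fun i i' => hdab i 0 i' 0 (Nat.zero_le _) (hγ' i'))
    by_contra hne
    exact hda i 0 i' 0 (Nat.zero_le _) (Nat.zero_le _) (by simpa using hne) hii
  have hvF : Function.Injective vF := by
    refine Function.Injective.sumElim ?_ ?_
      (fun x y => hdab x.1 x.2 y.1 y.2 (Nat.lt_succ_iff.1 x.2.2) y.2.2)
    · rintro ⟨i, j⟩ ⟨i', j'⟩ hij
      by_contra hne
      refine hda i j i' j' (Nat.lt_succ_iff.1 j.2) (Nat.lt_succ_iff.1 j'.2) (fun he => hne ?_) hij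
      obtain ⟨rfl, hj⟩ := Prod.mk.inj he
      rw [Fin.ext hj]
    · rintro ⟨i, j⟩ ⟨i', j'⟩ hij
      by_contra hne
      refine hdb i j i' j' j.2 j'.2 (fun he => hne ?_) hij
      obtain ⟨rfl, hj⟩ := Prod.mk.inj he
      rw [Fin.ext hj]
  have hcS : (Finset.univ.image sF).card = ℓ + ℓ' := by
    rw [Finset.card_image_of_injective _ hsF]; simp
  have hcV : (Finset.univ.image vF).card = ℓ + (∑ i, γ i) + ∑ i, γ' i := by
    rw [Finset.card_image_of_injective _ hvF]
    simp [Finset.sum_add_distrib, add_comm]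
  have hH := card_fixing (Finset.univ.image sF)
  have hK := card_fixing (Finset.univ.image vF)
  rw [hcS] at hH
  rw [hcV] at hK
  rw [Nat.sub_sub, Nat.sub_sub n, Nat.sub_sub, div_le_iff₀ (Nat.cast_pos.2 (Nat.factorial_pos _)),
    ← hH, ← hK]
  refine prob_mul_card_le p hpos hconj _ _ τ _ _ ?_ ?_
  · rintro σ h hh ⟨-, hb⟩
    rw [Finset.mem_filter] at hh
    have hfix : ∀ i, h (b i 0) = b i 0 := fun i =>
      hh.2 _ (Finset.mem_image.2 ⟨Sum.inr i, Finset.mem_univ _, rfl⟩)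
    set g := τ * h with hg
    have hgb : ∀ i, g (b i 0) = Fin.castLE hℓ'n i := fun i => by
      rw [hg, Equiv.Perm.mul_apply, hfix, hτ]
    set ρ := g⁻¹ * σ * g with hρ
    have hσ : σ = g * ρ * g⁻¹ := by rw [hρ]; group
    refine ⟨fun j => ?_, fun j j' hjj hs => ?_⟩
    · rw [← minimalPeriod_cycle (hγ' j) (hb j) fun k hk hk0 =>
        hdb j k j 0 hk (hγ' j) (by simpa using hk0), cycLen,
        Function.minimalPeriod_eq_minimalPeriod_iff]
      intro k
      rw [Function.IsPeriodicPt, Function.IsPeriodicPt, Function.IsFixedPt, Function.IsFixedPt,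
        Equiv.Perm.iterate_eq_pow, Equiv.Perm.iterate_eq_pow, hσ, conj_pow, ← hgb]
      simp
    · rw [hσ, ← hgb, ← hgb, Equiv.Perm.sameCycle_conj, ← Equiv.Perm.mul_apply,
        ← Equiv.Perm.mul_apply, inv_mul_cancel, Equiv.Perm.one_apply, Equiv.Perm.one_apply] at hs
      obtain ⟨k, -, hk⟩ := hs.exists_pow_eq'
      rw [pow_apply_cycle (hγ' j) (hb j)] at hk
      exact hdb j _ j' 0 (Nat.mod_lt _ (hγ' j)) (hγ' j') (by simp [hjj]) hk
  · rintro σ h hh h' hh' ⟨ha1, hb1⟩ ⟨ha2, hb2⟩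
    rw [Finset.mem_filter] at hh hh' ⊢
    -- As `h` and `h'` fix the starting point `s`, both `τ (h v)` and `τ (h' v)` equal `σ ^ j (τ s)`.
    have key : ∀ (s v : Fin n) (j : ℕ), s ∈ Finset.univ.image sF →
        (((τ * h)⁻¹ * σ * (τ * h)) ^ j) s = v → (((τ * h')⁻¹ * σ * (τ * h')) ^ j) s = v →
        (h⁻¹ * h') v = v := by
      intro s v j hs h1 h2
      have e : ∀ g : Equiv.Perm (Fin n), (g⁻¹ * σ * g) ^ j = g⁻¹ * σ ^ j * g := fun g => by
        simpa using conj_pow (a := g⁻¹) (b := σ) (i := j)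
      rw [e] at h1 h2
      have h3 : (σ ^ j) (τ s) = τ (h v) := by
        rw [← h1]; simp [hh.2 s hs]
      have h4 : (σ ^ j) (τ s) = τ (h' v) := by
        rw [← h2]; simp [hh'.2 s hs]
      have h5 : h v = h' v := τ.injective (h3.symm.trans h4)
      rw [Equiv.Perm.mul_apply, ← h5, ← Equiv.Perm.mul_apply, inv_mul_cancel, Equiv.Perm.one_apply]
    refine ⟨Finset.mem_univ _, fun v hv => ?_⟩
    obtain ⟨⟨i, j⟩ | ⟨i, j⟩, -, rfl⟩ := Finset.mem_image.1 hv
    · have hj := Nat.lt_succ_iff.1 j.2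
      exact key (a i 0) _ j (Finset.mem_image.2 ⟨Sum.inl i, Finset.mem_univ _, rfl⟩)
        (pow_apply_path (ha1 i) j hj) (pow_apply_path (ha2 i) j hj)
    · have hj := Nat.mod_eq_of_lt j.2
      refine key (b i 0) _ j (Finset.mem_image.2 ⟨Sum.inr i, Finset.mem_univ _, rfl⟩) ?_ ?_
      · rw [pow_apply_cycle (hγ' i) (hb1 i), hj]; rfl
      · rw [pow_apply_cycle (hγ' i) (hb2 i), hj]; rfl
end
end

section
/- Let Ω ∈ F_k be a word of total length t that is not a proper power, whose canonical reduced form Ω = x_{k_t}^{ε_t}⋯x_{k_1}^{ε_1} satisfies k_1 ≠ k_t, and let w = Ω^d for some d ≥ 1. For each n, let ρ_{1,n}, …, ρ_{k,n} be independent uniformly distributed permutations of {1,…,n}. For h a divisor of d, consider the trajectory of the point 1 under Ω^h: i_0 := 1 and, reading the letters of Ω^h from right to left, i_s := ρ_{j_s,n}^{δ_s}(i_{s−1}) for s = 1, …, ht, where x_{j_s}^{δ_s} is the s-th letter. Let E_h be the event that i_0, i_1, …, i_{ht−1} are pairwise distinct and i_{ht} = 1. Then lim_{n→∞} n · P(E_h)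 = 1. -/
/-!
Write `m` for the number of letters of the reduced word of `Ω ^ h`. Since the extremal letters of
`Ω` come from distinct generators, `Ω` is cyclically reduced, so this word is the concatenation of
`h` copies of that of `Ω` and is again cyclically reduced (`toWord_pow_of_ends`).

The event is the disjoint union, over injective closed paths `i : Fin m ↪ Fin n` with `i 0 = c`, of
the events that the permutations carry each `i s` to `i (s + 1)` through the `s`-th letter. As the
word is cyclically reduced, two consecutive steps of the cycle never use a generator and its
inverse, so if `N j` letters are `x_j ^ (±1)`, such an event prescribes `ρ j` at exactly `N j`
distinct points with distinct values, and contains `∏ j, (n - N j)!` tuples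
(`card_perms_of_cycle`). By symmetry `n` times the number of paths is `n.descFactorial m`
(`card_mul_card_embedding`). For `n ≥ m` this gives
`n * P(E_h) = n.descFactorial m / ∏ j, n.descFactorial (N j)`, and as `∑ j, N j = m`, numerator
and denominator are both equivalent to `n ^ m`.
-/

open Filter

noncomputable section

/-- The permutation associated to a single letter `x_j^{±1}`. -/
def letterPerm {n k : ℕ} (ρ : Fin k → Equiv.Perm (Fin n)) (l : Fin k × Bool) :
    Equiv.Perm (Fin n) :=
  if l.2 then ρ l.1 else (ρ l.1)⁻¹

/-- The trajectory of the point `x`: reading the letters of the list `L` from right to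
left, `traj ρ L dflt x s` is the image `i_s` of `x` by the first `s` letters. -/
def traj {n k : ℕ} (ρ : Fin k → Equiv.Perm (Fin n)) (L : List (Fin k × Bool))
    (dflt : Fin k × Bool) (x : Fin n) : ℕ → Fin n
  | 0 => x
  | s + 1 => letterPerm ρ (L.getD (L.length - 1 - s) dflt) (traj ρ L dflt x s)

/-- The permutations fixing every value of an injective `f` are the permutations of the
complement of its range. -/
lemma card_perm_fixing {α ι : Type*} [Fintype α] [DecidableEq α] [Fintype ι]
    (f : ι → α) (hf : Function.Injective f) :
    Nat.card {σ : Equiv.Perm α // ∀ x, σ (f x) = f x}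
      = (Fintype.card α - Fintype.card ι).factorial := by
  classical
  have e := Equiv.Perm.subtypeEquivSubtypePerm (fun a : α => a ∉ Set.range f)
  have e2 : {σ : Equiv.Perm α // ∀ x, σ (f x) = f x} ≃
      {σ : Equiv.Perm α // ∀ a, ¬ (a ∉ Set.range f) → σ a = a} :=
    Equiv.subtypeEquivRight (fun σ => by simp)
  rw [Nat.card_congr (e2.trans e.symm), Nat.card_eq_fintype_card, Fintype.card_perm,
    Fintype.card_subtype_compl]
  congr 2
  exact (Fintype.card_congr (Equiv.ofInjective f hf)).symm

/-- Composition with one permutation sending `f` to `g` reduces this to the case `f = g`. -/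
lemma card_perm_extending {α ι : Type*} [Fintype α] [DecidableEq α] [Fintype ι]
    (f g : ι → α) (hf : Function.Injective f) (hg : Function.Injective g) :
    Nat.card {σ : Equiv.Perm α // ∀ x, σ (f x) = g x}
      = (Fintype.card α - Fintype.card ι).factorial := by
  obtain ⟨τ, hτ⟩ := Equiv.Perm.exists_extending_pair f g hf hg
  rw [← card_perm_fixing f hf]
  refine Nat.card_congr (Equiv.subtypeEquiv (Equiv.mulLeft τ⁻¹) fun σ => ?_)
  refine forall_congr' fun x => ?_
  have h : τ (f x) = g x := hτ x
  rw [Equiv.coe_mulLeft, Equiv.Perm.mul_apply, Equiv.Perm.inv_eq_iff_eq, h]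

/-- All values `c` are equally likely for a uniform injection at the point `o`, so there are
`1/n` of the `n.descFactorial m` injections with a prescribed value at `o`. -/
lemma card_mul_card_embedding {ι : Type*} [Fintype ι] (o : ι) {n : ℕ} (c : Fin n) :
    n * Nat.card {i : ι ↪ Fin n // i o = c} = n.descFactorial (Fintype.card ι) := by
  classical
  have key : ∀ b : Fin n, Nat.card {i : ι ↪ Fin n // i o = b}
      = Nat.card {i : ι ↪ Fin n // i o = c} := fun b =>
    Nat.card_congr (Equiv.subtypeEquiv
      (Equiv.embeddingCongr (Equiv.refl ι) (Equiv.swap b c)) fun i => by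
        simp [Equiv.swap_apply_eq_iff])
  have h1 := Nat.card_congr (Equiv.sigmaFiberEquiv (fun i : ι ↪ Fin n => i o))
  rw [Nat.card_sigma] at h1
  simp only [key] at h1
  rw [Nat.card_eq_fintype_card (α := ι ↪ Fin n), Fintype.card_embedding_eq] at h1
  simpa using h1

/-- For a closed path `i` with distinct vertices and no backtracking in its cyclic sequence of
letters `l`, the edges labelled `x_j` prescribe `ρ_j` at as many distinct points as there are
occurrences of `x_j`, with distinct prescribed values. -/
lemma card_perms_of_cycle {ι : Type*} [Fintype ι] {n k : ℕ} (next : ι ≃ ι)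
    (l : ι → Fin k × Bool) (hl : ∀ s, (l s).1 = (l (next s)).1 → (l s).2 = (l (next s)).2)
    (i : ι ↪ Fin n) :
    Nat.card {ρ : Fin k → Equiv.Perm (Fin n) // ∀ s, letterPerm ρ (l s) (i s) = i (next s)}
      = ∏ j, (n - Nat.card {s // (l s).1 = j}).factorial := by
  classical
  -- The step at `s` prescribes the value `tgt s` at the point `src s` for the permutation itself,
  -- the inverse letters being read backwards.
  let src : ι → Fin n := fun s => if (l s).2 then i s else i (next s)
  let tgt : ι → Fin n := fun s => if (l s).2 then i (next s) else i s
  have hiff : ∀ (ρ : Fin k → Equiv.Perm (Fin n)) s,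
      letterPerm ρ (l s) (i s) = i (next s) ↔ ρ (l s).1 (src s) = tgt s := by
    intro ρ s
    by_cases hb : (l s).2
    · simp [letterPerm, src, tgt, hb]
    · simp only [letterPerm, src, tgt, hb]
      simp only [Bool.false_eq_true, if_false]
      rw [Equiv.Perm.inv_eq_iff_eq, eq_comm]
  -- Equal sources with opposite signs would come from consecutive, mutually cancelling letters.
  have hsrc : ∀ s s', (l s).1 = (l s').1 → src s = src s' → s = s' := by
    intro s s' hj he
    simp only [src] at he
    have h1 := hl s
    have h2 := hl s'
    split_ifs at he with ha hb hb <;> have he := i.injective he <;> simp_all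
  have htgt : ∀ s s', (l s).1 = (l s').1 → tgt s = tgt s' → s = s' := by
    intro s s' hj he
    simp only [tgt] at he
    have h1 := hl s
    have h2 := hl s'
    split_ifs at he with ha hb hb <;> have he := i.injective he <;> simp_all
  have e : {ρ : Fin k → Equiv.Perm (Fin n) // ∀ s, letterPerm ρ (l s) (i s) = i (next s)} ≃
      ((j : Fin k) → {σ : Equiv.Perm (Fin n) //
        ∀ x : {s // (l s).1 = j}, σ (src x.1) = tgt x.1}) :=
    (Equiv.subtypeEquivRight (fun ρ => by
      simp only [hiff]
      exact ⟨by rintro h j ⟨s, rfl⟩; exact h s, fun h s => h (l s).1 ⟨s, rfl⟩⟩)).trans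
      (Equiv.subtypePiEquivPi
        (p := fun (j : Fin k) (σ : Equiv.Perm (Fin n)) =>
          ∀ x : {s // (l s).1 = j}, σ (src x.1) = tgt x.1))
  rw [Nat.card_congr e, Nat.card_pi]
  refine Finset.prod_congr rfl fun j _ => ?_
  rw [card_perm_extending, Nat.card_eq_fintype_card, Fintype.card_fin]
  · exact fun a b hab => Subtype.ext (hsrc _ _ (a.2.trans b.2.symm) hab)
  · exact fun a b hab => Subtype.ext (htgt _ _ (a.2.trans b.2.symm) hab)

/-- The tuples in the event correspond bijectively to pairs of an injective closed path based at `c`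
and a tuple whose trajectory is that path. -/
lemma card_event {n k M : ℕ} (L : List (Fin k × Bool)) (hL : L.length = M + 1)
    (dflt : Fin k × Bool) (c : Fin n)
    (hl : ∀ s : Fin (M + 1), (L.getD (M - s) dflt).1 = (L.getD (M - ↑(s + 1)) dflt).1 →
      (L.getD (M - s) dflt).2 = (L.getD (M - ↑(s + 1)) dflt).2) :
    n * Nat.card {ρ : Fin k → Equiv.Perm (Fin n) //
        (∀ s < M + 1, ∀ s' < M + 1, s ≠ s' → traj ρ L dflt c s ≠ traj ρ L dflt c s') ∧
          traj ρ L dflt c (M + 1) = c}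
      = n.descFactorial (M + 1) *
        ∏ j, (n - Nat.card {s : Fin (M + 1) // (L.getD (M - s) dflt).1 = j}).factorial := by
  classical
  let l : Fin (M + 1) → Fin k × Bool := fun s => L.getD (M - s) dflt
  have hstep : ∀ (ρ : Fin k → Equiv.Perm (Fin n)) (s : Fin (M + 1)),
      traj ρ L dflt c (s + 1 : ℕ) = letterPerm ρ (l s) (traj ρ L dflt c s) := by
    intro ρ s
    simp [traj, l, hL]
  let P : Type := Σ i : {i : Fin (M + 1) ↪ Fin n // i 0 = c},
    {ρ : Fin k → Equiv.Perm (Fin n) // ∀ s, letterPerm ρ (l s) (i.1 s) = i.1 (finRotate _ s)}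
  have hP : Nat.card P = Nat.card {i : Fin (M + 1) ↪ Fin n // i 0 = c} *
      ∏ j, (n - Nat.card {s : Fin (M + 1) // (l s).1 = j}).factorial := by
    rw [Nat.card_sigma]
    simp only [fun i : {i : Fin (M + 1) ↪ Fin n // i 0 = c} =>
      card_perms_of_cycle (finRotate (M + 1)) l
        (fun s => by simpa only [finRotate_apply] using hl s) i.1]
    simp
  have htraj : ∀ (p : P) (s : ℕ) (hs : s < M + 1),
      traj p.2.1 L dflt c s = p.1.1 ⟨s, hs⟩ := by
    intro p s
    induction s with
    | zero => intro hs; exact p.1.2.symm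
    | succ s ih =>
      intro hs
      have := hstep p.2.1 ⟨s, by omega⟩
      simp only at this
      rw [this, ih (by omega), p.2.2]
      congr 1
      rw [finRotate_of_lt (by omega)]
  have hbij : Nat.card P = Nat.card {ρ : Fin k → Equiv.Perm (Fin n) //
        (∀ s < M + 1, ∀ s' < M + 1, s ≠ s' → traj ρ L dflt c s ≠ traj ρ L dflt c s') ∧
          traj ρ L dflt c (M + 1) = c} := by
    refine Nat.card_congr (Equiv.ofBijective (fun p : P => ⟨p.2.1, ?_, ?_⟩) ⟨?_, ?_⟩)
    · intro s hs s' hs' hne he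
      rw [htraj p s hs, htraj p s' hs'] at he
      exact hne (by simpa using p.1.1.injective he)
    · have := hstep p.2.1 (Fin.last M)
      simp only [Fin.val_last] at this
      rw [this, htraj p M (by omega)]
      have h2 := p.2.2 (Fin.last M)
      rw [finRotate_last, p.1.2] at h2
      exact h2
    · intro p q hpq
      have hρ : p.2.1 = q.2.1 := congrArg Subtype.val hpq
      have hi : p.1 = q.1 := by
        apply Subtype.ext
        ext s
        rw [← htraj p s s.2, ← htraj q s s.2, hρ]
      obtain ⟨i, ρ, hp⟩ := p
      obtain ⟨i', ρ', hq⟩ := q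
      obtain rfl : i = i' := hi
      obtain rfl : ρ = ρ' := hρ
      rfl
    · rintro ⟨ρ, hd, hc⟩
      refine ⟨⟨⟨⟨fun s => traj ρ L dflt c s, ?_⟩, rfl⟩, ρ, ?_⟩, rfl⟩
      · intro s s' he
        by_contra hne
        exact hd s s.2 s' s'.2 (fun h => hne (Fin.ext h)) he
      · intro s
        change letterPerm ρ (l s) (traj ρ L dflt c s) = traj ρ L dflt c (finRotate (M + 1) s)
        rw [← hstep]
        rcases Nat.lt_or_ge s M with h | h
        · rw [show finRotate (M + 1) s = ⟨s + 1, by omega⟩ from finRotate_of_lt h]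
        · obtain rfl : s = Fin.last M := Fin.ext (by have := s.2; simp; omega)
          rw [finRotate_last]
          exact hc
  rw [← hbij, hP, ← mul_assoc, card_mul_card_embedding, Fintype.card_fin]

lemma prob_const {α : Type*} [Fintype α] (r : ℝ) (S : Set α) :
    prob (fun _ => r) S = Nat.card S * r := by
  classical
  unfold prob
  simp [Set.indicator_apply, Finset.sum_ite, Nat.card_eq_fintype_card, Fintype.card_subtype]

/-- When `∑ j, N j = m`, both the numerator and the denominator are equivalent to `n ^ m`. -/
lemma tendsto_descFactorial_ratio {k m : ℕ} (N : Fin k → ℕ) (hN : ∑ j, N j = m) :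
    Tendsto (fun n : ℕ => (n.descFactorial m : ℝ) / ∏ j, (n.descFactorial (N j) : ℝ))
      atTop (nhds 1) := by
  have h1 : ∀ a : ℕ, Tendsto (fun n : ℕ => (n.descFactorial a : ℝ) / (n : ℝ) ^ a)
      atTop (nhds 1) := fun a =>
    (Asymptotics.isEquivalent_iff_tendsto_one (by
      filter_upwards [eventually_gt_atTop 0] with n hn
      positivity)).1 (isEquivalent_descFactorial a)
  have h2 := (h1 m).div (tendsto_finsetProd Finset.univ fun j _ => h1 (N j)) (by simp)
  simp only [Finset.prod_const_one, div_one] at h2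
  refine h2.congr' ?_
  filter_upwards [eventually_gt_atTop 0] with n hn
  have hn' : (n : ℝ) ≠ 0 := by positivity
  simp only [Pi.div_apply]
  rw [Finset.prod_div_distrib, Finset.prod_pow_eq_pow_sum, hN]
  field_simp

/-- Distinct extremal generators make `Ω` cyclically reduced, so no cancellation occurs in its
powers. -/
lemma toWord_pow_of_ends {k : ℕ} (Ω : FreeGroup (Fin k))
    (hends : ∀ a b : Fin k × Bool, Ω.toWord.head? = some a →
      Ω.toWord.getLast? = some b → a.1 ≠ b.1) (h : ℕ) :
    (Ω ^ h).toWord.length = h * Ω.toWord.length ∧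
      FreeGroup.IsCyclicallyReduced (Ω ^ h).toWord := by
  have hc : FreeGroup.IsCyclicallyReduced Ω.toWord :=
    ⟨FreeGroup.isReduced_toWord, fun a ha b hb hab => absurd hab.symm (hends b a hb ha)⟩
  have hr := hc.flatten_replicate h
  have hw : (Ω ^ h).toWord = (List.replicate h Ω.toWord).flatten := by
    rw [FreeGroup.toWord_pow, hr.isReduced.reduce_eq]
  rw [hw]
  exact ⟨by simp, hr⟩

/-- The cyclic sequence of the letters of `L`, read from right to left, has no cancellation. The
index `s + 1` is taken in `Fin (M + 1)`, so that the last step is followed by the first. -/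
lemma cyclic_letters {k M : ℕ} (L : List (Fin k × Bool)) (hL : L.length = M + 1)
    (hc : FreeGroup.IsCyclicallyReduced L) (dflt : Fin k × Bool) (s : Fin (M + 1)) :
    (L.getD (M - s) dflt).1 = (L.getD (M - ↑(s + 1)) dflt).1 →
      (L.getD (M - s) dflt).2 = (L.getD (M - ↑(s + 1)) dflt).2 := by
  rcases Nat.lt_or_ge s M with h | h
  · have hs : ((s + 1 : Fin (M + 1)) : ℕ) = s + 1 := by
      rw [Fin.val_add_one_of_lt' (by omega)]
    rw [hs, List.getD_eq_getElem _ _ (by omega), List.getD_eq_getElem _ _ (by omega)]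
    have := List.isChain_iff_getElem.1 hc.1 (M - (s + 1)) (by omega)
    have he : M - (s + 1 : ℕ) + 1 = M - s := by omega
    simp only [he] at this
    exact fun h1 => (this h1.symm).symm
  · obtain rfl : s = Fin.last M := Fin.ext (by have := s.2; simp; omega)
    rw [List.getD_eq_getElem _ _ (by simp [hL]), List.getD_eq_getElem _ _ (by simp [hL])]
    have h2 := hc.2 (L[M]'(by omega)) (by simp [List.getLast?_eq_getElem?, hL])
      (L[0]'(by omega)) (by simp [List.head?_eq_getElem?])
    simp
    intro h3
    exact (h2 h3.symm).symm

/-- For `Ω` of total length `t`, not a proper power, cyclically reduced with two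
distinct extremal letters, `w = Ω^d`, independent uniform permutations
`ρ_{1,n},…,ρ_{k,n}`, and `h ∣ d`: the probability of the event `E_h` that the
trajectory `i_0 = 1, i_1, …, i_{ht}` of the point `1` under the letters of `Ω^h`
(read from right to left) has `i_0,…,i_{ht-1}` pairwise distinct and `i_{ht} = 1`
satisfies `n·P(E_h) → 1`. -/
theorem uniform_trajectory_event_probability
    {k : ℕ} (hk : 0 < k) (Ω : FreeGroup (Fin k)) (hΩ1 : Ω ≠ 1)
    (hΩ : ¬ ∃ (Ω' : FreeGroup (Fin k)) (e : ℕ), 2 ≤ e ∧ Ω = Ω' ^ e)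
    (hends : ∀ a b : Fin k × Bool, Ω.toWord.head? = some a →
      Ω.toWord.getLast? = some b → a.1 ≠ b.1)
    (d : ℕ) (hd : 1 ≤ d) (h : ℕ) (hdvd : h ∣ d) :
    Tendsto (fun n : ℕ =>
      if hn : 0 < n then
        (n : ℝ) * prob (fun _ : Fin k → Equiv.Perm (Fin n) => ((n.factorial : ℝ) ^ k)⁻¹)
          {ρ | (∀ s < h * Ω.toWord.length, ∀ s' < h * Ω.toWord.length, s ≠ s' →
              traj ρ ((Ω ^ h).toWord) (⟨0, hk⟩, true) ⟨0, hn⟩ s ≠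
                traj ρ ((Ω ^ h).toWord) (⟨0, hk⟩, true) ⟨0, hn⟩ s') ∧
            traj ρ ((Ω ^ h).toWord) (⟨0, hk⟩, true) ⟨0, hn⟩ (h * Ω.toWord.length)
              = ⟨0, hn⟩}
      else 0) atTop (nhds 1) := by
  obtain ⟨hlen, hcyc⟩ := toWord_pow_of_ends Ω hends h
  have hh : 0 < h := Nat.pos_of_dvd_of_pos hdvd hd
  have ht : 0 < Ω.toWord.length :=
    List.length_pos_iff.2 (fun h0 => hΩ1 (FreeGroup.toWord_eq_nil_iff.1 h0))
  obtain ⟨M, hM⟩ : ∃ M, h * Ω.toWord.length = M + 1 :=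
    Nat.exists_eq_succ_of_ne_zero (Nat.mul_pos hh ht).ne'
  rw [hM] at hlen
  simp only [hM]
  generalize (Ω ^ h).toWord = L at hlen hcyc ⊢
  generalize ((⟨0, hk⟩, true) : Fin k × Bool) = dflt
  let N : Fin k → ℕ := fun j => Nat.card {s : Fin (M + 1) // (L.getD (M - s) dflt).1 = j}
  have hN : ∑ j, N j = M + 1 := by
    have h1 := Nat.card_congr
      (Equiv.sigmaFiberEquiv (fun s : Fin (M + 1) => (L.getD (M - s) dflt).1))
    rw [Nat.card_sigma] at h1
    simpa [N] using h1
  refine (tendsto_descFactorial_ratio N hN).congr' ?_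
  filter_upwards [eventually_ge_atTop (M + 1)] with n hn
  have hn0 : 0 < n := by omega
  rw [dif_pos hn0, prob_const, ← mul_assoc]
  have hev := card_event (n := n) L hlen dflt ⟨0, hn0⟩ (cyclic_letters L hlen hcyc dflt)
  have hev' := congrArg (Nat.cast : ℕ → ℝ) hev
  push_cast at hev'
  have hNn : ∀ j, N j ≤ n := fun j =>
    ((Finset.single_le_sum (fun _ _ => Nat.zero_le _) (Finset.mem_univ j)).trans hN.le).trans hn
  have hfac : ((n.factorial : ℝ) ^ k)
      = (∏ j, ((n - N j).factorial : ℝ)) * ∏ j, (n.descFactorial (N j) : ℝ) := by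
    rw [← Finset.prod_mul_distrib]
    calc ((n.factorial : ℝ) ^ k) = ∏ j : Fin k, (n.factorial : ℝ) := by simp
      _ = _ := Finset.prod_congr rfl fun j _ => by
        rw [← Nat.factorial_mul_descFactorial (hNn j)]; push_cast; rfl
  have hA : (∏ j, ((n - N j).factorial : ℝ)) ≠ 0 :=
    Finset.prod_ne_zero_iff.2 fun j _ => by positivity
  rw [Set.coe_ofPred, hev', hfac, mul_inv, ← div_eq_mul_inv]
  change _ = (_ * ∏ j, ((n - N j).factorial : ℝ)) * _
  field_simp
end
end
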